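/- arXiv:2301.09104 — 4 statements merged into one kernel-verified Lean document; each statement's English description precedes it below -/
import Mathlib

section
/- Let (C_n,Π) be a parcycle with Π = {V_1,…,V_k}, k ≥ 2, and sink V_k. Then the toppling ideal I_Π equals the ideal generated by all 2×2 minors A_{1,i}A_{2,j} − A_{1,j}A_{2,i} (1 ≤ i < j ≤ k) of the matrix A_{(C_n,Π)}. Moreover, if |V_i| ≥ 2 for some i, then I_Π is a prime ideal of R_n, so R_n/I_Π is an integral domain. -/
noncomputable section

open MvPolynomial

/-- Row of the Laplacian matrix of the `n`-cycle on `Fin n`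
(vertex `j` of the paper corresponds to index `j-1`). -/
def cycLap (n : ℕ) [NeZero n] (j : Fin n) : Fin n → ℤ :=
  fun l => if l = j then 2 else if l = j + 1 ∨ j = l + 1 then -1 else 0

/-- The cycle graph `C_n` on `Fin n`. -/
def cycleG (n : ℕ) [NeZero n] : SimpleGraph (Fin n) :=
  SimpleGraph.fromRel (fun i j => j = i + 1)

/-- The lattice ideal of a lattice `L ⊆ ℤ^n` in `K[x_1,…,x_n]`. -/
def latticeIdeal (n : ℕ) (K : Type*) [Field K] (L : Submodule ℤ (Fin n → ℤ)) :
    Ideal (MvPolynomial (Fin n) K) :=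
  Ideal.span { f | ∃ u v : Fin n → ℕ,
    ((fun i => (u i : ℤ)) - fun i => (v i : ℤ)) ∈ L ∧
    f = (∏ i, X i ^ u i) - ∏ i, X i ^ v i }

open Classical in
/-- The exponent vector of the monomial `x^{S → S̄}`: the `i`-th entry is the number
of edges of the cycle joining `i ∈ S` to the complement of `S`. -/
def outVec (n : ℕ) [NeZero n] (S : Set (Fin n)) (i : Fin n) : ℕ :=
  if i ∈ S then (if i + 1 ∈ S then 0 else 1) + (if i - 1 ∈ S then 0 else 1) else 0

/-- The monomial `x^{S → S̄}`. -/
def outMono (n : ℕ) (K : Type*) [NeZero n] [Field K] (S : Set (Fin n)) :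
    MvPolynomial (Fin n) K :=
  ∏ i, X i ^ outVec n S i

open Classical in
/-- `b_V = ∑_{j ∈ V} b_j`, sum of Laplacian rows over a set of vertices. -/
def bPart (n : ℕ) [NeZero n] (S : Set (Fin n)) : Fin n → ℤ :=
  ∑ j : Fin n, if j ∈ S then cycLap n j else 0

/-- The toppling ideal of the parcycle `(C_n, {V_1,…,V_k})`: the lattice ideal of the
lattice generated by the vectors `b_{V_j}`. -/
def topplingPar (n k : ℕ) (K : Type*) [NeZero n] [Field K] (V : Fin k → Set (Fin n)) :
    Ideal (MvPolynomial (Fin n) K) :=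
  latticeIdeal n K (Submodule.span ℤ (Set.range fun j => bPart n (V j)))

/-- `S` is a connected-parset of the parcycle `(C_n, V)`: a union of parts inducing a
connected subgraph of the cycle. -/
def isConnParset (n k : ℕ) [NeZero n] (V : Fin k → Set (Fin n)) (S : Set (Fin n)) : Prop :=
  (∃ T : Set (Fin k), S = ⋃ j ∈ T, V j) ∧ ((cycleG n).induce S).Connected

/-- The `G`-parking function ideal of a parcycle with sink part `V sink`. -/
def gparkIdeal (n k : ℕ) (K : Type*) [NeZero n] [Field K] (V : Fin k → Set (Fin n))
    (sink : Fin k) : Ideal (MvPolynomial (Fin n) K) :=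
  Ideal.span { f | ∃ S : Set (Fin n), isConnParset n k V S ∧ ¬ V sink ⊆ S ∧
    f = outMono n K S }

/-- The index in `Fin (n+1)` of the paper's variable `x_m`, `1 ≤ m ≤ n+1`. -/
def xIdx (n : ℕ) (m : ℕ) : Fin (n + 1) := ⟨(m - 1) % (n + 1), Nat.mod_lt _ (Nat.succ_pos n)⟩

/-- The defining ideal `P_n ⊆ K[x_1,…,x_{n+1}]` of the rational normal curve of degree `n`. -/
def Pideal (n : ℕ) (K : Type*) [Field K] : Ideal (MvPolynomial (Fin (n + 1)) K) :=
  Ideal.span { f | ∃ i j : ℕ, 2 ≤ i ∧ i ≤ j ∧ j ≤ n ∧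
    f = X (xIdx n i) * X (xIdx n j) - X (xIdx n (i - 1)) * X (xIdx n (j + 1)) }

open Classical in
/-- The `λ`-weight of an exponent vector. -/
def wdeg (n : ℕ) (lam : Fin n → ℕ) (u : Fin n →₀ ℕ) : ℕ := ∑ i, lam i * u i

open Classical in
/-- The `λ`-initial form of a polynomial: the sum of its terms of maximal `λ`-weight. -/
def initForm (n : ℕ) (K : Type*) [Field K] (lam : Fin n → ℕ) (f : MvPolynomial (Fin n) K) :
    MvPolynomial (Fin n) K :=
  ∑ u ∈ f.support.filter (fun u => wdeg n lam u = f.support.sup (wdeg n lam)),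
    monomial u (coeff u f)

/-- The `λ`-initial ideal of an ideal. -/
def initIdeal (n : ℕ) (K : Type*) [Field K] (lam : Fin n → ℕ)
    (I : Ideal (MvPolynomial (Fin n) K)) : Ideal (MvPolynomial (Fin n) K) :=
  Ideal.span { g | ∃ f ∈ I, f ≠ 0 ∧ g = initForm n K lam f }

/-!
The Laplacian of the cycle is `div ∘ grad`, so the lattice generated by the `b_{V_j}` is the image
under `div` of the gradients of the potentials that are constant on each part. Since every part is
connected, these gradients are exactly the functions on the edges that are carried by the relevant
edges and add up to zero around the cycle.

If `u - v = div a` for such an `a ≠ 0`, then `a` has a relevant edge `(x, x + 1)` where it becomes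
positive and a relevant edge `(y, y + 1)` where it stops being negative, and `X x * X (y + 1)`
divides the monomial with exponent `u`. Replacing this factor by `X y * X (x + 1)` costs a multiple
of a `2 × 2` minor and decreases `∑ |a|`, so the minors generate the toppling ideal.

If some part has two vertices, then some edge is not relevant, and following the cycle from that
edge shows that `a` is divisible by `m` as soon as `div a` is. Hence `ℤ^n` modulo the toppling
lattice is torsion-free and the toppling ideal, being the kernel of a map to its group algebra, is
prime.
-/

section BinomialIdeals

open AddMonoidAlgebra in
lemma ker_mapDomainRingHom_eq_span {R M N : Type*} [Ring R] [AddMonoid M] [AddMonoid N]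
    (φ : M →+ N) :
    RingHom.ker (mapDomainRingHom R φ) =
      Ideal.span {f : AddMonoidAlgebra R M |
        ∃ u v, φ u = φ v ∧ f = single u 1 - single v 1} := by
  set J := Ideal.span {f : AddMonoidAlgebra R M | ∃ u v, φ u = φ v ∧ f = single u 1 - single v 1}
  refine le_antisymm (fun f hf => ?_) (Ideal.span_le.2 ?_)
  · -- Modulo `J` every monomial depends only on its image under `φ`, so `f` is determined by
    -- `mapDomain φ f`, which vanishes.
    have sub_mem (g : AddMonoidAlgebra R M) :
        g - mapDomain (Function.invFun φ) (mapDomain φ g) ∈ J := by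
      induction g using AddMonoidAlgebra.induction_linear with
      | zero => simp
      | add g h hg hh => simpa only [mapDomain_add, add_sub_add_comm] using J.add_mem hg hh
      | single u r =>
        have hφ : φ u = φ (Function.invFun φ (φ u)) := (Function.invFun_eq ⟨u, rfl⟩).symm
        simpa [mul_sub, single_mul_single] using
          J.mul_mem_left (single 0 r) (Ideal.subset_span ⟨_, _, hφ, rfl⟩)
    have map_eq_zero : mapDomain φ f = 0 := hf
    simpa only [map_eq_zero, mapDomain_zero, sub_zero] using sub_mem f
  · rintro _ ⟨u, v, huv, rfl⟩
    rw [SetLike.mem_coe, RingHom.mem_ker, map_sub]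
    simp [huv]

/-- The class of an exponent vector modulo the lattice `L`: the grading of the polynomial ring by
`ℤ^n / L` whose fibres are the monomials identified by the lattice ideal of `L`. -/
def exponentClass {n : ℕ} (L : Submodule ℤ (Fin n → ℤ)) :
    (Fin n →₀ ℕ) →+ (Fin n → ℤ) ⧸ L :=
  L.mkQ.toAddMonoidHom.comp
    (((Nat.castAddMonoidHom ℤ).compLeft (Fin n)).comp Finsupp.coeFnAddHom)

lemma exponentClass_eq_iff {n : ℕ} {L : Submodule ℤ (Fin n → ℤ)} {u v : Fin n →₀ ℕ} :
    exponentClass L u = exponentClass L v ↔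
      ((fun i => (u i : ℤ)) - fun i => (v i : ℤ)) ∈ L :=
  Submodule.Quotient.eq L

lemma latticeIdeal_eq_span_monomial {n : ℕ} {K : Type*} [Field K]
    (L : Submodule ℤ (Fin n → ℤ)) :
    latticeIdeal n K L = Ideal.span {f | ∃ u v : Fin n →₀ ℕ,
      exponentClass L u = exponentClass L v ∧ f = monomial u 1 - monomial v 1} := by
  have prod_eq (u : Fin n →₀ ℕ) : ∏ i, X i ^ u i = (monomial u 1 : MvPolynomial (Fin n) K) := by
    rw [monomial_eq, map_one, one_mul, Finsupp.prod_fintype _ _ (by simp)]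
  unfold latticeIdeal
  congr 1
  ext f
  simp only [Set.mem_ofPred_eq, exponentClass_eq_iff, ← prod_eq,
    ← Finsupp.equivFunOnFinite.exists_congr_right, Finsupp.equivFunOnFinite_apply]

lemma latticeIdeal_eq_ker {n : ℕ} {K : Type*} [Field K] (L : Submodule ℤ (Fin n → ℤ)) :
    latticeIdeal n K L =
      RingHom.ker (AddMonoidAlgebra.mapDomainRingHom K (exponentClass L)) := by
  rw [latticeIdeal_eq_span_monomial, ker_mapDomainRingHom_eq_span]
  rfl

lemma isAddTorsionFree_quotient_of_nsmulSaturated {R M : Type*} [Ring R] [AddCommGroup M]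
    [Module R M] {L : Submodule R M} (hL : L.toAddSubmonoid.NSMulSaturated) :
    IsAddTorsionFree (M ⧸ L) where
  nsmul_right_injective m hm := by
    refine (injective_iff_map_eq_zero (nsmulAddMonoidHom (α := M ⧸ L) m)).2 fun w hw => ?_
    obtain ⟨w, rfl⟩ := L.mkQ_surjective w
    have nsmul_mem : m • w ∈ L := (Submodule.Quotient.mk_eq_zero L).1 hw
    exact (Submodule.Quotient.mk_eq_zero L).2 ((hL nsmul_mem).resolve_left hm)

theorem latticeIdeal_isPrime {n : ℕ} {K : Type*} [Field K] {L : Submodule ℤ (Fin n → ℤ)}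
    (hL : L.toAddSubmonoid.NSMulSaturated) : (latticeIdeal n K L).IsPrime := by
  have := isAddTorsionFree_quotient_of_nsmulSaturated hL
  have : AddMonoid.FG ((Fin n → ℤ) ⧸ L) :=
    AddGroup.fg_iff_addMonoid_fg.1 (Module.Finite.iff_addGroup_fg.1 inferInstance)
  rw [latticeIdeal_eq_ker]
  exact RingHom.ker_isPrime _

end BinomialIdeals

section Cycle

lemma exists_neg_of_sum_eq_zero {ι M : Type*} [Fintype ι] [AddCommGroup M] [LinearOrder M]
    [IsOrderedAddMonoid M] {a : ι → M} (ha : ∑ x, a x = 0) (ha₀ : a ≠ 0) : ∃ x, a x < 0 := by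
  obtain ⟨x, hx⟩ := Function.ne_iff.1 ha₀
  simpa using Finset.exists_pos_of_sum_zero_of_exists_nonzero (-a) (s := .univ) (by simpa)
    ⟨x, Finset.mem_univ x, by simpa using hx⟩

lemma exists_pos_of_sum_eq_zero {ι M : Type*} [Fintype ι] [AddCommGroup M] [LinearOrder M]
    [IsOrderedAddMonoid M] {a : ι → M} (ha : ∑ x, a x = 0) (ha₀ : a ≠ 0) : ∃ x, 0 < a x := by
  simpa using exists_neg_of_sum_eq_zero (a := -a) (by simpa) (neg_ne_zero.2 ha₀)

/-- The tensions of the directed cycle carried by the edges in `E`: the functions on the edges that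
vanish off `E` and add up to zero around the cycle. Here and below the edge `(x, x + 1)` is
represented by its tail `x`. -/
def tensions {n : ℕ} (E : Set (Fin n)) : Submodule ℤ (Fin n → ℤ) where
  carrier := {a | (∀ x ∉ E, a x = 0) ∧ ∑ x, a x = 0}
  zero_mem' := by simp
  add_mem' ha hb := ⟨fun x hx => by simp [ha.1 x hx, hb.1 x hx],
    by simp [Finset.sum_add_distrib, ha.2, hb.2]⟩
  smul_mem' c a ha := ⟨fun x hx => by simp [ha.1 x hx], by simp [← Finset.mul_sum, ha.2]⟩

lemma mem_tensions {n : ℕ} {E : Set (Fin n)} {a : Fin n → ℤ} :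
    a ∈ tensions E ↔ (∀ x ∉ E, a x = 0) ∧ ∑ x, a x = 0 := Iff.rfl

lemma single_sub_single_mem_tensions {n : ℕ} {E : Set (Fin n)} {x y : Fin n} (hx : x ∈ E)
    (hy : y ∈ E) :
    Pi.single x 1 - Pi.single y 1 ∈ tensions E := by
  refine mem_tensions.2 ⟨fun z hz => ?_, by simp⟩
  have hzx : z ≠ x := by rintro rfl; exact hz hx
  have hzy : z ≠ y := by rintro rfl; exact hz hy
  simp [hzx, hzy]

variable {n : ℕ} [NeZero n]

open Fin.CommRing in
lemma cyc_induction {P : Fin n → Prop} {x : Fin n} (hx : P x) (succ : ∀ y, P y → P (y + 1))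
    (y : Fin n) : P y := by
  have add_natCast (m : ℕ) : P (x + m) := by
    induction m with
    | zero => simpa using hx
    | succ m ih => simpa [add_assoc] using succ _ ih
  simpa using add_natCast (y - x).val

lemma exists_and_not_succ {P : Fin n → Prop} (h : ∃ x, P x) (h' : ∃ x, ¬ P x) :
    ∃ x, P x ∧ ¬ P (x + 1) := by
  obtain ⟨x, hx⟩ := h
  obtain ⟨y, hy⟩ := h'
  by_contra! succ
  exact hy (cyc_induction hx succ y)

/-- The drop of a potential `f` along each edge of the directed cycle. -/
def cycGrad (n : ℕ) [NeZero n] : (Fin n → ℤ) →ₗ[ℤ] (Fin n → ℤ) :=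
  LinearMap.id - LinearMap.funLeft ℤ ℤ (· + 1)

@[simp]
lemma cycGrad_apply (f : Fin n → ℤ) (x : Fin n) : cycGrad n f x = f x - f (x + 1) := rfl

/-- The net outflow at each vertex of a flow `a` along the edges of the directed cycle. -/
def cycDiv (n : ℕ) [NeZero n] : (Fin n → ℤ) →ₗ[ℤ] (Fin n → ℤ) :=
  LinearMap.id - LinearMap.funLeft ℤ ℤ (· - 1)

@[simp]
lemma cycDiv_apply (a : Fin n → ℤ) (x : Fin n) : cycDiv n a x = a x - a (x - 1) := rfl

lemma cycDiv_single (x : Fin n) :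
    cycDiv n (Pi.single x 1) = Pi.single x 1 - Pi.single (x + 1) 1 := by
  ext y
  simp [Pi.single_apply, sub_eq_iff_eq_add]

lemma sum_cycGrad (f : Fin n → ℤ) : ∑ x, cycGrad n f x = 0 := by
  simp only [cycGrad_apply, Finset.sum_sub_distrib, sub_eq_zero]
  exact (Equiv.sum_comp (Equiv.addRight (1 : Fin n)) f).symm

lemma exists_cycGrad_eq {a : Fin n → ℤ} (ha : ∑ x, a x = 0) : ∃ f, cycGrad n f = a := by
  obtain ⟨m, rfl⟩ := Nat.exists_eq_succ_of_ne_zero (NeZero.ne n)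
  refine ⟨fun x => -∑ y ∈ Finset.Iio x, a y, funext fun x => ?_⟩
  have sum_Iic (x : Fin (m + 1)) : ∑ y ∈ Finset.Iic x, a y = ∑ y ∈ Finset.Iio x, a y + a x := by
    rw [← Finset.Iio_insert, Finset.sum_insert (by simp), add_comm]
  cases x using Fin.lastCases with
  | last =>
    have Iic_last : Finset.Iic (Fin.last m) = Finset.univ := by ext y; simp [Fin.le_last]
    have Iio_zero : Finset.Iio (0 : Fin (m + 1)) = ∅ := by ext y; simp
    have := sum_Iic (Fin.last m)
    rw [Iic_last, ha] at this
    simp only [cycGrad_apply, Fin.last_add_one, Iio_zero, Finset.sum_empty]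
    linarith
  | cast i =>
    have Iio_succ : Finset.Iio (i.castSucc + 1) = Finset.Iic i.castSucc := by
      ext y
      simp [Fin.lt_def, Fin.le_def]
    simp only [cycGrad_apply, Iio_succ, sum_Iic]
    ring

end Cycle

section EdgeMinors

variable {n : ℕ} [NeZero n] {R : Type*} [CommRing R] {E : Set (Fin n)}

/-- The ideal of `2 × 2` minors of the matrix whose columns are `(X x, X (x + 1))ᵀ` for the edges
`(x, x + 1)` of the directed cycle in `E`. -/
def edgeMinors (R : Type*) [CommRing R] (E : Set (Fin n)) : Ideal (MvPolynomial (Fin n) R) :=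
  Ideal.span {f | ∃ x ∈ E, ∃ y ∈ E, f = X x * X (y + 1) - X y * X (x + 1)}

lemma monomial_sub_monomial_mem_edgeMinors {x y : Fin n} (hx : x ∈ E) (hy : y ∈ E)
    (w : Fin n →₀ ℕ) :
    monomial (w + (.single x 1 + .single (y + 1) 1)) 1 -
      monomial (w + (.single y 1 + .single (x + 1) 1)) 1 ∈ edgeMinors R E := by
  simpa [X, monomial_mul, mul_sub] using (edgeMinors R E).mul_mem_left (monomial w 1)
    (Ideal.subset_span ⟨x, hx, y, hy, rfl⟩)

lemma exists_pos_of_mem_tensions {a : Fin n → ℤ} (ha : a ∈ tensions E) (ha₀ : a ≠ 0) :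
    ∃ x ∈ E, 0 < a x ∧ a (x - 1) ≤ 0 := by
  obtain ⟨y, hy⟩ := exists_neg_of_sum_eq_zero ha.2 ha₀
  obtain ⟨z, hz⟩ := exists_pos_of_sum_eq_zero ha.2 ha₀
  obtain ⟨x, hx, hx'⟩ := exists_and_not_succ (P := fun x => a x ≤ 0) ⟨y, hy.le⟩ ⟨z, hz.not_ge⟩
  rw [not_le] at hx'
  exact ⟨x + 1, by_contra fun h => hx'.ne' (ha.1 _ h), hx', by simpa using hx⟩

lemma exists_neg_of_mem_tensions {a : Fin n → ℤ} (ha : a ∈ tensions E) (ha₀ : a ≠ 0) :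
    ∃ y ∈ E, a y < 0 ∧ 0 ≤ a (y + 1) := by
  obtain ⟨y, hy⟩ := exists_neg_of_sum_eq_zero ha.2 ha₀
  obtain ⟨z, hz⟩ := exists_pos_of_sum_eq_zero ha.2 ha₀
  obtain ⟨x, hx, hx'⟩ := exists_and_not_succ (P := fun x => a x < 0) ⟨y, hy⟩ ⟨z, hz.not_gt⟩
  exact ⟨x, by_contra fun h => hx.ne (ha.1 _ h), hx, not_lt.1 hx'⟩

lemma sum_natAbs_sub_single_sub_single_lt {ι : Type*} [Fintype ι] [DecidableEq ι] {a : ι → ℤ}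
    {x y : ι} (hx : 0 < a x) (hy : a y < 0) :
    ∑ z, ((a - (Pi.single x 1 - Pi.single y 1) : ι → ℤ) z).natAbs < ∑ z, (a z).natAbs := by
  have hxy : x ≠ y := by rintro rfl; omega
  refine Finset.sum_lt_sum (fun z _ => ?_) ⟨x, Finset.mem_univ x, ?_⟩
  · simp only [Pi.sub_apply, Pi.single_apply]
    split_ifs <;> subst_vars <;> omega
  · simp only [Pi.sub_apply, Pi.single_eq_same, Pi.single_eq_of_ne hxy]
    omega

lemma single_add_single_le_of_sub_eq_cycDiv {u v : Fin n →₀ ℕ} {a : Fin n → ℤ}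
    (h : ((fun i => (u i : ℤ)) - fun i => (v i : ℤ)) = cycDiv n a) {x y : Fin n}
    (hx : 0 < a x) (hx' : a (x - 1) ≤ 0) (hy : a y < 0) (hy' : 0 ≤ a (y + 1)) :
    .single x 1 + .single (y + 1) 1 ≤ u := by
  intro z
  have hz : (u z : ℤ) - v z = a z - a (z - 1) := congrFun h z
  simp only [Finsupp.add_apply, Finsupp.single_apply]
  split_ifs with hxz hyz hyz
  · subst hxz hyz
    rw [add_sub_cancel_right] at hz
    omega
  · subst hxz
    omega
  · subst hyz
    rw [add_sub_cancel_right] at hz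
    omega
  · exact Nat.zero_le _

lemma cycDiv_single_sub_single (x y : Fin n) :
    cycDiv n (Pi.single x 1 - Pi.single y 1) =
      (fun i => ((.single x 1 + .single (y + 1) 1 : Fin n →₀ ℕ) i : ℤ)) -
        fun i => ((.single y 1 + .single (x + 1) 1 : Fin n →₀ ℕ) i : ℤ) := by
  rw [map_sub, cycDiv_single, cycDiv_single]
  ext z
  simp only [Pi.sub_apply, Finsupp.add_apply, Finsupp.single_eq_pi_single, Nat.cast_add,
    Pi.single_apply, Nat.cast_ite, Nat.cast_one, Nat.cast_zero]
  ring

theorem monomial_sub_monomial_mem_edgeMinors_of_sub_eq_cycDiv {a : Fin n → ℤ}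
    (ha : a ∈ tensions E) {u v : Fin n →₀ ℕ}
    (h : ((fun i => (u i : ℤ)) - fun i => (v i : ℤ)) = cycDiv n a) :
    monomial u 1 - monomial v 1 ∈ edgeMinors R E := by
  induction hN : ∑ x, (a x).natAbs using Nat.strong_induction_on generalizing a u with
  | _ N ih =>
    subst hN
    obtain rfl | ha₀ := eq_or_ne a 0
    · have huv : u = v := by
        ext i
        simpa [sub_eq_zero] using congrFun h i
      simp [huv]
    obtain ⟨x, hxE, hx, hx'⟩ := exists_pos_of_mem_tensions ha ha₀
    obtain ⟨y, hyE, hy, hy'⟩ := exists_neg_of_mem_tensions ha ha₀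
    obtain ⟨w, rfl⟩ := exists_add_of_le (single_add_single_le_of_sub_eq_cycDiv h hx hx' hy hy')
    rw [add_comm _ w] at h ⊢
    have move : cycDiv n (a - (Pi.single x 1 - Pi.single y 1)) =
        (fun i => ((w + (.single y 1 + .single (x + 1) 1) : Fin n →₀ ℕ) i : ℤ)) -
          fun i => (v i : ℤ) := by
      rw [map_sub, cycDiv_single_sub_single, ← h]
      ext z
      simp only [Pi.sub_apply, Finsupp.add_apply, Nat.cast_add]
      ring
    have reduced := ih _ (sum_natAbs_sub_single_sub_single_lt hx hy)
      ((tensions E).sub_mem ha (single_sub_single_mem_tensions hxE hyE)) move.symm rfl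
    simpa using add_mem (monomial_sub_monomial_mem_edgeMinors hxE hyE w) reduced

theorem latticeIdeal_map_cycDiv_tensions {K : Type*} [Field K] (E : Set (Fin n)) :
    latticeIdeal n K ((tensions E).map (cycDiv n)) = edgeMinors K E := by
  rw [latticeIdeal_eq_span_monomial]
  refine le_antisymm (Ideal.span_le.2 ?_) (Ideal.span_le.2 ?_)
  · rintro _ ⟨u, v, huv, rfl⟩
    obtain ⟨a, ha, h⟩ := exponentClass_eq_iff.1 huv
    exact monomial_sub_monomial_mem_edgeMinors_of_sub_eq_cycDiv ha h.symm
  · rintro _ ⟨x, hx, y, hy, rfl⟩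
    refine Ideal.subset_span ⟨.single x 1 + .single (y + 1) 1, .single y 1 + .single (x + 1) 1,
      exponentClass_eq_iff.2 ⟨_, single_sub_single_mem_tensions hx hy,
        cycDiv_single_sub_single x y⟩, by simp [X, monomial_mul]⟩

lemma edgeMinors_range {ι : Type*} [LinearOrder ι] (p : ι → Fin n) :
    edgeMinors R (Set.range p) = Ideal.span {f | ∃ i j, i < j ∧
      f = X (p i) * X (p j + 1) - X (p j) * X (p i + 1)} := by
  refine le_antisymm (Ideal.span_le.2 ?_) (Ideal.span_mono ?_)
  · rintro _ ⟨_, ⟨i, rfl⟩, _, ⟨j, rfl⟩, rfl⟩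
    obtain hij | rfl | hij := lt_trichotomy i j
    · exact Ideal.subset_span ⟨i, j, hij, rfl⟩
    · simp
    · rw [SetLike.mem_coe, ← neg_mem_iff, neg_sub]
      exact Ideal.subset_span ⟨j, i, hij, rfl⟩
  · rintro _ ⟨i, j, -, rfl⟩
    exact ⟨p i, ⟨i, rfl⟩, p j, ⟨j, rfl⟩, rfl⟩

end EdgeMinors

section TopplingLattice

variable {n : ℕ} [NeZero n]

lemma nsmulSaturated_map_cycDiv_tensions {E : Set (Fin n)} {x₀ : Fin n} (hx₀ : x₀ ∉ E) :
    ((tensions E).map (cycDiv n)).toAddSubmonoid.NSMulSaturated := by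
  rintro m w ⟨a, ha, haw⟩
  refine or_iff_not_imp_left.2 fun hm => ?_
  have hm' : (m : ℤ) ≠ 0 := Nat.cast_ne_zero.2 hm
  have hstep (y : Fin n) : a (y + 1) = a y + m * w (y + 1) := by
    simpa [sub_eq_iff_eq_add'] using congrFun haw (y + 1)
  have dvd : ∀ y, (m : ℤ) ∣ a y := cyc_induction (x := x₀) (ha.1 x₀ hx₀ ▸ dvd_zero _)
    fun y hy => hstep y ▸ dvd_add hy (dvd_mul_right _ _)
  choose b hb using dvd
  have hab : a = (m : ℤ) • b := funext hb
  refine ⟨b, ⟨fun x hx => ?_, ?_⟩, smul_right_injective _ hm' (?_ : (m : ℤ) • _ = (m : ℤ) • w)⟩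
  · simpa [hab, hm] using ha.1 x hx
  · simpa [hab, ← Finset.mul_sum, hm] using ha.2
  · rw [← map_smul, ← hab, haw, natCast_zsmul]

lemma cycLap_eq_cycDiv_cycGrad (hn : 3 ≤ n) (j : Fin n) :
    cycLap n j = cycDiv n (cycGrad n (Pi.single j 1)) := by
  obtain ⟨m, rfl⟩ := Nat.exists_eq_add_of_le' hn
  have succ_ne (x : Fin (m + 3)) : x + 1 ≠ x := by simp
  have succ_succ_ne (x : Fin (m + 3)) : x + 1 + 1 ≠ x := by
    simp [add_assoc, Fin.ext_iff, Fin.val_add, Nat.mod_eq_of_lt]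
  ext l
  simp only [cycLap, cycDiv_apply, cycGrad_apply, Pi.single_apply, sub_add_cancel,
    sub_eq_iff_eq_add]
  obtain rfl | hlj := eq_or_ne l j
  · simp [succ_ne, (succ_ne l).symm]
  obtain rfl | hlj' := eq_or_ne l (j + 1)
  · simp [succ_ne, succ_succ_ne]
  · simp [hlj, hlj', eq_comm (a := j), apply_ite]

lemma bPart_eq_cycDiv_cycGrad (hn : 3 ≤ n) (S : Set (Fin n)) :
    bPart n S = cycDiv n (cycGrad n (S.indicator 1)) := by
  classical
  have indicator_eq : S.indicator (1 : Fin n → ℤ) = ∑ j, if j ∈ S then Pi.single j 1 else 0 := by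
    rw [← Finset.univ_sum_single (S.indicator (1 : Fin n → ℤ))]
    simp only [Set.indicator_apply, Pi.one_apply, apply_ite (Pi.single _), Pi.single_zero]
  simp only [indicator_eq, map_sum, bPart, cycLap_eq_cycDiv_cycGrad hn, apply_ite (cycGrad n),
    apply_ite (cycDiv n), map_zero]

lemma eq_add_one_or_of_induce_cycleG_adj {S : Set (Fin n)} {x y : S}
    (h : ((cycleG n).induce S).Adj x y) : (y : Fin n) = x + 1 ∨ (x : Fin n) = y + 1 :=
  ((SimpleGraph.fromRel_adj (fun i j => j = i + 1) (x : Fin n) y).1 h).2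

lemma exists_mem_and_succ_mem {S : Set (Fin n)} (hS : ((cycleG n).induce S).Connected)
    (hS' : S.Nontrivial) : ∃ x ∈ S, x + 1 ∈ S := by
  have := hS'.coe_sort
  obtain ⟨x⟩ := hS.nonempty
  obtain ⟨y, hxy⟩ := hS.preconnected.exists_adj_of_nontrivial x
  obtain h | h := eq_add_one_or_of_induce_cycleG_adj hxy
  · exact ⟨x, x.2, h ▸ y.2⟩
  · exact ⟨y, y.2, h ▸ x.2⟩

lemma eq_of_cycGrad_eq_zero {S : Set (Fin n)} (hS : ((cycleG n).induce S).Connected)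
    {f : Fin n → ℤ} (hf : ∀ x ∈ S, x + 1 ∈ S → cycGrad n f x = 0) {x y : Fin n} (hx : x ∈ S)
    (hy : y ∈ S) : f x = f y := by
  have eq_of_path (z : S) (h : Relation.ReflTransGen ((cycleG n).induce S).Adj ⟨x, hx⟩ z) :
      f x = f z := by
    induction h with
    | refl => rfl
    | @tail y z _ hyz ih =>
      obtain hz | hy := eq_add_one_or_of_induce_cycleG_adj hyz
      · rw [ih, hz]
        exact sub_eq_zero.1 (hf y y.2 (hz ▸ z.2))
      · rw [ih, hy]
        exact (sub_eq_zero.1 (hf z z.2 (hy ▸ y.2))).symm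
  exact eq_of_path ⟨y, hy⟩ ((SimpleGraph.reachable_iff_reflTransGen _ _).1 (hS _ _))

/-- The tails `x` of the directed relevant edges `(x, x + 1)`: those leaving a member of the
partition `V`. -/
def relevantTails {ι : Type*} (V : ι → Set (Fin n)) : Set (Fin n) :=
  {x | ∃ j, x ∈ V j ∧ x + 1 ∉ V j}

lemma notMem_relevantTails {ι : Type*} {V : ι → Set (Fin n)}
    (hdisj : Pairwise (Function.onFun Disjoint V)) {j : ι} {x : Fin n} (hx : x ∈ V j)
    (hx' : x + 1 ∈ V j) : x ∉ relevantTails V := by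
  rintro ⟨i, hi, hi'⟩
  obtain rfl := hdisj.eq (Set.not_disjoint_iff.2 ⟨x, hi, hx⟩)
  exact hi' hx'

lemma mem_iff_succ_mem_of_notMem_relevantTails {ι : Type*} {V : ι → Set (Fin n)}
    (hcover : ∀ x, ∃ j, x ∈ V j) (hdisj : Pairwise (Function.onFun Disjoint V)) {x : Fin n}
    (hx : x ∉ relevantTails V) (j : ι) : x ∈ V j ↔ x + 1 ∈ V j := by
  have succ_mem {i : ι} (hi : x ∈ V i) : x + 1 ∈ V i := by_contra fun h => hx ⟨i, hi, h⟩
  refine ⟨succ_mem, fun hj => ?_⟩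
  obtain ⟨i, hi⟩ := hcover x
  obtain rfl := hdisj.eq (Set.not_disjoint_iff.2 ⟨x + 1, succ_mem hi, hj⟩)
  exact hi

lemma cycGrad_indicator_mem_tensions {ι : Type*} {V : ι → Set (Fin n)}
    (hcover : ∀ x, ∃ j, x ∈ V j) (hdisj : Pairwise (Function.onFun Disjoint V)) (j : ι) :
    cycGrad n ((V j).indicator 1) ∈ tensions (relevantTails V) := by
  classical
  refine mem_tensions.2 ⟨fun x hx => ?_, sum_cycGrad _⟩
  simp [Set.indicator_apply, mem_iff_succ_mem_of_notMem_relevantTails hcover hdisj hx j]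

lemma eq_sum_smul_indicator {R α ι : Type*} [Semiring R] [Fintype ι] {V : ι → Set α}
    (hcover : ∀ x, ∃ j, x ∈ V j) (hdisj : Pairwise (Function.onFun Disjoint V)) {f : α → R}
    {c : ι → R} (hf : ∀ j, ∀ x ∈ V j, f x = c j) : f = ∑ j, c j • (V j).indicator 1 := by
  ext x
  obtain ⟨i, hi⟩ := hcover x
  rw [Finset.sum_apply, Finset.sum_eq_single_of_mem i (Finset.mem_univ i) fun j _ hji => ?_]
  · simp [hi, hf i x hi]
  · simp [(hdisj hji.symm).notMem_of_mem_left hi]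

lemma span_range_cycGrad_indicator {ι : Type*} [Finite ι] {V : ι → Set (Fin n)}
    (hcover : ∀ x, ∃ j, x ∈ V j) (hdisj : Pairwise (Function.onFun Disjoint V))
    (hconn : ∀ j, ((cycleG n).induce (V j)).Connected) :
    Submodule.span ℤ (Set.range fun j => cycGrad n ((V j).indicator 1)) =
      tensions (relevantTails V) := by
  have := Fintype.ofFinite ι
  refine le_antisymm (Submodule.span_le.2 ?_) fun a ha => ?_
  · rintro _ ⟨j, rfl⟩
    exact cycGrad_indicator_mem_tensions hcover hdisj j
  obtain ⟨f, rfl⟩ := exists_cycGrad_eq ha.2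
  choose rep mem_rep using fun j => Set.nonempty_coe_sort.1 (hconn j).nonempty
  have f_eq : f = ∑ j, f (rep j) • (V j).indicator 1 :=
    eq_sum_smul_indicator hcover hdisj fun j x hx => eq_of_cycGrad_eq_zero (hconn j)
      (fun y hy hy' => ha.1 y (notMem_relevantTails hdisj hy hy')) hx (mem_rep j)
  rw [f_eq, map_sum]
  exact sum_mem fun j _ => map_zsmul (cycGrad n) _ _ ▸
    Submodule.smul_mem _ _ (Submodule.subset_span ⟨j, rfl⟩)

lemma span_range_bPart (hn : 3 ≤ n) {ι : Type*} [Finite ι] {V : ι → Set (Fin n)}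
    (hcover : ∀ x, ∃ j, x ∈ V j) (hdisj : Pairwise (Function.onFun Disjoint V))
    (hconn : ∀ j, ((cycleG n).induce (V j)).Connected) :
    Submodule.span ℤ (Set.range fun j => bPart n (V j)) =
      (tensions (relevantTails V)).map (cycDiv n) := by
  rw [← span_range_cycGrad_indicator hcover hdisj hconn, Submodule.map_span, ← Set.range_comp]
  simp only [bPart_eq_cycDiv_cycGrad hn, Function.comp_def]

lemma range_eq_relevantTails {ι κ : Type*} {V : ι → Set (Fin n)} (hcover : ∀ x, ∃ j, x ∈ V j)
    {p : κ → Fin n} (hcross : ∀ c j, p c ∈ V j → p c + 1 ∉ V j)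
    (hall : ∀ x, (∃ j, x ∈ V j ∧ x + 1 ∉ V j) → ∃ c, p c = x) :
    Set.range p = relevantTails V := by
  refine subset_antisymm ?_ hall
  rintro _ ⟨c, rfl⟩
  obtain ⟨j, hj⟩ := hcover (p c)
  exact ⟨j, hj, hcross c j hj⟩

end TopplingLattice

theorem statement_8_general {κ : Type*} [LinearOrder κ] (K : Type*) [Field K] (n k : ℕ) [NeZero n]
    (hn : 3 ≤ n)
    (V : Fin k → Set (Fin n))
    (hcover : ∀ x : Fin n, ∃ j, x ∈ V j)
    (hdisj : ∀ j₁ j₂ : Fin k, j₁ ≠ j₂ → Disjoint (V j₁) (V j₂))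
    (hconn : ∀ j, ((cycleG n).induce (V j)).Connected)
    (p q : κ → Fin n)
    (hpq : ∀ c, q c = p c + 1)
    (hcross : ∀ c j, p c ∈ V j → q c ∉ V j)
    (hall : ∀ x : Fin n, (∃ j, x ∈ V j ∧ x + 1 ∉ V j) → ∃ c, p c = x) :
    topplingPar n k K V
      = Ideal.span { f | ∃ c₁ c₂ : κ, c₁ < c₂ ∧
          f = X (p c₁) * X (q c₂) - X (p c₂) * X (q c₁) } ∧
    ((∃ j, (V j).Nontrivial) →
      (topplingPar n k K V).IsPrime ∧
      IsDomain (MvPolynomial (Fin n) K ⧸ topplingPar n k K V)) := by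
  have lattice_eq := span_range_bPart hn hcover hdisj hconn
  obtain rfl : q = fun c => p c + 1 := funext hpq
  rw [topplingPar, lattice_eq]
  refine ⟨?_, fun ⟨j, hj⟩ => ?_⟩
  · rw [latticeIdeal_map_cycDiv_tensions, ← range_eq_relevantTails hcover hcross hall,
      edgeMinors_range]
  · obtain ⟨x, hx, hx'⟩ := exists_mem_and_succ_mem (hconn j) hj
    have isPrime := latticeIdeal_isPrime (K := K)
      (nsmulSaturated_map_cycDiv_tensions (notMem_relevantTails hdisj hx hx'))
    exact ⟨isPrime, (Ideal.Quotient.isDomain_iff_prime _).2 isPrime⟩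

/-- For a parcycle `(C_n, Π)` (with `k ≥ 2`, `K` algebraically closed)
the toppling ideal `I_Π` equals the ideal of `2 × 2` minors of the matrix `A_{(C_n,Π)}`
(columns the directed relevant edges `(p_i, q_i)` in traversal order); moreover if
`|V_i| ≥ 2` for some `i`, then `I_Π` is prime, so `R_n/I_Π` is a domain. -/
theorem statement_8 (K : Type*) [Field K] [IsAlgClosed K] (n k : ℕ) [NeZero n]
    (hn : 3 ≤ n) (hk : 2 ≤ k)
    (V : Fin k → Set (Fin n))
    (hcover : ∀ x : Fin n, ∃ j, x ∈ V j)
    (hdisj : ∀ j₁ j₂ : Fin k, j₁ ≠ j₂ → Disjoint (V j₁) (V j₂))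
    (hconn : ∀ j, ((cycleG n).induce (V j)).Connected)
    (hsink : (⟨n - 1, by omega⟩ : Fin n) ∈ V ⟨k - 1, by omega⟩)
    (p q : Fin k → Fin n)
    (hpq : ∀ c, q c = p c + 1)
    (hcross : ∀ c j, p c ∈ V j → q c ∉ V j)
    (hall : ∀ x : Fin n, (∃ j, x ∈ V j ∧ x + 1 ∉ V j) → ∃ c, p c = x)
    (hinjp : Function.Injective p)
    (horder : ∃ v₀, v₀ ∈ V ⟨k - 1, by omega⟩ ∧
      StrictMono fun c : Fin k => ((p c - v₀ : Fin n) : ℕ)) :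
    topplingPar n k K V
      = Ideal.span { f | ∃ c₁ c₂ : Fin k, c₁ < c₂ ∧
          f = X (p c₁) * X (q c₂) - X (p c₂) * X (q c₁) } ∧
    ((∃ j, (V j).Nontrivial) →
      (topplingPar n k K V).IsPrime ∧
      IsDomain (MvPolynomial (Fin n) K ⧸ topplingPar n k K V)) := by
  exact statement_8_general K n k hn V hcover hdisj hconn p q hpq hcross hall
end
end

section
/- Let n ≥ 2 and let C be the cycle graph on the 2n vertices u_1, w_1, u_2, w_2, …, u_n, w_n with edge set {{u_i,w_i} : 1 ≤ i ≤ n} ∪ {{w_j,u_{j+1}} : 1 ≤ j ≤ n−1} ∪ {{w_n,u_1}}, and let Π = {{w_n,u_1}} ∪ {{w_j,u_{j+1}} : 1 ≤ j ≤ n−1} with sink {w_n,u_1}. Then the toppling ideal I_Π of the parcycle (C,Π), an ideal of K[x_{u_1},…,x_{u_n}, x_{w_1},…,x_{w_n}], equals the binomial edge ideal of the complete graph K_n, i.e. I_Π = ⟨x_{u_i} x_{w_j} − x_{u_j} x_{w_i} : 1 ≤ i < j ≤ n⟩. -/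
noncomputable section

open MvPolynomial

/-- The index in `Fin (2n)` of the vertex `u_i` (`1 ≤ i ≤ n`) of the cycle
`u_1, w_1, u_2, w_2, …, u_n, w_n`. -/
def uIdx (n : ℕ) [NeZero n] (i : ℕ) : Fin (2 * n) :=
  ⟨(2 * (i - 1)) % (2 * n),
    Nat.mod_lt _ (by have := Nat.pos_of_ne_zero (NeZero.ne n); omega)⟩

/-- The index in `Fin (2n)` of the vertex `w_i` (`1 ≤ i ≤ n`). -/
def wIdx (n : ℕ) [NeZero n] (i : ℕ) : Fin (2 * n) :=
  ⟨(2 * (i - 1) + 1) % (2 * n),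
    Nat.mod_lt _ (by have := Nat.pos_of_ne_zero (NeZero.ne n); omega)⟩

/-!
Write `d i = e_{u_i} - e_{w_i}`. The two edges leaving the part `{w_j, u_{j+1}}` are
`{u_j, w_j}` and `{u_{j+1}, w_{j+1}}`, so `b_V = d (j + 1) - d j`, and the lattice consists of
vectors `x` with `x_{u_i} + x_{w_i} = 0` for all `i` and `∑ x_{u_i} = 0`. It contains every
`d i - d j`, which is the exponent vector of a 2-minor. Conversely, cancelling the common factor
from a binomial of the lattice ideal leaves `u^p w^q - u^q w^p` with `p` and `q` of the same total
degree; pairing off the variables of `u^p` with those of `w^q` and exchanging the indices in each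
pair turns the first monomial into the second modulo the 2-minors.
-/

section Exchange

variable {ι M : Type*} [CommMonoid M] {x y : ι → M}

theorem prod_map_mul_prod_map_comm_of_card_eq (hxy : ∀ i j, x i * y j = x j * y i)
    {s t : Multiset ι} (hst : s.card = t.card) :
    (s.map x).prod * (t.map y).prod = (t.map x).prod * (s.map y).prod := by
  induction s using Multiset.induction generalizing t with
  | empty => simp [Multiset.card_eq_zero.1 hst.symm]
  | cons i s ih =>
    rw [Multiset.card_cons, eq_comm, Multiset.card_eq_succ_iff] at hst
    obtain ⟨j, t, rfl, hst⟩ := hst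
    simp only [Multiset.map_cons, Multiset.prod_cons]
    rw [mul_mul_mul_comm, hxy, ih hst.symm, mul_mul_mul_comm]

variable [Fintype ι]

theorem prod_pow_mul_prod_pow_comm_of_sum_eq (hxy : ∀ i j, x i * y j = x j * y i) {p q : ι → ℕ}
    (hpq : ∑ i, p i = ∑ i, q i) :
    (∏ i, x i ^ p i) * ∏ i, y i ^ q i = (∏ i, x i ^ q i) * ∏ i, y i ^ p i := by
  have prod_map (z : ι → M) (r : ι → ℕ) :
      ((∑ i, r i • {i} : Multiset ι).map z).prod = ∏ i, z i ^ r i := by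
    rw [← Multiset.coe_mapAddMonoidHom, map_sum, Multiset.prod_sum]
    simp only [map_nsmul, Multiset.coe_mapAddMonoidHom, Multiset.map_singleton,
      Multiset.prod_nsmul, Multiset.prod_singleton]
  simpa only [prod_map] using prod_map_mul_prod_map_comm_of_card_eq hxy
    (s := ∑ i, p i • {i}) (t := ∑ i, q i • {i}) (by simpa [Multiset.card_sum] using hpq)

theorem prod_pow_mul_pow_eq_of_sum_eq_of_add_eq (hxy : ∀ i j, x i * y j = x j * y i)
    {a b a' b' : ι → ℕ} (hsum : ∑ i, a i = ∑ i, a' i)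
    (hadd : ∀ i, a i + b i = a' i + b' i) :
    ∏ i, x i ^ a i * y i ^ b i = ∏ i, x i ^ a' i * y i ^ b' i := by
  have hdiff : ∑ i, (a i - a' i) = ∑ i, (a' i - a i) := by
    have hsum' : ∑ i, (a i + (a' i - a i)) = ∑ i, (a' i + (a i - a' i)) :=
      Finset.sum_congr rfl fun i _ => by omega
    simp only [Finset.sum_add_distrib] at hsum'
    omega
  have factor {c d c' d' : ℕ} (h : c + d = c' + d') (i : ι) :
      x i ^ c * y i ^ d =
        x i ^ min c c' * y i ^ min d d' * (x i ^ (c - c') * y i ^ (c' - c)) := by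
    rw [mul_mul_mul_comm, ← pow_add, ← pow_add]
    congr 2 <;> omega
  calc ∏ i, x i ^ a i * y i ^ b i
      = (∏ i, x i ^ min (a i) (a' i) * y i ^ min (b i) (b' i)) *
          ((∏ i, x i ^ (a i - a' i)) * ∏ i, y i ^ (a' i - a i)) := by
        simp only [← Finset.prod_mul_distrib, ← factor (hadd _)]
    _ = (∏ i, x i ^ min (a' i) (a i) * y i ^ min (b' i) (b i)) *
          ((∏ i, x i ^ (a' i - a i)) * ∏ i, y i ^ (a i - a' i)) := by
        simp only [prod_pow_mul_prod_pow_comm_of_sum_eq hxy hdiff, min_comm]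
    _ = ∏ i, x i ^ a' i * y i ^ b' i := by
        simp only [← Finset.prod_mul_distrib, ← factor (hadd _).symm]

end Exchange

section TwoMinors

variable {ι R : Type*} [CommRing R]

/-- The ideal generated by the 2-minors of the two-row matrix with rows `x` and `y`; for
independent variables this is the binomial edge ideal of the complete graph on `ι`. All pairs of
columns are allowed, so that no order on `ι` is needed. -/
def twoMinorsIdeal (x y : ι → R) : Ideal R :=
  Ideal.span {f | ∃ i j, f = x i * y j - x j * y i}

theorem twoMinorsIdeal_eq_span_lt [LinearOrder ι] (x y : ι → R) :
    twoMinorsIdeal x y = Ideal.span {f | ∃ i j, i < j ∧ f = x i * y j - x j * y i} := by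
  refine le_antisymm (Ideal.span_le.2 ?_) (Ideal.span_mono ?_)
  · rintro f ⟨i, j, rfl⟩
    rcases lt_trichotomy i j with hij | rfl | hji
    · exact Ideal.subset_span ⟨i, j, hij, rfl⟩
    · simp
    · rw [← neg_sub]
      exact neg_mem (Ideal.subset_span ⟨j, i, hji, rfl⟩)
  · rintro f ⟨i, j, -, rfl⟩
    exact ⟨i, j, rfl⟩

theorem prod_pow_sub_prod_pow_mem_twoMinorsIdeal [Fintype ι] (x y : ι → R) {a b a' b' : ι → ℕ}
    (hsum : ∑ i, a i = ∑ i, a' i) (hadd : ∀ i, a i + b i = a' i + b' i) :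
    ∏ i, x i ^ a i * y i ^ b i - ∏ i, x i ^ a' i * y i ^ b' i ∈ twoMinorsIdeal x y := by
  let π := Ideal.Quotient.mk (twoMinorsIdeal x y)
  have hxy (i j : ι) : π (x i) * π (y j) = π (x j) * π (y i) := by
    rw [← map_mul, ← map_mul]
    exact Ideal.Quotient.eq.2 (Ideal.subset_span ⟨i, j, rfl⟩)
  refine Ideal.Quotient.eq.1 ?_
  simpa only [map_prod, map_mul, map_pow] using
    prod_pow_mul_pow_eq_of_sum_eq_of_add_eq hxy hsum hadd

end TwoMinors

theorem X_mul_X_sub_X_mul_X_mem_latticeIdeal {n : ℕ} {K : Type*} [Field K]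
    {L : Submodule ℤ (Fin n → ℤ)} {p q r s : Fin n}
    (h : Pi.single p 1 + Pi.single q 1 - (Pi.single r 1 + Pi.single s 1) ∈ L) :
    (X p * X q - X r * X s : MvPolynomial (Fin n) K) ∈ latticeIdeal n K L := by
  have cast_single (k l : Fin n) :
      ((Pi.single k 1 : Fin n → ℕ) l : ℤ) = (Pi.single k 1 : Fin n → ℤ) l := by
    simp [Pi.single_apply]
  have prod_single (k : Fin n) :
      ∏ l, (X l : MvPolynomial (Fin n) K) ^ (Pi.single k 1 : Fin n → ℕ) l = X k := by
    simp [Pi.single_apply]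
  refine Ideal.subset_span ⟨Pi.single p 1 + Pi.single q 1, Pi.single r 1 + Pi.single s 1, ?_, ?_⟩
  · simp only [Pi.add_apply, Nat.cast_add, cast_single]
    exact h
  · simp only [Pi.add_apply, pow_add, Finset.prod_mul_distrib, prod_single]

section CycleLaplacian

variable {n : ℕ} [NeZero n]

theorem cycLap_eq_single (hn : 3 ≤ n) (v : Fin n) :
    cycLap n v = (Pi.single v 1 - Pi.single (v - 1) 1) + (Pi.single v 1 - Pi.single (v + 1) 1) := by
  obtain ⟨m, rfl⟩ := Nat.exists_eq_add_of_le' hn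
  have h_two : (1 : Fin (m + 3)) + 1 ≠ 0 := by
    rw [ne_eq, Fin.ext_iff, Fin.val_add, Fin.val_one, Nat.mod_eq_of_lt (by omega)]
    simp
  have h_sub_iff (l : Fin (m + 3)) : l = v - 1 ↔ v = l + 1 := by
    rw [eq_sub_iff_add_eq, eq_comm]
  ext l
  simp only [cycLap, Pi.add_apply, Pi.sub_apply, Pi.single_apply, h_sub_iff]
  by_cases hv : l = v
  · simp [hv]
  by_cases hs : l = v + 1
  · simp [hs, add_assoc, h_two]
  by_cases hp : v = l + 1
  · simp [hv, hs, ← hp]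
  · simp [hv, hs, hp]

theorem bPart_pair {v w : Fin n} (hvw : v ≠ w) : bPart n {v, w} = cycLap n v + cycLap n w := by
  rw [bPart, Fintype.sum_eq_add v w hvw]
  · simp
  · exact fun j hj => if_neg (by simpa using hj)

theorem bPart_pair_add_one (hn : 3 ≤ n) (v : Fin n) :
    bPart n {v, v + 1} =
      (Pi.single v 1 - Pi.single (v - 1) 1) +
        (Pi.single (v + 1) 1 - Pi.single (v + 1 + 1) 1) := by
  rw [bPart_pair (by simp only [ne_eq, left_eq_add, Fin.one_eq_zero_iff]; omega),
    cycLap_eq_single hn, cycLap_eq_single hn, add_sub_cancel_right]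
  abel

end CycleLaplacian

section Vertices

variable {n : ℕ}

/-- The vertex `u_{i+1}` of the paper: indices here start at `0`, and `i + 1` in `Fin n` wraps
around like the cycle. -/
def uVertex (i : Fin n) : Fin (2 * n) := ⟨2 * i, by omega⟩

/-- The vertex `w_{i+1}` of the paper, indexed like `uVertex`. -/
def wVertex (i : Fin n) : Fin (2 * n) := ⟨2 * i + 1, by omega⟩

theorem uVertex_injective : Function.Injective (uVertex (n := n)) := fun i j h => by
  simp only [uVertex, Fin.mk.injEq] at h
  omega

theorem wVertex_injective : Function.Injective (wVertex (n := n)) := fun i j h => by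
  simp only [wVertex, Fin.mk.injEq] at h
  omega

theorem uVertex_ne_wVertex (i j : Fin n) : uVertex i ≠ wVertex j := by
  simp only [uVertex, wVertex, ne_eq, Fin.mk.injEq]
  omega

theorem sumElim_uVertex_wVertex_bijective :
    Function.Bijective (Sum.elim uVertex wVertex : Fin n ⊕ Fin n → Fin (2 * n)) := by
  refine (Fintype.bijective_iff_injective_and_card _).2 ⟨?_, by simp [two_mul]⟩
  exact uVertex_injective.sumElim wVertex_injective uVertex_ne_wVertex

theorem prod_univ_eq_prod_uVertex_mul_wVertex {M : Type*} [CommMonoid M] (f : Fin (2 * n) → M) :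
    ∏ v, f v = ∏ i : Fin n, f (uVertex i) * f (wVertex i) := by
  rw [← sumElim_uVertex_wVertex_bijective.prod_comp f, Fintype.prod_sum_type,
    Finset.prod_mul_distrib]
  rfl

theorem uVertex_add_one [NeZero (2 * n)] (i : Fin n) : uVertex i + 1 = wVertex i := by
  simp only [uVertex, wVertex, Fin.ext_iff, Fin.val_add, Fin.val_one', Nat.add_mod_mod]
  exact Nat.mod_eq_of_lt (by omega)

variable [NeZero n]

theorem wVertex_add_one [NeZero (2 * n)] (i : Fin n) : wVertex i + 1 = uVertex (i + 1) := by
  simp only [uVertex, wVertex, Fin.ext_iff, Fin.val_add, Fin.val_one', Nat.add_mod_mod]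
  rw [← Nat.mul_mod_mul_left, mul_add, mul_one]

theorem uIdx_add_one (i : Fin n) : uIdx n (i + 1) = uVertex i := by
  simp only [uIdx, uVertex, Fin.mk.injEq, Nat.add_sub_cancel]
  exact Nat.mod_eq_of_lt (by omega)

theorem wIdx_add_one (i : Fin n) : wIdx n (i + 1) = wVertex i := by
  simp only [wIdx, wVertex, Fin.mk.injEq, Nat.add_sub_cancel]
  exact Nat.mod_eq_of_lt (by omega)

theorem uIdx_add_two (i : Fin n) : uIdx n (i + 2) = uVertex (i + 1) := by
  simp only [uIdx, uVertex, Fin.mk.injEq, Fin.val_add, Fin.val_one', Nat.add_mod_mod]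
  rw [← Nat.mul_mod_mul_left]
  rfl

theorem span_uIdx_wIdx_eq_twoMinorsIdeal (K : Type*) [CommRing K] :
    (Ideal.span {f | ∃ i j : ℕ, 1 ≤ i ∧ i < j ∧ j ≤ n ∧
        f = X (uIdx n i) * X (wIdx n j) - X (uIdx n j) * X (wIdx n i)} :
      Ideal (MvPolynomial (Fin (2 * n)) K)) =
    twoMinorsIdeal (fun i : Fin n => X (uVertex i)) fun i => X (wVertex i) := by
  rw [twoMinorsIdeal_eq_span_lt]
  congr 1
  ext f
  constructor
  · rintro ⟨i, j, hi, hij, hj, rfl⟩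
    obtain ⟨i, rfl⟩ := Nat.exists_eq_add_of_le' hi
    obtain ⟨j, rfl⟩ := Nat.exists_eq_add_of_le' (hi.trans hij.le)
    refine ⟨⟨i, by omega⟩, ⟨j, by omega⟩, Fin.mk_lt_mk.2 (by omega), ?_⟩
    simp only [← uIdx_add_one, ← wIdx_add_one]
  · rintro ⟨i, j, hij, rfl⟩
    refine ⟨i + 1, j + 1, by omega, by omega, by omega, ?_⟩
    simp only [uIdx_add_one, wIdx_add_one]

end Vertices

theorem sub_mem_of_forall_add_one_sub_mem {n : ℕ} [NeZero n] {M S : Type*} [AddCommGroup M]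
    [SetLike S M] [AddSubgroupClass S M] {L : S} {f : Fin n → M}
    (hf : ∀ i, f (i + 1) - f i ∈ L) (i j : Fin n) : f i - f j ∈ L := by
  obtain ⟨m, rfl⟩ := Nat.exists_eq_succ_of_ne_zero (NeZero.ne n)
  have sub_zero_mem (k : Fin (m + 1)) : f k - f 0 ∈ L := by
    induction k using Fin.induction with
    | zero => simp
    | succ k ih =>
      rw [← Fin.coeSucc_eq_succ, ← sub_add_sub_cancel]
      exact add_mem (hf _) ih
  rw [← sub_sub_sub_cancel_right _ _ (f 0)]
  exact sub_mem (sub_zero_mem i) (sub_zero_mem j)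

section EdgeLattice

variable {n : ℕ}

/-- The vector `e_{u_i} - e_{w_i}` of the edge `{u_i, w_i}` joining two consecutive parts. -/
def edgeVec (i : Fin n) : Fin (2 * n) → ℤ :=
  Pi.single (uVertex i) 1 - Pi.single (wVertex i) 1

theorem edgeVec_uVertex (i j : Fin n) : edgeVec i (uVertex j) = (Pi.single i 1 : Fin n → ℤ) j := by
  simp [edgeVec, Pi.single_apply, uVertex_injective.eq_iff, uVertex_ne_wVertex]

theorem edgeVec_wVertex (i j : Fin n) :
    edgeVec i (wVertex j) = -(Pi.single i 1 : Fin n → ℤ) j := by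
  simp [edgeVec, Pi.single_apply, wVertex_injective.eq_iff, (uVertex_ne_wVertex _ _).symm]

variable [NeZero n]

theorem bPart_wIdx_uIdx [NeZero (2 * n)] (hn : 2 ≤ n) (j : Fin n) :
    bPart (2 * n) {wIdx n (j + 1), uIdx n (j + 2)} = edgeVec (j + 1) - edgeVec j := by
  rw [wIdx_add_one, uIdx_add_two, ← wVertex_add_one, bPart_pair_add_one (by omega),
    ← eq_sub_of_add_eq (uVertex_add_one j), wVertex_add_one, uVertex_add_one, edgeVec, edgeVec]
  abel

variable (n) in
/-- The lattice `L_Π` of the parcycle. It is generated by the vectors `b_V` of the parts, which are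
written here as differences of edge vectors. -/
def edgeLattice : Submodule ℤ (Fin (2 * n) → ℤ) :=
  Submodule.span ℤ (Set.range fun j : Fin n => edgeVec (j + 1) - edgeVec j)

theorem edgeVec_sub_edgeVec_mem_edgeLattice (i j : Fin n) :
    edgeVec i - edgeVec j ∈ edgeLattice n := by
  have add_one_sub_mem (k : Fin n) : edgeVec (k + 1) - edgeVec k ∈ edgeLattice n :=
    Submodule.subset_span ⟨k, rfl⟩
  exact sub_mem_of_forall_add_one_sub_mem add_one_sub_mem i j

theorem apply_uVertex_add_apply_wVertex_eq_zero_of_mem_edgeLattice {x : Fin (2 * n) → ℤ}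
    (hx : x ∈ edgeLattice n) (i : Fin n) : x (uVertex i) + x (wVertex i) = 0 := by
  let φ : (Fin (2 * n) → ℤ) →ₗ[ℤ] ℤ :=
    .proj (φ := fun _ => ℤ) (uVertex i) + .proj (φ := fun _ => ℤ) (wVertex i)
  have hφ : edgeLattice n ≤ LinearMap.ker φ := by
    refine Submodule.span_le.2 (Set.range_subset_iff.2 fun j => LinearMap.mem_ker.2 ?_)
    simp [φ, edgeVec_uVertex, edgeVec_wVertex]
  exact hφ hx

theorem sum_apply_uVertex_eq_zero_of_mem_edgeLattice {x : Fin (2 * n) → ℤ}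
    (hx : x ∈ edgeLattice n) : ∑ i, x (uVertex i) = 0 := by
  let φ : (Fin (2 * n) → ℤ) →ₗ[ℤ] ℤ := ∑ i : Fin n, LinearMap.proj (uVertex i)
  have hφ : edgeLattice n ≤ LinearMap.ker φ := by
    refine Submodule.span_le.2 (Set.range_subset_iff.2 fun j => LinearMap.mem_ker.2 ?_)
    simp [φ, edgeVec_uVertex]
  simpa [φ] using LinearMap.mem_ker.1 (hφ hx)

theorem span_range_bPart_eq_edgeLattice [NeZero (2 * n)] (hn : 2 ≤ n) :
    Submodule.span ℤ (Set.range fun j : Fin n =>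
      bPart (2 * n) {wIdx n (j + 1), uIdx n (j + 2)}) = edgeLattice n := by
  simp only [bPart_wIdx_uIdx hn, edgeLattice]

variable (n) (K : Type*) [Field K]

theorem latticeIdeal_edgeLattice_le_twoMinorsIdeal :
    latticeIdeal (2 * n) K (edgeLattice n) ≤
      twoMinorsIdeal (fun i : Fin n => X (uVertex i)) fun i => X (wVertex i) := by
  refine Ideal.span_le.2 ?_
  rintro f ⟨a, b, hab, rfl⟩
  have hsum := sum_apply_uVertex_eq_zero_of_mem_edgeLattice hab
  have hadd := apply_uVertex_add_apply_wVertex_eq_zero_of_mem_edgeLattice hab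
  simp only [Pi.sub_apply, Finset.sum_sub_distrib, sub_eq_zero] at hsum hadd
  rw [prod_univ_eq_prod_uVertex_mul_wVertex, prod_univ_eq_prod_uVertex_mul_wVertex]
  refine prod_pow_sub_prod_pow_mem_twoMinorsIdeal _ _ (mod_cast hsum) fun i => ?_
  have := hadd i
  omega

theorem twoMinorsIdeal_le_latticeIdeal_edgeLattice :
    twoMinorsIdeal (fun i : Fin n => X (uVertex i)) (fun i => X (wVertex i)) ≤
      latticeIdeal (2 * n) K (edgeLattice n) := by
  refine Ideal.span_le.2 ?_
  rintro f ⟨i, j, rfl⟩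
  refine X_mul_X_sub_X_mul_X_mem_latticeIdeal ?_
  convert edgeVec_sub_edgeVec_mem_edgeLattice i j using 1
  rw [edgeVec, edgeVec]
  abel

end EdgeLattice

/-- The toppling ideal of the parcycle on the `2n`-cycle
`u_1, w_1, …, u_n, w_n` with parts `{w_n, u_1}` (the sink) and `{w_j, u_{j+1}}`
(`1 ≤ j ≤ n-1`) equals the binomial edge ideal of the complete graph `K_n`. -/
theorem statement_9 (K : Type*) [Field K] (n : ℕ) [NeZero n] [NeZero (2 * n)]
    (hn : 2 ≤ n) :
    latticeIdeal (2 * n) K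
      (Submodule.span ℤ (Set.range fun j : Fin n =>
        bPart (2 * n) ({wIdx n ((j : ℕ) + 1), uIdx n ((j : ℕ) + 2)} : Set (Fin (2 * n)))))
    = Ideal.span { f | ∃ i j : ℕ, 1 ≤ i ∧ i < j ∧ j ≤ n ∧
        f = X (uIdx n i) * X (wIdx n j) - X (uIdx n j) * X (wIdx n i) } := by
  rw [span_range_bPart_eq_edgeLattice hn, span_uIdx_wIdx_eq_twoMinorsIdeal]
  exact le_antisymm (latticeIdeal_edgeLattice_le_twoMinorsIdeal n K)
    (twoMinorsIdeal_le_latticeIdeal_edgeLattice n K)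
end
end

section
/- Let (C_n,Π) be a parcycle with Π = {V_1,…,V_k} and sink V_k. Then for every i ≥ 0 the Betti numbers of the quotients by the toppling ideal and by the G-parking function ideal agree: β_i(R_n/I_Π) = β_i(R_n/M_Π). Moreover, β_0 = 1 and for every i ≥ 1 this common value equals i·C(k, i+1) (binomial coefficient, so in particular both Betti numbers vanish for i ≥ k). -/
noncomputable section

open MvPolynomial

open CategoryTheory in
/-- `Tor_i^{R_n}(R_n/⟨x_1,…,x_n⟩, R_n/N)` as a module over `R_n = K[x_1,…,x_n]`. -/
def TorKN (n : ℕ) (K : Type*) [Field K] (i : ℕ) (N : Ideal (MvPolynomial (Fin n) K)) :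
    ModuleCat (MvPolynomial (Fin n) K) :=
  ((Tor (ModuleCat (MvPolynomial (Fin n) K)) i).obj
      (ModuleCat.of _ (MvPolynomial (Fin n) K ⧸ (Ideal.span (Set.range X) :
        Ideal (MvPolynomial (Fin n) K))))).obj
    (ModuleCat.of _ (MvPolynomial (Fin n) K ⧸ N))

/-!
Call a vertex `w` a cut if a new part of `Π` begins at `w`. The monomials `x_w x_{w'-1}`, for cuts
`w < w'`, generate the parking function ideal: a parset `S` avoiding the sink starts at a cut `w`
and ends just before a cut `w'`, and `x_w x_{w'-1}` divides `x^{S → S̄}`. The binomials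
`x_w x_{w'-1} - x_{w'} x_{w-1}` generate the toppling ideal: they reduce every monomial to one
divisible by none of the `x_w x_{w'-1}`, and two such monomials whose exponents differ by an
element of the lattice agree, by a maximum principle for the Laplacian. So the two ideals are
generated by the `2 × 2` minors of the matrix with columns `(x_w, x_{w-1})`, without and with
their off-diagonal terms.

Weight the off-diagonal terms by an idempotent `ε`. Weighting the entries of the Eagon–Northcott
complex accordingly gives a complex that resolves both ideals: for a strictly concave weight on
the vertices the leading terms of its differentials do not depend on `ε`, and they force
exactness. Since the entries lie in the irrelevant maximal ideal, the Betti numbers are the ranks.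
-/

section Rank

variable {ι : Type*} [LinearOrder ι] {A : Finset ι} {j l : ι}

/-- The number of elements of `A` below `j`. For `j ∈ A` this is the position of `j` in the
increasing enumeration of `A`, counted from `0`. -/
def rankIn (A : Finset ι) (j : ι) : ℕ := (A.filter (· < j)).card

lemma rankIn_erase_add_one (hj : j ∈ A) (hjl : j < l) :
    rankIn (A.erase j) l + 1 = rankIn A l := by
  rw [rankIn, Finset.filter_erase]
  exact Finset.card_erase_add_one (by simp [hj, hjl])

lemma rankIn_erase_of_le (hlj : l ≤ j) : rankIn (A.erase j) l = rankIn A l := by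
  rw [rankIn, Finset.filter_erase, Finset.erase_eq_of_notMem (by simp [hlj]), rankIn]

lemma strictMonoOn_rankIn (A : Finset ι) : StrictMonoOn (rankIn A) A := by
  intro j hj l _ hjl
  rw [← rankIn_erase_add_one hj hjl, Nat.lt_succ_iff, ← rankIn_erase_of_le le_rfl]
  exact Finset.card_le_card (Finset.monotone_filter_right _ fun x _ hx => hx.trans hjl)

lemma rankIn_lt_card (hj : j ∈ A) : rankIn A j < A.card :=
  Finset.card_lt_card (Finset.filter_ssubset.2 ⟨j, hj, lt_irrefl j⟩)

lemma exists_rankIn_eq {r : ℕ} (hr : r < A.card) : ∃ j ∈ A, rankIn A j = r :=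
  Finset.surjOn_of_injOn_of_card_le (t := Finset.range A.card) (rankIn A)
    (fun _ hj => by simpa using rankIn_lt_card hj) (strictMonoOn_rankIn A).injOn (by simp)
    (by simpa using hr)

lemma rankIn_eq_zero_iff : rankIn A j = 0 ↔ ∀ l ∈ A, j ≤ l := by
  simp [rankIn, Finset.filter_eq_empty_iff]

lemma neg_one_pow_rankIn_erase {R : Type*} [Ring R] (hj : j ∈ A) (hl : l ∈ A) (hjl : j ≠ l) :
    (-1 : R) ^ (rankIn A j + rankIn (A.erase j) l) =
      -(-1) ^ (rankIn A l + rankIn (A.erase l) j) := by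
  wlog h : j < l generalizing j l
  · rw [this hl hj hjl.symm (hjl.symm.lt_of_le (not_lt.1 h)), neg_neg]
  rw [← rankIn_erase_add_one hj h, rankIn_erase_of_le h.le, pow_add, pow_add _ (_ + 1), pow_succ]
  simp [((Commute.refl (-1 : R)).pow_pow _ _).eq]

lemma sum_neg_one_pow_rankIn_smul_erase_eq_zero {R M : Type*} [Ring R] [AddCommGroup M]
    [Module R M] (A : Finset ι) (T : ι → ι → M)
    (hT : ∀ j ∈ A, ∀ l ∈ A, j ≠ l → T j l = T l j) :
    ∑ j ∈ A, (-1 : R) ^ rankIn A j •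
      ∑ l ∈ A.erase j, (-1 : R) ^ rankIn (A.erase j) l • T j l = 0 := by
  simp_rw [Finset.smul_sum, smul_smul, ← pow_add]
  rw [Finset.sum_sigma']
  refine Finset.sum_involution (fun x _ => ⟨x.2, x.1⟩) ?_ ?_ ?_ fun _ _ => rfl
  · rintro ⟨j, l⟩ h
    obtain ⟨hj, hlj, hl⟩ : j ∈ A ∧ l ≠ j ∧ l ∈ A := by simpa using h
    rw [hT j hj l hl hlj.symm, neg_one_pow_rankIn_erase hj hl hlj.symm, neg_smul,
      neg_add_cancel]
  · rintro ⟨j, l⟩ h - hswap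
    exact (Finset.mem_erase.1 (Finset.mem_sigma.1 h).2).1 (congrArg Sigma.fst hswap)
  · rintro ⟨j, l⟩ h
    obtain ⟨hj, hlj, hl⟩ : j ∈ A ∧ l ≠ j ∧ l ∈ A := by simpa using h
    simp [hj, hl, hlj.symm]

end Rank

namespace EagonNorthcott

section Complex

variable {ι : Type}

/-- The basis of the `i`-th free module of the Eagon–Northcott complex of a matrix with two rows
and columns indexed by `ι`. The natural number is the exponent of one of the two variables in a
monomial of degree `i - 1`, the degree fixing the other exponent. -/
def Index (ι : Type) : ℕ → Type
  | 0 => Unit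
  | i + 1 => {A : Finset ι // A.card = i + 2} × Fin (i + 1)

/-- The index of the free module of rank one in degree `0`. -/
def Index.unit : Index ι 0 := ()

instance [DecidableEq ι] : ∀ i, DecidableEq (Index ι i)
  | 0 => inferInstanceAs (DecidableEq Unit)
  | i + 1 => inferInstanceAs (DecidableEq ({A : Finset ι // A.card = i + 2} × Fin (i + 1)))

instance [Fintype ι] : ∀ i, Fintype (Index ι i)
  | 0 => inferInstanceAs (Fintype Unit)
  | i + 1 => inferInstanceAs (Fintype ({A : Finset ι // A.card = i + 2} × Fin (i + 1)))

lemma card_index [Fintype ι] (i : ℕ) :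
    Fintype.card (Index ι i) = if i = 0 then 1 else i * (Fintype.card ι).choose (i + 1) := by
  cases i with
  | zero => rfl
  | succ i =>
    change Fintype.card ({A : Finset ι // A.card = i + 2} × Fin (i + 1)) = _
    rw [Fintype.card_prod, Fintype.card_finset_len]
    simp [mul_comm]

lemma exists_index_of_mem_range {i : ℕ} {A : Finset ι} (hA : A.card = i + 2) {a : ℤ}
    (ha : ¬(a < 0 ∨ (i : ℤ) < a)) :
    ∃ α : Index ι (i + 1), α.1.1 = A ∧ ((α.2 : ℕ) : ℤ) = a :=
  ⟨(⟨A, hA⟩, ⟨a.toNat, by omega⟩), rfl, Int.toNat_of_nonneg (by omega)⟩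

variable [LinearOrder ι] {R : Type*} [CommRing R] (x y : ι → R) (ε : R)

/-- The basis vector indexed by `A` and `a`, or `0` if `a` is out of range. -/
def basisVec (i : ℕ) (A : Finset ι) (a : ℤ) : Index ι (i + 1) → R :=
  fun β => if β.1.1 = A ∧ ((β.2 : ℕ) : ℤ) = a then 1 else 0

lemma basisVec_eq_single (i : ℕ) (α : Index ι (i + 1)) :
    (basisVec i α.1.1 (α.2 : ℕ) : Index ι (i + 1) → R) = Pi.single α 1 := by
  funext β
  have hβ : (β.1.1 = α.1.1 ∧ ((β.2 : ℕ) : ℤ) = (α.2 : ℕ)) ↔ β = α := by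
    rw [Nat.cast_inj, Fin.val_inj, Subtype.val_inj]
    exact Prod.ext_iff.symm
  simp only [basisVec, hβ, Pi.single_apply]

lemma basisVec_eq_zero (i : ℕ) (A : Finset ι) {a : ℤ} (ha : a < 0 ∨ (i : ℤ) < a) :
    (basisVec i A a : Index ι (i + 1) → R) = 0 := by
  funext β
  have hβ : (β.2 : ℕ) < i + 1 := β.2.2
  exact if_neg fun h => by omega

/-- The coefficient with which removing `j` from `A` and lowering `a` enters the differential. -/
def xCoeff (A : Finset ι) (a : ℤ) (j : ι) : R := if (rankIn A j : ℤ) ≤ a then x j else ε * x j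

/-- The coefficient with which removing `j` from `A` and keeping `a` enters the differential. -/
def yCoeff (A : Finset ι) (a : ℤ) (j : ι) : R := if a < rankIn A j then y j else ε * y j

section Commutation

variable {ε} {A : Finset ι} {j l : ι}

lemma xCoeff_mul_xCoeff_erase (hε : IsIdempotentElem ε) (a : ℤ) (hj : j ∈ A) (hl : l ∈ A)
    (hjl : j ≠ l) :
    xCoeff x ε A a j * xCoeff x ε (A.erase j) (a - 1) l =
      xCoeff x ε A a l * xCoeff x ε (A.erase l) (a - 1) j := by
  wlog h : j < l generalizing j l
  · exact (this hl hj hjl.symm (hjl.symm.lt_of_le (not_lt.1 h))).symm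
  have hlt := strictMonoOn_rankIn A hj hl h
  simp only [xCoeff, rankIn_erase_of_le h.le, ← rankIn_erase_add_one hj h] at hlt ⊢
  push_cast
  split_ifs <;>
    first | omega | ring1 | linear_combination (x j * x l) * hε.eq |
      linear_combination -(x j * x l) * hε.eq

lemma yCoeff_mul_yCoeff_erase (hε : IsIdempotentElem ε) (a : ℤ) (hj : j ∈ A) (hl : l ∈ A)
    (hjl : j ≠ l) :
    yCoeff y ε A a j * yCoeff y ε (A.erase j) a l =
      yCoeff y ε A a l * yCoeff y ε (A.erase l) a j := by
  wlog h : j < l generalizing j l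
  · exact (this hl hj hjl.symm (hjl.symm.lt_of_le (not_lt.1 h))).symm
  have hlt := strictMonoOn_rankIn A hj hl h
  simp only [yCoeff, rankIn_erase_of_le h.le, ← rankIn_erase_add_one hj h] at hlt ⊢
  push_cast
  split_ifs <;>
    first | omega | ring1 | linear_combination (y j * y l) * hε.eq

lemma xCoeff_mul_yCoeff_erase (hε : IsIdempotentElem ε) (a : ℤ) (hj : j ∈ A) (hl : l ∈ A)
    (hjl : j ≠ l) :
    xCoeff x ε A a j * yCoeff y ε (A.erase j) (a - 1) l =
      yCoeff y ε A a l * xCoeff x ε (A.erase l) a j := by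
  rcases hjl.lt_or_gt with h | h
  · have hlt := strictMonoOn_rankIn A hj hl h
    simp only [xCoeff, yCoeff, rankIn_erase_of_le h.le, ← rankIn_erase_add_one hj h] at hlt ⊢
    push_cast
    split_ifs <;> first | omega | ring1
  · have hlt := strictMonoOn_rankIn A hl hj h
    simp only [xCoeff, yCoeff, rankIn_erase_of_le h.le, ← rankIn_erase_add_one hl h] at hlt ⊢
    push_cast
    split_ifs <;>
      first | omega | ring1 | linear_combination (x j * y l) * hε.eq |
        linear_combination -(x j * y l) * hε.eq

end Commutation

/-- The `2 × 2` minor on the columns `s` and `t` of the matrix with rows `x` and `y`, its second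
term weighted by `ε`. Thus `ε = 1` gives the minor and `ε = 0` its diagonal term. -/
def minor (s t : ι) : R := x s * y t - ε * (x t * y s)

lemma sum_minor_pair {s t : ι} (hst : s < t) :
    ∑ j ∈ ({s, t} : Finset ι), ∑ l ∈ ({s, t} : Finset ι) with j < l, minor x y ε j l =
      minor x y ε s t := by
  simp [Finset.sum_pair hst.ne, Finset.filter_insert, Finset.filter_singleton, hst, hst.not_gt]

/-- The ideal generated by the `2 × 2` minors of the matrix with rows `x` and `y`, the terms off
the diagonal weighted by `ε`. -/
def minorIdeal : Ideal R := Ideal.span {f | ∃ s t, s < t ∧ minor x y ε s t = f}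

/-- The map from the free module of rank one onto the quotient by the ideal of minors. -/
def augmentation : (Index ι 0 → R) →ₗ[R] R ⧸ minorIdeal x y ε :=
  (minorIdeal x y ε).mkQ ∘ₗ LinearMap.proj (φ := fun _ : Index ι 0 => R) Index.unit

lemma augmentation_surjective : Function.Surjective (augmentation x y ε) :=
  (Submodule.mkQ_surjective _).comp fun f => ⟨fun _ => f, rfl⟩

/-- The image under the differential of the basis vector indexed by `A` and `a`. -/
def boundary (i : ℕ) (A : Finset ι) (a : ℤ) : Index ι (i + 1) → R :=
  ∑ j ∈ A, (-1 : R) ^ rankIn A j •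
    (xCoeff x ε A a j • basisVec i (A.erase j) (a - 1) +
      yCoeff y ε A a j • basisVec i (A.erase j) a)

/-- The part of the boundary of the boundary of the basis vector indexed by `A` and `a` that
comes from removing first `j` and then `l`, up to sign. -/
def boundaryTwice (i : ℕ) (A : Finset ι) (a : ℤ) (j l : ι) : Index ι (i + 1) → R :=
  (xCoeff x ε A a j * xCoeff x ε (A.erase j) (a - 1) l) •
      basisVec i ((A.erase j).erase l) (a - 1 - 1) +
    (xCoeff x ε A a j * yCoeff y ε (A.erase j) (a - 1) l +
      yCoeff y ε A a j * xCoeff x ε (A.erase j) a l) • basisVec i ((A.erase j).erase l) (a - 1) +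
    (yCoeff y ε A a j * yCoeff y ε (A.erase j) a l) • basisVec i ((A.erase j).erase l) a

lemma boundaryTwice_comm {ε : R} (hε : IsIdempotentElem ε) (i : ℕ) {A : Finset ι} (a : ℤ) {j l : ι}
    (hj : j ∈ A) (hl : l ∈ A) (hjl : j ≠ l) :
    boundaryTwice x y ε i A a j l = boundaryTwice x y ε i A a l j := by
  simp only [boundaryTwice]
  rw [Finset.erase_right_comm, xCoeff_mul_xCoeff_erase x hε a hj hl hjl,
    yCoeff_mul_yCoeff_erase y hε a hj hl hjl, xCoeff_mul_yCoeff_erase x y hε a hj hl hjl,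
    ← xCoeff_mul_yCoeff_erase x y hε a hl hj hjl.symm,
    add_comm (yCoeff y ε A a l * xCoeff x ε (A.erase l) a j)]

lemma exists_boundary_zero_eq {A : Finset ι} (hA : A.card = 3) :
    ∃ r s t, r < s ∧ s < t ∧
      boundary x y ε 0 A 0 = (ε * y r) • basisVec 0 {s, t} 0 - y s • basisVec 0 {r, t} 0 +
        y t • basisVec 0 {r, s} 0 ∧
      boundary x y ε 0 A 1 = x r • basisVec 0 {s, t} 0 - x s • basisVec 0 {r, t} 0 +
        (ε * x t) • basisVec 0 {r, s} 0 := by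
  obtain ⟨r, hr, hr0⟩ := exists_rankIn_eq (A := A) (r := 0) (by omega)
  obtain ⟨s, hs, hs1⟩ := exists_rankIn_eq (A := A) (r := 1) (by omega)
  obtain ⟨t, ht, ht2⟩ := exists_rankIn_eq (A := A) (r := 2) (by omega)
  have hrs : r < s := ((strictMonoOn_rankIn A).lt_iff_lt hr hs).1 (by omega)
  have hst : s < t := ((strictMonoOn_rankIn A).lt_iff_lt hs ht).1 (by omega)
  obtain rfl : {r, s, t} = A := Finset.eq_of_subset_of_card_le
    (by simp [Finset.insert_subset_iff, hr, hs, ht])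
    (by rw [hA, Finset.card_eq_three.2 ⟨r, s, t, hrs.ne, (hrs.trans hst).ne, hst.ne, rfl⟩])
  have er : ({r, s, t} : Finset ι).erase r = {s, t} := by grind
  have es : ({r, s, t} : Finset ι).erase s = {r, t} := by grind
  have et : ({r, s, t} : Finset ι).erase t = {r, s} := by grind
  have hneg (B : Finset ι) : (basisVec 0 B (-1) : Index ι 1 → R) = 0 :=
    basisVec_eq_zero 0 B (by omega)
  have hpos (B : Finset ι) : (basisVec 0 B 1 : Index ι 1 → R) = 0 :=
    basisVec_eq_zero 0 B (by omega)
  have hsum (a : ℤ) : boundary x y ε 0 {r, s, t} a =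
      (xCoeff x ε {r, s, t} a r • basisVec 0 {s, t} (a - 1) +
        yCoeff y ε {r, s, t} a r • basisVec 0 {s, t} a) -
      (xCoeff x ε {r, s, t} a s • basisVec 0 {r, t} (a - 1) +
        yCoeff y ε {r, s, t} a s • basisVec 0 {r, t} a) +
      (xCoeff x ε {r, s, t} a t • basisVec 0 {r, s} (a - 1) +
        yCoeff y ε {r, s, t} a t • basisVec 0 {r, s} a) := by
    rw [boundary, Finset.sum_insert (by simp [hrs.ne, (hrs.trans hst).ne]),
      Finset.sum_pair hst.ne, er, es, et, hr0, hs1, ht2]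
    module
  refine ⟨r, s, t, hrs, hst, ?_, ?_⟩
  · simp [hsum, xCoeff, yCoeff, hr0, hs1, ht2, hneg]
  · simp [hsum, xCoeff, yCoeff, hr0, hs1, ht2, hpos]

variable [Fintype ι]

/-- The differential of the Eagon–Northcott complex of the matrix with rows `x` and `y`, with the
terms off the diagonal weighted by `ε`: for `ε = 1` it is the classical complex, for `ε = 0` the
complex of its leading terms. -/
def diff : ∀ i, (Index ι (i + 1) → R) →ₗ[R] (Index ι i → R)
  | 0 => Fintype.linearCombination R fun α _ =>
      ∑ s ∈ α.1.1, ∑ t ∈ α.1.1 with s < t, minor x y ε s t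
  | i + 1 => Fintype.linearCombination R fun α => boundary x y ε i α.1.1 (α.2 : ℕ)

lemma diff_succ_single (i : ℕ) (α : Index ι (i + 2)) (f : R) :
    diff x y ε (i + 1) (Pi.single α f) = f • boundary x y ε i α.1.1 (α.2 : ℕ) := by
  rw [diff, Fintype.linearCombination_apply_single]

lemma diff_succ_basisVec (i : ℕ) {A : Finset ι} (hA : A.card = i + 3) (a : ℤ) :
    diff x y ε (i + 1) (basisVec (i + 1) A a) = boundary x y ε i A a := by
  by_cases ha : a < 0 ∨ ((i + 1 : ℕ) : ℤ) < a
  · rw [basisVec_eq_zero _ _ ha, map_zero, boundary]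
    refine (Finset.sum_eq_zero fun j _ => ?_).symm
    rw [basisVec_eq_zero _ _ (by omega), basisVec_eq_zero _ _ (by omega)]
    simp
  · obtain ⟨α, rfl, rfl⟩ := exists_index_of_mem_range hA ha
    rw [basisVec_eq_single, diff_succ_single, one_smul]

lemma diff_zero_single (α : Index ι 1) (f : R) :
    diff x y ε 0 (Pi.single α f) =
      f • fun _ => ∑ s ∈ α.1.1, ∑ t ∈ α.1.1 with s < t, minor x y ε s t :=
  Fintype.linearCombination_apply_single R _ α f

lemma diff_zero_basisVec {s t : ι} (hst : s < t) :
    diff x y ε 0 (basisVec 0 {s, t} 0) = fun _ => minor x y ε s t := by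
  obtain ⟨α, hα, hα0⟩ := exists_index_of_mem_range (i := 0) (Finset.card_pair hst.ne) (a := 0)
    (by omega)
  rw [← hα, ← hα0, basisVec_eq_single, diff_zero_single, one_smul, hα, sum_minor_pair x y ε hst]

lemma diff_mem {I : Ideal R} (hx : ∀ j, x j ∈ I) (hy : ∀ j, y j ∈ I) (i : ℕ)
    (z : Index ι (i + 1) → R) (β : Index ι i) : diff x y ε i z β ∈ I := by
  cases i with
  | zero =>
    simp only [diff, Fintype.linearCombination_apply, Finset.sum_apply, Pi.smul_apply]
    refine I.sum_mem fun α _ => I.mul_mem_left _ <| I.sum_mem fun s _ => I.sum_mem fun t _ => ?_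
    exact I.sub_mem (I.mul_mem_right _ (hx s)) (I.mul_mem_left _ (I.mul_mem_right _ (hx t)))
  | succ i =>
    have hxC : ∀ A a j, xCoeff x ε A a j ∈ I := fun A a j => by
      unfold xCoeff
      split_ifs
      exacts [hx j, I.mul_mem_left _ (hx j)]
    have hyC : ∀ A a j, yCoeff y ε A a j ∈ I := fun A a j => by
      unfold yCoeff
      split_ifs
      exacts [hy j, I.mul_mem_left _ (hy j)]
    simp only [diff, boundary, Fintype.linearCombination_apply, Finset.sum_apply, Pi.smul_apply]
    exact I.sum_mem fun α _ => I.mul_mem_left _ <| I.sum_mem fun j _ => I.mul_mem_left _ <|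
      I.add_mem (I.mul_mem_right _ (hxC _ _ _)) (I.mul_mem_right _ (hyC _ _ _))

lemma diff_boundary (i : ℕ) {A : Finset ι} (hA : A.card = i + 4) (a : ℤ) :
    diff x y ε (i + 1) (boundary x y ε (i + 1) A a) =
      ∑ j ∈ A, (-1 : R) ^ rankIn A j •
        ∑ l ∈ A.erase j, (-1 : R) ^ rankIn (A.erase j) l • boundaryTwice x y ε i A a j l := by
  rw [boundary, map_sum]
  refine Finset.sum_congr rfl fun j hj => ?_
  have hcard : (A.erase j).card = i + 3 := by rw [Finset.card_erase_of_mem hj, hA]; rfl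
  rw [map_smul, map_add, map_smul, map_smul, diff_succ_basisVec _ _ _ _ hcard,
    diff_succ_basisVec _ _ _ _ hcard, boundary, boundary, Finset.smul_sum, Finset.smul_sum,
    ← Finset.sum_add_distrib]
  congr 1
  refine Finset.sum_congr rfl fun l _ => ?_
  rw [boundaryTwice]
  module

variable {ε}

lemma diff_zero_boundary (hε : IsIdempotentElem ε) {A : Finset ι} (hA : A.card = 3) {a : ℤ}
    (ha : a = 0 ∨ a = 1) : diff x y ε 0 (boundary x y ε 0 A a) = 0 := by
  obtain ⟨r, s, t, hrs, hst, h0, h1⟩ := exists_boundary_zero_eq x y ε hA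
  funext u
  rcases ha with rfl | rfl
  · simp only [h0, map_add, map_sub, map_smul, diff_zero_basisVec _ _ _ hst,
      diff_zero_basisVec _ _ _ (hrs.trans hst), diff_zero_basisVec _ _ _ hrs, minor,
      Pi.add_apply, Pi.sub_apply, Pi.smul_apply, smul_eq_mul, Pi.zero_apply]
    linear_combination -(y r * x t * y s) * hε.eq
  · simp only [h1, map_add, map_sub, map_smul, diff_zero_basisVec _ _ _ hst,
      diff_zero_basisVec _ _ _ (hrs.trans hst), diff_zero_basisVec _ _ _ hrs, minor,
      Pi.add_apply, Pi.sub_apply, Pi.smul_apply, smul_eq_mul, Pi.zero_apply]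
    linear_combination -(x s * x t * y r) * hε.eq

lemma diff_comp_diff_succ (hε : IsIdempotentElem ε) (i : ℕ) :
    diff x y ε i ∘ₗ diff x y ε (i + 1) = 0 := by
  refine LinearMap.pi_ext' fun α => LinearMap.ext_ring ?_
  rw [LinearMap.comp_apply, LinearMap.comp_apply, LinearMap.single_apply, diff_succ_single,
    one_smul, LinearMap.zero_comp, LinearMap.zero_apply]
  cases i with
  | zero =>
    have ha : (α.2 : ℕ) < 2 := α.2.2
    exact diff_zero_boundary x y hε α.1.2 (by omega)
  | succ i =>
    rw [diff_boundary x y ε i α.1.2]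
    exact sum_neg_one_pow_rankIn_smul_erase_eq_zero _ _ fun j hj l hl hjl =>
      boundaryTwice_comm x y hε i _ hj hl hjl

variable (ε)

lemma diff_zero_apply_mem_minorIdeal (z : Index ι 1 → R) (u : Index ι 0) :
    diff x y ε 0 z u ∈ minorIdeal x y ε := by
  simp only [diff, Fintype.linearCombination_apply, Finset.sum_apply, Pi.smul_apply]
  exact Ideal.sum_mem _ fun α _ => Ideal.mul_mem_left _ _ <| Ideal.sum_mem _ fun s _ =>
    Ideal.sum_mem _ fun t ht => Ideal.subset_span ⟨s, t, (Finset.mem_filter.1 ht).2, rfl⟩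

lemma exact_diff_zero_augmentation :
    Function.Exact (diff x y ε 0) (augmentation x y ε) := by
  intro z
  have hz : augmentation x y ε z = 0 ↔ z .unit ∈ minorIdeal x y ε :=
    Submodule.Quotient.mk_eq_zero _
  have hle : minorIdeal x y ε ≤
      (LinearMap.range (diff x y ε 0)).map (LinearMap.proj (φ := fun _ => R) Index.unit) :=
    Ideal.span_le.2 fun f ⟨s, t, hst, hf⟩ =>
      ⟨_, ⟨basisVec 0 {s, t} 0, diff_zero_basisVec x y ε hst⟩, hf⟩
  rw [hz]
  constructor
  · intro h
    obtain ⟨w, hw, hwz⟩ := hle h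
    rwa [show z = w from funext fun _ => hwz.symm]
  · rintro ⟨w, rfl⟩
    exact diff_zero_apply_mem_minorIdeal x y ε w .unit

end Complex

end EagonNorthcott

section LeadingTerm

variable {K M κ β : Type*} [CommRing K] [AddCommGroup M] [Module K M]

/-- With respect to the basis `b` ordered by `key`, the vector `x` is a unit multiple of `b t` plus
a combination of basis vectors with strictly smaller key. -/
def HasLeadingTerm [LT κ] (b : Module.Basis β K M) (key : β → κ) (x : M) (t : β) : Prop :=
  ∃ c : K, IsUnit c ∧ x - c • b t ∈ Submodule.span K (b '' {s | key s < key t})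

section Preorder

variable [Preorder κ] {b : Module.Basis β K M} {key : β → κ} {x : M} {t : β}

lemma HasLeadingTerm.isUnit_repr (h : HasLeadingTerm b key x t) : IsUnit (b.repr x t) := by
  obtain ⟨c, hc, hx⟩ := h
  have ht : b.repr (x - c • b t) t = 0 :=
    Finsupp.notMem_support_iff.1 fun ht => lt_irrefl _ (b.mem_span_image.1 hx ht)
  have hxt : b.repr x t = c := by simpa [sub_eq_zero] using ht
  rwa [hxt]

lemma HasLeadingTerm.repr_eq_zero (h : HasLeadingTerm b key x t) {s : β} (hst : s ≠ t)
    (hkey : ¬key s < key t) : b.repr x s = 0 := by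
  obtain ⟨c, -, hx⟩ := h
  have hs : b.repr (x - c • b t) s = 0 :=
    Finsupp.notMem_support_iff.1 fun hs => hkey (b.mem_span_image.1 hx hs)
  simpa [hst.symm] using hs

lemma sup_span_eq_top_of_hasLeadingTerm [WellFoundedLT κ] {N : Submodule K M} {U : Set β}
    (h : ∀ t ∉ U, ∃ y ∈ N, HasLeadingTerm b key y t) :
    N ⊔ Submodule.span K (b '' U) = ⊤ := by
  set S := N ⊔ Submodule.span K (b '' U)
  have hS (t : β) : b t ∈ S := by
    induction hk : key t using WellFoundedLT.induction generalizing t with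
    | ind k ih =>
      subst hk
      by_cases ht : t ∈ U
      · exact Submodule.mem_sup_right (Submodule.subset_span ⟨t, ht, rfl⟩)
      obtain ⟨y, hy, c, hc, hyc⟩ := h t ht
      have hlower : Submodule.span K (b '' {s | key s < key t}) ≤ S :=
        Submodule.span_le.2 fun _ ⟨s, hs, hsx⟩ => hsx ▸ ih _ hs s rfl
      have hct : c • b t ∈ S := by
        simpa using S.sub_mem (Submodule.mem_sup_left hy) (hlower hyc)
      exact (S.smul_mem_iff_of_isUnit hc).1 hct
  rw [eq_top_iff, ← b.span_eq, Submodule.span_le]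
  exact Set.range_subset_iff.2 hS

end Preorder

variable {M' γ κ' : Type*} [AddCommGroup M'] [Module K M'] {b : Module.Basis β K M}
  {c : Module.Basis γ K M'} {g : M →ₗ[K] M'} {μ : β → γ} {U : Set β}

lemma eq_zero_of_injOn_hasLeadingTerm [LinearOrder κ'] {key' : γ → κ'}
    (hg : ∀ t ∈ U, HasLeadingTerm c key' (g (b t)) (μ t)) (hμ : U.InjOn μ) {z : M}
    (hz : z ∈ Submodule.span K (b '' U)) (hgz : g z = 0) : z = 0 := by
  by_contra hz0
  have hU : ↑(b.repr z).support ⊆ U := b.mem_span_image.1 hz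
  obtain ⟨t, ht, hmax⟩ := Finset.exists_max_image (b.repr z).support (fun s => key' (μ s))
    (by simpa [Finsupp.support_nonempty_iff] using hz0)
  have hcoeff : c.repr (g z) (μ t) = b.repr z t * c.repr (g (b t)) (μ t) := by
    conv_lhs => rw [← b.linearCombination_repr z, Finsupp.linearCombination_apply, Finsupp.sum,
      map_sum, map_sum, Finsupp.finsetSum_apply]
    rw [Finset.sum_eq_single_of_mem t ht, map_smul, map_smul, Finsupp.smul_apply, smul_eq_mul]
    intro s hs hst
    have hμst : μ t ≠ μ s := fun e => hst (hμ (hU hs) (hU ht) e.symm)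
    rw [map_smul, map_smul, Finsupp.smul_apply,
      (hg s (hU hs)).repr_eq_zero hμst (not_lt.2 (hmax s hs)), smul_zero]
  rw [hgz, map_zero, Finsupp.zero_apply, eq_comm,
    (hg t (hU ht)).isUnit_repr.mul_left_eq_zero] at hcoeff
  exact Finsupp.mem_support_iff.1 ht hcoeff

/-- The basis vectors split into leading terms of the image of `f` and a set `U` on which `g` has
distinct leading terms. Modulo the image of `f` every vector is supported on `U`, where `g` is
injective. -/
theorem exact_of_hasLeadingTerm {N : Type*} [AddCommGroup N] [Module K N] [Preorder κ]
    [WellFoundedLT κ] [LinearOrder κ'] {key : β → κ} {key' : γ → κ'} {f : N →ₗ[K] M}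
    (hf : ∀ t ∉ U, ∃ y, HasLeadingTerm b key (f y) t)
    (hg : ∀ t ∈ U, HasLeadingTerm c key' (g (b t)) (μ t)) (hμ : U.InjOn μ) (hgf : g ∘ₗ f = 0) :
    Function.Exact f g := by
  refine LinearMap.exact_of_comp_eq_zero_of_ker_le_range hgf fun x hx => ?_
  have hx' : x ∈ LinearMap.range f ⊔ Submodule.span K (b '' U) := by
    rw [sup_span_eq_top_of_hasLeadingTerm (N := LinearMap.range f) fun t ht =>
      let ⟨y, hy⟩ := hf t ht
      ⟨f y, LinearMap.mem_range_self f y, hy⟩]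
    trivial
  obtain ⟨_, ⟨y, rfl⟩, z, hz, rfl⟩ := Submodule.mem_sup.1 hx'
  have hgz : g z = 0 := by
    rwa [LinearMap.mem_ker, map_add, ← LinearMap.comp_apply, hgf, LinearMap.zero_apply,
      zero_add] at hx
  rw [eq_zero_of_injOn_hasLeadingTerm hg hμ hz hgz, add_zero]
  exact ⟨y, rfl⟩

end LeadingTerm

namespace EagonNorthcott

section DiagonalWeight

variable {σ ι : Type*} [LinearOrder ι] {p q : ι → σ} {w : σ → ℕ} {A : Finset ι} {a : ℤ} {j l : ι}

lemma rankIn_erase_le_sub_one_iff (hj : j ∈ A) (hl : l ∈ A) (hlj : l ≠ j)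
    (ha : (rankIn A j : ℤ) ≤ a) : (rankIn (A.erase j) l : ℤ) ≤ a - 1 ↔ (rankIn A l : ℤ) ≤ a := by
  rcases hlj.lt_or_gt with h | h
  · have hlt := strictMonoOn_rankIn A hl hj h
    rw [rankIn_erase_of_le h.le]
    omega
  · rw [← rankIn_erase_add_one hj h]
    omega

lemma rankIn_erase_le_iff (hj : j ∈ A) (hl : l ∈ A) (ha : a < rankIn A j) :
    (rankIn (A.erase j) l : ℤ) ≤ a ↔ (rankIn A l : ℤ) ≤ a := by
  rcases le_or_gt l j with h | h
  · rw [rankIn_erase_of_le h]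
  · have hlt := strictMonoOn_rankIn A hj hl h
    rw [← rankIn_erase_add_one hj h] at hlt ⊢
    omega

/-- The diagonal terms of the minors on the columns `s < t` of the matrix with rows `X ∘ p` and
`X ∘ q` are their leading terms for the weight `w`. -/
def DiagonalLeads (p q : ι → σ) (w : σ → ℕ) : Prop :=
  ∀ ⦃s t⦄, s < t → w (p t) + w (q s) < w (p s) + w (q t)

/-- The weight assigned to the basis vector of the Eagon–Northcott complex indexed by `A` and `a`:
that of the product of the entries of the columns in `A`, taken from the first row for the columns
of rank at most `a` and from the second row for the others. -/
def diagWeight (p q : ι → σ) (w : σ → ℕ) (A : Finset ι) (a : ℤ) : ℕ :=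
  ∑ j ∈ A, w (if (rankIn A j : ℤ) ≤ a then p j else q j)

lemma diagWeight_erase_sub_one (hj : j ∈ A) (ha : (rankIn A j : ℤ) ≤ a) :
    w (p j) + diagWeight p q w (A.erase j) (a - 1) = diagWeight p q w A a := by
  rw [diagWeight, diagWeight, ← Finset.add_sum_erase _ _ hj, if_pos ha]
  refine congrArg _ (Finset.sum_congr rfl fun l hl => ?_)
  obtain ⟨hlj, hl⟩ := Finset.mem_erase.1 hl
  simp only [rankIn_erase_le_sub_one_iff hj hl hlj ha]

lemma diagWeight_erase (hj : j ∈ A) (ha : a < rankIn A j) :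
    w (q j) + diagWeight p q w (A.erase j) a = diagWeight p q w A a := by
  rw [diagWeight, diagWeight, ← Finset.add_sum_erase _ _ hj, if_neg (not_le.2 ha)]
  refine congrArg _ (Finset.sum_congr rfl fun l hl => ?_)
  simp only [rankIn_erase_le_iff hj (Finset.mem_of_mem_erase hl) ha]

lemma DiagonalLeads.diagWeight_erase_sub_one_lt (hw : DiagonalLeads p q w) (ha : 0 ≤ a)
    (hj : j ∈ A) (haj : a < rankIn A j) :
    w (p j) + diagWeight p q w (A.erase j) (a - 1) < diagWeight p q w A a := by
  have hjA := rankIn_lt_card hj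
  obtain ⟨l, hl, hla⟩ := exists_rankIn_eq (A := A) (r := a.toNat) (by omega)
  have hlj : l < j := ((strictMonoOn_rankIn A).lt_iff_lt hl hj).1 (by omega)
  have hj' := rankIn_erase_add_one hl hlj
  have hl' := rankIn_erase_of_le (A := A) hlj.le
  rw [← diagWeight_erase_sub_one hl (by omega),
    ← diagWeight_erase (A := A.erase l) (Finset.mem_erase.2 ⟨hlj.ne', hj⟩) (by omega),
    ← diagWeight_erase (A := A.erase j) (Finset.mem_erase.2 ⟨hlj.ne, hl⟩) (by omega),
    Finset.erase_right_comm]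
  have hlt := hw hlj
  omega

lemma DiagonalLeads.diagWeight_erase_lt (hw : DiagonalLeads p q w) (ha : 0 ≤ a)
    (haA : a + 1 < A.card) (hj : j ∈ A) (haj : (rankIn A j : ℤ) ≤ a) :
    w (q j) + diagWeight p q w (A.erase j) a < diagWeight p q w A a := by
  obtain ⟨l, hl, hla⟩ := exists_rankIn_eq (A := A) (r := (a + 1).toNat) (by omega)
  have hjl : j < l := ((strictMonoOn_rankIn A).lt_iff_lt hj hl).1 (by omega)
  have hl' := rankIn_erase_add_one hj hjl
  have hj' := rankIn_erase_of_le (A := A) hjl.le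
  rw [← diagWeight_erase hl (by omega),
    ← diagWeight_erase_sub_one (A := A.erase l) (Finset.mem_erase.2 ⟨hjl.ne, hj⟩) (by omega),
    ← diagWeight_erase_sub_one (A := A.erase j) (Finset.mem_erase.2 ⟨hjl.ne', hl⟩) (by omega),
    Finset.erase_right_comm]
  have hlt := hw hjl
  omega

lemma DiagonalLeads.diagWeight_erase_sub_one_le (hw : DiagonalLeads p q w) (ha : 0 ≤ a)
    (hj : j ∈ A) : w (p j) + diagWeight p q w (A.erase j) (a - 1) ≤ diagWeight p q w A a := by
  rcases le_or_gt (rankIn A j : ℤ) a with haj | haj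
  · exact (diagWeight_erase_sub_one hj haj).le
  · exact (hw.diagWeight_erase_sub_one_lt ha hj haj).le

lemma DiagonalLeads.diagWeight_erase_le (hw : DiagonalLeads p q w) (ha : 0 ≤ a)
    (haA : a + 1 < A.card) (hj : j ∈ A) :
    w (q j) + diagWeight p q w (A.erase j) a ≤ diagWeight p q w A a := by
  rcases le_or_gt (rankIn A j : ℤ) a with haj | haj
  · exact (hw.diagWeight_erase_lt ha haA hj haj).le
  · exact (diagWeight_erase hj haj).le

end DiagonalWeight

section MonomialOrder

variable {σ ι : Type*} [LinearOrder ι] {p q : ι → σ} {w : σ → ℕ} {A B : Finset ι} {a b : ℤ}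
  {u v : σ →₀ ℕ} {s t : ι}

/-- The key ordering the monomial multiples of the basis vectors of the Eagon–Northcott complex:
first by weight, then by the least column, then by the greatest column, reversed. -/
def key (p q : ι → σ) (w : σ → ℕ) (A : Finset ι) (a : ℤ) (u : σ →₀ ℕ) :
    ℕ ×ₗ WithTop ι ×ₗ (WithBot ι)ᵒᵈ :=
  toLex (Finsupp.weight w u + diagWeight p q w A a, toLex (A.min, OrderDual.toDual A.max))

lemma key_lt_key_of_weight_lt
    (h : Finsupp.weight w u + diagWeight p q w A a < Finsupp.weight w v + diagWeight p q w B b) :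
    key p q w A a u < key p q w B b v :=
  Prod.Lex.toLex_lt_toLex.2 (Or.inl h)

lemma key_lt_key_of_min_lt
    (h : Finsupp.weight w u + diagWeight p q w A a ≤ Finsupp.weight w v + diagWeight p q w B b)
    (hmin : A.min < B.min) : key p q w A a u < key p q w B b v :=
  h.lt_or_eq.elim key_lt_key_of_weight_lt fun h =>
    Prod.Lex.toLex_lt_toLex.2 (Or.inr ⟨h, Prod.Lex.toLex_lt_toLex.2 (Or.inl hmin)⟩)

lemma key_lt_key_of_max_lt
    (h : Finsupp.weight w u + diagWeight p q w A a ≤ Finsupp.weight w v + diagWeight p q w B b)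
    (hmin : A.min ≤ B.min) (hmax : B.max < A.max) : key p q w A a u < key p q w B b v := by
  rcases h.lt_or_eq with hlt | heq
  · exact key_lt_key_of_weight_lt hlt
  rcases hmin.lt_or_eq with hmin | hmin
  · exact key_lt_key_of_min_lt h hmin
  · exact Prod.Lex.toLex_lt_toLex.2 (Or.inr ⟨heq, Prod.Lex.toLex_lt_toLex.2 (Or.inr
      ⟨hmin, OrderDual.toDual_lt_toDual.2 hmax⟩)⟩)

lemma min_erase_lt_min_erase (hs : IsLeast (A : Set ι) s) (hts : t ≠ s) :
    (A.erase t).min < (A.erase s).min := by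
  refine (Finset.min_le (Finset.mem_erase.2 ⟨hts.symm, hs.1⟩)).trans_lt <|
    lt_of_le_of_ne (Finset.le_min fun l hl => ?_) fun h => ?_
  · exact WithTop.coe_le_coe.2 (hs.2 (Finset.mem_of_mem_erase hl))
  · exact Finset.notMem_erase s A (Finset.mem_of_min h.symm)

lemma max_erase_lt_max_erase (ht : IsGreatest (A : Set ι) t) (hst : s ≠ t) :
    (A.erase t).max < (A.erase s).max := by
  refine (lt_of_le_of_ne (Finset.max_le fun l hl => ?_) fun h => ?_).trans_le <|
    Finset.le_max (Finset.mem_erase.2 ⟨hst.symm, ht.1⟩)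
  · exact WithBot.coe_le_coe.2 (ht.2 (Finset.mem_of_mem_erase hl))
  · exact Finset.notMem_erase t A (Finset.mem_of_max h)

lemma min_erase_le_min_erase (hs : 0 < rankIn A s) : (A.erase s).min ≤ (A.erase t).min := by
  obtain ⟨l, hl⟩ := Finset.card_pos.1 hs
  obtain ⟨hlA, hls⟩ := Finset.mem_filter.1 hl
  refine Finset.le_min fun r hr => ?_
  have hrA := Finset.mem_of_mem_erase hr
  by_cases hrs : r = s
  · exact (Finset.min_le (Finset.mem_erase.2 ⟨hls.ne, hlA⟩)).trans
      (WithTop.coe_le_coe.2 (hrs ▸ hls.le))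
  · exact Finset.min_le (Finset.mem_erase.2 ⟨hrs, hrA⟩)

end MonomialOrder

section MonomialBasis

variable {σ K : Type*} [CommRing K] {ι : Type}

/-- The monomial multiples of the basis vectors of the `i`-th module of the complex. -/
def monomialBasis (σ K : Type*) [CommRing K] (ι : Type) [Fintype ι] (i : ℕ) :
    Module.Basis (Σ _ : Index ι i, σ →₀ ℕ) K (Index ι i → MvPolynomial σ K) :=
  Pi.basis fun _ => basisMonomials σ K

lemma monomialBasis_apply [Fintype ι] [DecidableEq ι] {i : ℕ} (α : Index ι i) (u : σ →₀ ℕ) :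
    monomialBasis σ K ι i ⟨α, u⟩ = Pi.single α (monomial u 1) := by
  simp [monomialBasis, Pi.basis_apply]

variable [LinearOrder ι]

/-- The monomial multiple of the basis vector indexed by `A` and `a`, or `0` if `a` is out of
range. -/
def monomialVec (K : Type*) [CommRing K] (i : ℕ) (A : Finset ι) (a : ℤ) (u : σ →₀ ℕ) :
    Index ι (i + 1) → MvPolynomial σ K :=
  monomial u (1 : K) • basisVec i A a

lemma monomialVec_eq_zero {i : ℕ} (A : Finset ι) {a : ℤ} (u : σ →₀ ℕ) (ha : a < 0 ∨ (i : ℤ) < a) :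
    monomialVec K i A a u = 0 := by
  rw [monomialVec, basisVec_eq_zero i A ha, smul_zero]

lemma monomial_smul_X_smul_basisVec (i : ℕ) (A : Finset ι) (a : ℤ) (u : σ →₀ ℕ) (c d : K) (v : σ) :
    (monomial u 1 : MvPolynomial σ K) • (C d : MvPolynomial σ K) •
      (C c * X v : MvPolynomial σ K) • (basisVec i A a : Index ι (i + 1) → MvPolynomial σ K) =
      (d * c) • monomialVec K i A a (u + Finsupp.single v 1) := by
  rw [monomialVec, smul_smul, smul_smul, ← smul_assoc (d * c), smul_eq_C_mul, monomial_add_single,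
    C_mul]
  congr 1
  ring

lemma monomial_smul_boundary (p q : ι → σ) (ε : K) (i : ℕ) (A : Finset ι) (a : ℤ) (u : σ →₀ ℕ) :
    monomial u (1 : K) • boundary (fun j => X (p j)) (fun j => X (q j)) (C ε) i A a =
      ∑ j ∈ A, (((-1) ^ rankIn A j * if (rankIn A j : ℤ) ≤ a then 1 else ε) •
          monomialVec K i (A.erase j) (a - 1) (u + Finsupp.single (p j) 1) +
        ((-1) ^ rankIn A j * if a < rankIn A j then 1 else ε) •
          monomialVec K i (A.erase j) a (u + Finsupp.single (q j) 1)) := by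
  rw [boundary, Finset.smul_sum]
  refine Finset.sum_congr rfl fun j _ => ?_
  rw [smul_add, smul_add, ← monomial_smul_X_smul_basisVec, ← monomial_smul_X_smul_basisVec,
    C_pow, C_neg, C_1]
  simp only [xCoeff, yCoeff, apply_ite C, C_1, ite_mul, one_mul]

variable [Fintype ι]

lemma monomialVec_eq_monomialBasis {i : ℕ} (α : Index ι (i + 1)) (u : σ →₀ ℕ) :
    monomialVec K i α.1.1 (α.2 : ℕ) u = monomialBasis σ K ι (i + 1) ⟨α, u⟩ := by
  rw [monomialVec, basisVec_eq_single, monomialBasis_apply, ← Pi.single_smul, smul_eq_mul, mul_one]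

/-- The key of a monomial multiple of a basis vector of positive degree in the complex. -/
def basisKey (p q : ι → σ) (w : σ → ℕ) (i : ℕ) (t : Σ _ : Index ι (i + 1), σ →₀ ℕ) :
    ℕ ×ₗ WithTop ι ×ₗ (WithBot ι)ᵒᵈ :=
  key p q w t.1.1.1 (t.1.2 : ℕ) t.2

end MonomialBasis

section LeadingTerm

variable {σ K : Type*} [CommRing K] {ι : Type} [LinearOrder ι] [Fintype ι] {p q : ι → σ} {w : σ → ℕ}

lemma monomialVec_mem_span {i : ℕ} {A : Finset ι} (hA : A.card = i + 2) {a : ℤ} {u : σ →₀ ℕ}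
    {k : ℕ ×ₗ WithTop ι ×ₗ (WithBot ι)ᵒᵈ} (h : 0 ≤ a → a ≤ i → key p q w A a u < k) :
    monomialVec K i A a u ∈
      Submodule.span K (monomialBasis σ K ι (i + 1) '' {t | basisKey p q w i t < k}) := by
  by_cases ha : a < 0 ∨ (i : ℤ) < a
  · rw [monomialVec_eq_zero _ _ ha]
    exact Submodule.zero_mem _
  · obtain ⟨α, rfl, rfl⟩ := exists_index_of_mem_range hA ha
    rw [monomialVec_eq_monomialBasis]
    exact Submodule.subset_span ⟨⟨α, u⟩, h (by omega) (by omega), rfl⟩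

lemma DiagonalLeads.boundary_sub_isLeast_mem (hw : DiagonalLeads p q w) (ε : K) {i : ℕ}
    {A : Finset ι} (hA : A.card = i + 3) {a : ℤ} (ha : 0 ≤ a) (u : σ →₀ ℕ) {s : ι}
    (hs : IsLeast (A : Set ι) s) :
    monomial u (1 : K) • boundary (fun j => X (p j)) (fun j => X (q j)) (C ε) i A a -
        monomialVec K i (A.erase s) (a - 1) (u + Finsupp.single (p s) 1) ∈
      Submodule.span K (monomialBasis σ K ι (i + 1) '' {t | basisKey p q w i t <
        key p q w (A.erase s) (a - 1) (u + Finsupp.single (p s) 1)}) := by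
  have hcard : ∀ j ∈ A, (A.erase j).card = i + 2 := fun j hj => by
    rw [Finset.card_erase_of_mem hj, hA]; rfl
  have hsa : (rankIn A s : ℤ) ≤ a := by
    rwa [rankIn_eq_zero_iff.2 hs.2]
  have hweight : ∀ v, Finsupp.weight w (u + Finsupp.single v 1) = Finsupp.weight w u + w v := by
    simp [Finsupp.weight_single]
  have hlead := diagWeight_erase_sub_one (q := q) (w := w) (p := p) hs.1 hsa
  rw [monomial_smul_boundary, ← Finset.add_sum_erase _ _ hs.1, rankIn_eq_zero_iff.2 hs.2, pow_zero,
    Nat.cast_zero, if_pos ha, mul_one, one_smul, add_assoc, add_sub_cancel_left]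
  refine Submodule.add_mem _ (Submodule.smul_mem _ _ <| monomialVec_mem_span (hcard s hs.1)
      fun _ hai' => key_lt_key_of_weight_lt ?_)
    (Submodule.sum_mem _ fun j hj => ?_)
  · have hlt := hw.diagWeight_erase_lt ha (by omega) hs.1 hsa
    simp only [hweight]
    omega
  · obtain ⟨hjs, hj⟩ := Finset.mem_erase.1 hj
    refine Submodule.add_mem _
      (Submodule.smul_mem _ _ <| monomialVec_mem_span (hcard j hj) fun _ _ =>
        key_lt_key_of_min_lt ?_ (min_erase_lt_min_erase hs hjs))
      (Submodule.smul_mem _ _ <| monomialVec_mem_span (hcard j hj) fun _ _ =>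
        key_lt_key_of_min_lt ?_ (min_erase_lt_min_erase hs hjs))
    · have hle := hw.diagWeight_erase_sub_one_le ha hj
      simp only [hweight]
      omega
    · have hle := hw.diagWeight_erase_le ha (by omega) hj
      simp only [hweight]
      omega

lemma DiagonalLeads.boundary_sub_isGreatest_mem (hw : DiagonalLeads p q w) (ε : K) {i : ℕ}
    {A : Finset ι} (hA : A.card = i + 3) (u : σ →₀ ℕ) {t : ι} (ht : IsGreatest (A : Set ι) t) :
    monomial u (1 : K) • boundary (fun j => X (p j)) (fun j => X (q j)) (C ε) i A 0 -
        (-1 : K) ^ rankIn A t • monomialVec K i (A.erase t) 0 (u + Finsupp.single (q t) 1) ∈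
      Submodule.span K (monomialBasis σ K ι (i + 1) '' {s | basisKey p q w i s <
        key p q w (A.erase t) 0 (u + Finsupp.single (q t) 1)}) := by
  have hcard : ∀ j ∈ A, (A.erase j).card = i + 2 := fun j hj => by
    rw [Finset.card_erase_of_mem hj, hA]; rfl
  have hta : (0 : ℤ) < rankIn A t := by
    obtain ⟨s, hs, hst⟩ := Finset.exists_mem_ne (by omega : 1 < A.card) t
    exact_mod_cast Finset.card_pos.2 ⟨s, Finset.mem_filter.2 ⟨hs, (ht.2 hs).lt_of_ne hst⟩⟩
  have hweight : ∀ v, Finsupp.weight w (u + Finsupp.single v 1) = Finsupp.weight w u + w v := by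
    simp [Finsupp.weight_single]
  have hlead := diagWeight_erase (q := q) (w := w) (p := p) ht.1 hta
  rw [monomial_smul_boundary, ← Finset.add_sum_erase _ _ ht.1, if_pos hta, mul_one,
    monomialVec_eq_zero _ _ (by omega), smul_zero, zero_add, add_sub_cancel_left]
  refine Submodule.sum_mem _ fun j hj => ?_
  obtain ⟨hjt, hj⟩ := Finset.mem_erase.1 hj
  rw [monomialVec_eq_zero _ _ (by omega), smul_zero, zero_add]
  refine Submodule.smul_mem _ _ (monomialVec_mem_span (hcard j hj) fun _ _ => ?_)
  rcases Nat.eq_zero_or_pos (rankIn A j) with hj0 | hj0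
  · have hlt := hw.diagWeight_erase_lt le_rfl (by omega) hj (by omega)
    exact key_lt_key_of_weight_lt (by simp only [hweight]; omega)
  · have hle := hw.diagWeight_erase_le le_rfl (by omega) hj
    exact key_lt_key_of_max_lt (by simp only [hweight]; omega) (min_erase_le_min_erase hj0)
      (max_erase_lt_max_erase ht hjt)

lemma DiagonalLeads.hasLeadingTerm_diff_isLeast (hw : DiagonalLeads p q w) (ε : K) {i : ℕ}
    (α : Index ι (i + 2)) (β : Index ι (i + 1)) {s : ι} (hs : IsLeast (α.1.1 : Set ι) s)
    (hβ : β.1.1 = α.1.1.erase s) (hαβ : (α.2 : ℕ) = β.2 + 1) (u : σ →₀ ℕ) :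
    HasLeadingTerm (monomialBasis σ K ι (i + 1)) (basisKey p q w i)
      (diff (fun j => X (p j)) (fun j => X (q j)) (C ε) (i + 1)
        (monomialBasis σ K ι (i + 2) ⟨α, u⟩))
      ⟨β, u + Finsupp.single (p s) 1⟩ := by
  have hβ2 : ((β.2 : ℕ) : ℤ) = (α.2 : ℕ) - 1 := by omega
  refine ⟨1, isUnit_one, ?_⟩
  rw [monomialBasis_apply, diff_succ_single, ← monomialVec_eq_monomialBasis, one_smul, basisKey, hβ,
    hβ2]
  exact hw.boundary_sub_isLeast_mem ε α.1.2 (by omega) u hs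

lemma DiagonalLeads.hasLeadingTerm_diff_isGreatest (hw : DiagonalLeads p q w) (ε : K) {i : ℕ}
    (α : Index ι (i + 2)) (β : Index ι (i + 1)) {t : ι} (ht : IsGreatest (α.1.1 : Set ι) t)
    (hβ : β.1.1 = α.1.1.erase t) (hα : (α.2 : ℕ) = 0) (hβ2 : (β.2 : ℕ) = 0) (u : σ →₀ ℕ) :
    HasLeadingTerm (monomialBasis σ K ι (i + 1)) (basisKey p q w i)
      (diff (fun j => X (p j)) (fun j => X (q j)) (C ε) (i + 1)
        (monomialBasis σ K ι (i + 2) ⟨α, u⟩))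
      ⟨β, u + Finsupp.single (q t) 1⟩ := by
  refine ⟨(-1) ^ rankIn α.1.1 t, isUnit_one.neg.pow _, ?_⟩
  rw [monomialBasis_apply, diff_succ_single, ← monomialVec_eq_monomialBasis, basisKey, hβ, hβ2, hα]
  exact hw.boundary_sub_isGreatest_mem ε α.1.2 u ht

lemma DiagonalLeads.hasLeadingTerm_diff_zero (hw : DiagonalLeads p q w) (ε : K) (α : Index ι 1)
    {s t : ι} (hst : s < t) (hα : α.1.1 = {s, t}) (u : σ →₀ ℕ) :
    HasLeadingTerm (monomialBasis σ K ι 0) (fun r => Finsupp.weight w r.2)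
      (diff (fun j => X (p j)) (fun j => X (q j)) (C ε) 0 (monomialBasis σ K ι 1 ⟨α, u⟩))
      ⟨.unit, u + Finsupp.single (p s) 1 + Finsupp.single (q t) 1⟩ := by
  set v := u + Finsupp.single (p t) 1 + Finsupp.single (q s) 1
  have hdiff : diff (fun j => X (p j)) (fun j => X (q j)) (C ε) 0
        (monomialBasis σ K ι 1 ⟨α, u⟩) =
      monomialBasis σ K ι 0 ⟨.unit, u + Finsupp.single (p s) 1 + Finsupp.single (q t) 1⟩ -
        ε • monomialBasis σ K ι 0 ⟨.unit, v⟩ := by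
    have hunit : ∀ f : MvPolynomial σ K, (Pi.single .unit f : Index ι 0 → _) = fun _ => f :=
      fun f => funext fun _ => Pi.single_eq_same _ _
    rw [monomialBasis_apply, diff_zero_single, hα, sum_minor_pair _ _ _ hst, monomialBasis_apply,
      monomialBasis_apply, hunit, hunit]
    funext _
    simp only [Pi.smul_apply, Pi.sub_apply, smul_eq_mul, minor, v, monomial_add_single, pow_one,
      smul_eq_C_mul]
    ring
  refine ⟨1, isUnit_one, ?_⟩
  rw [hdiff, one_smul, sub_sub_cancel_left]
  refine Submodule.neg_mem _ (Submodule.smul_mem _ _ (Submodule.subset_span ⟨_, ?_, rfl⟩))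
  have hlt := hw hst
  simp only [Set.mem_ofPred_eq, v, map_add, Finsupp.weight_single, one_smul]
  omega

end LeadingTerm

section Exactness

variable {σ : Type*}

lemma eq_or_apply_ne_zero_of_add_single_eq {u v : σ →₀ ℕ} {x y : σ}
    (h : u + Finsupp.single x 1 = v + Finsupp.single y 1) : x = y ∨ v x ≠ 0 := by
  by_contra! hxy
  have hx := DFunLike.congr_fun h x
  simp [Finsupp.single_eq_of_ne hxy.1, hxy.2] at hx

lemma sigma_index_ext {ι : Type} {i : ℕ} {t t' : Σ _ : Index ι (i + 1), σ →₀ ℕ}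
    (hA : t.1.1.1 = t'.1.1.1) (ha : (t.1.2 : ℕ) = t'.1.2) (hu : t.2 = t'.2) : t = t' :=
  Sigma.ext (Prod.ext (Subtype.ext hA) (Fin.ext ha)) (heq_of_eq hu)

lemma Index.nonempty {ι : Type} {i : ℕ} (α : Index ι (i + 1)) : α.1.1.Nonempty :=
  Finset.card_pos.1 (α.1.2.symm ▸ Nat.succ_pos _)

variable {ι : Type} [LinearOrder ι] {p q : ι → σ}

lemma eq_of_erase_eq_erase {A B : Finset ι} {s : ι} (hA : s ∈ A) (hB : s ∈ B)
    (h : A.erase s = B.erase s) : A = B := by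
  rw [← Finset.insert_erase hA, h, Finset.insert_erase hB]

lemma le_of_isLeast_of_erase_eq_erase {A B : Finset ι} {s t : ι} (hs : IsLeast (A : Set ι) s)
    (h : A.erase s = B.erase t) (hB : ¬∀ j ∈ B, s < j) : t ≤ s := by
  push Not at hB
  obtain ⟨j, hj, hjs⟩ := hB
  by_contra! hst
  have hjA : j ∈ A.erase s := h ▸ Finset.mem_erase.2 ⟨(hjs.trans_lt hst).ne, hj⟩
  exact Finset.ne_of_mem_erase hjA (hjs.antisymm (hs.2 (Finset.mem_of_mem_erase hjA)))

lemma eq_of_isLeast_of_add_single_eq (hp : p.Injective) {A B : Finset ι} {s t : ι} {u v : σ →₀ ℕ}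
    (hs : IsLeast (A : Set ι) s) (ht : IsLeast (B : Set ι) t) (hAB : A.erase s = B.erase t)
    (huv : u + Finsupp.single (p s) 1 = v + Finsupp.single (p t) 1)
    (hu : ∀ r, (∀ j ∈ A, r < j) → u (p r) = 0) (hv : ∀ r, (∀ j ∈ B, r < j) → v (p r) = 0) :
    s = t := by
  rcases eq_or_apply_ne_zero_of_add_single_eq huv with h | hvs
  · exact hp h
  rcases eq_or_apply_ne_zero_of_add_single_eq huv.symm with h | hut
  · exact hp h.symm
  exact le_antisymm
    (le_of_isLeast_of_erase_eq_erase ht hAB.symm fun hj => hut (hu _ hj))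
    (le_of_isLeast_of_erase_eq_erase hs hAB fun hj => hvs (hv _ hj))

lemma eq_of_isGreatest_of_add_single_eq (hq : q.Injective) {A B : Finset ι} {s t : ι}
    {u v : σ →₀ ℕ} (hs : IsGreatest (A : Set ι) s) (ht : IsGreatest (B : Set ι) t)
    (hAB : A.erase s = B.erase t)
    (huv : u + Finsupp.single (q s) 1 = v + Finsupp.single (q t) 1)
    (hu : ∀ r, (∀ j ∈ A, j < r) → u (q r) = 0) (hv : ∀ r, (∀ j ∈ B, j < r) → v (q r) = 0) :
    s = t :=
  eq_of_isLeast_of_add_single_eq (ι := ιᵒᵈ) hq (A := A) (B := B) hs ht hAB huv hu hv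

/-- The monomial multiples of basis vectors that are not leading terms of boundaries. -/
def nonLeading (p q : ι → σ) (i : ℕ) : Set (Σ _ : Index ι (i + 1), σ →₀ ℕ) :=
  {t | (∀ s, (∀ j ∈ t.1.1.1, s < j) → t.2 (p s) = 0) ∧
    ((t.1.2 : ℕ) = 0 → ∀ r, (∀ j ∈ t.1.1.1, j < r) → t.2 (q r) = 0)}

/-- The column removed from the basis vector `α` in the leading term of its boundary. -/
def pivot {i : ℕ} (α : Index ι (i + 2)) : ι :=
  if (α.2 : ℕ) = 0 then α.1.1.max' (Index.nonempty α) else α.1.1.min' (Index.nonempty α)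

lemma isGreatest_pivot {i : ℕ} {α : Index ι (i + 2)} (hα : (α.2 : ℕ) = 0) :
    IsGreatest (α.1.1 : Set ι) (pivot α) := by
  rw [pivot, if_pos hα]
  exact Finset.isGreatest_max' _ _

lemma isLeast_pivot {i : ℕ} {α : Index ι (i + 2)} (hα : (α.2 : ℕ) ≠ 0) :
    IsLeast (α.1.1 : Set ι) (pivot α) := by
  rw [pivot, if_neg hα]
  exact Finset.isLeast_min' _ _

lemma pivot_mem {i : ℕ} (α : Index ι (i + 2)) : pivot α ∈ α.1.1 :=
  (eq_or_ne (α.2 : ℕ) 0).elim (fun h => (isGreatest_pivot h).1) fun h => (isLeast_pivot h).1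

/-- The basis vector in the leading term of the boundary of the basis vector `α`. -/
def leadIndex {i : ℕ} (α : Index ι (i + 2)) : Index ι (i + 1) :=
  (⟨α.1.1.erase (pivot α), by rw [Finset.card_erase_of_mem (pivot_mem α), α.1.2]; rfl⟩,
    ⟨(α.2 : ℕ) - 1, by have hα : (α.2 : ℕ) < i + 2 := α.2.2; omega⟩)

/-- The leading term of the boundary of a monomial multiple of a basis vector. -/
def leadTerm (p q : ι → σ) (i : ℕ) (t : Σ _ : Index ι (i + 2), σ →₀ ℕ) :
    Σ _ : Index ι (i + 1), σ →₀ ℕ :=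
  ⟨leadIndex t.1,
    t.2 + Finsupp.single (if (t.1.2 : ℕ) = 0 then q (pivot t.1) else p (pivot t.1)) 1⟩

lemma exists_pivot_lt_and_lt_pivot {i : ℕ} {α β : Index ι (i + 2)} (hα : (α.2 : ℕ) ≠ 0)
    (hβ : (β.2 : ℕ) = 0) (h : α.1.1.erase (pivot α) = β.1.1.erase (pivot β)) :
    ∃ r, pivot α < r ∧ r < pivot β := by
  obtain ⟨r, hr⟩ := Index.nonempty (leadIndex α)
  obtain ⟨hrα, hα'⟩ := Finset.mem_erase.1 (show r ∈ α.1.1.erase (pivot α) from hr)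
  obtain ⟨hrβ, hβ'⟩ := Finset.mem_erase.1 (h ▸ hr : r ∈ β.1.1.erase (pivot β))
  exact ⟨r, ((isLeast_pivot hα).2 hα').lt_of_ne hrα.symm,
    ((isGreatest_pivot hβ).2 hβ').lt_of_ne hrβ⟩

lemma pivot_eq_and_eq_zero_iff_of_leadTerm_eq (hp : p.Injective) (hq : q.Injective)
    (hpq : ∀ s r t, s < r → r < t → p s ≠ q t) {i : ℕ} {t t' : Σ _ : Index ι (i + 2), σ →₀ ℕ}
    (ht : t ∈ nonLeading p q (i + 1)) (ht' : t' ∈ nonLeading p q (i + 1))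
    (h : leadTerm p q i t = leadTerm p q i t') :
    pivot t.1 = pivot t'.1 ∧ ((t.1.2 : ℕ) = 0 ↔ (t'.1.2 : ℕ) = 0) := by
  have hA : t.1.1.1.erase (pivot t.1) = t'.1.1.1.erase (pivot t'.1) :=
    congrArg (fun r => r.1.1.1) h
  have hu : t.2 + Finsupp.single (if (t.1.2 : ℕ) = 0 then q (pivot t.1) else p (pivot t.1)) 1 =
      t'.2 + Finsupp.single (if (t'.1.2 : ℕ) = 0 then q (pivot t'.1) else p (pivot t'.1)) 1 :=
    congrArg Sigma.snd h
  wlog hle : (t'.1.2 : ℕ) = 0 → (t.1.2 : ℕ) = 0 generalizing t t'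
  · obtain ⟨h1, h2⟩ := this ht' ht h.symm hA.symm hu.symm fun h0 => by tauto
    exact ⟨h1.symm, h2.symm⟩
  by_cases ha : (t.1.2 : ℕ) = 0 <;> by_cases ha' : (t'.1.2 : ℕ) = 0
  · rw [if_pos ha, if_pos ha'] at hu
    exact ⟨eq_of_isGreatest_of_add_single_eq hq (isGreatest_pivot ha) (isGreatest_pivot ha') hA hu
      (ht.2 ha) (ht'.2 ha'), by simp [ha, ha']⟩
  · rw [if_pos ha, if_neg ha'] at hu
    obtain ⟨r, hr, hr'⟩ := exists_pivot_lt_and_lt_pivot ha' ha hA.symm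
    have hne := (eq_or_apply_ne_zero_of_add_single_eq hu.symm).resolve_left (hpq _ r _ hr hr')
    exact absurd (hr.trans hr') (le_of_isLeast_of_erase_eq_erase (isLeast_pivot ha') hA.symm
      fun hj => hne (ht.1 _ hj)).not_gt
  · exact absurd (hle ha') ha
  · rw [if_neg ha, if_neg ha'] at hu
    exact ⟨eq_of_isLeast_of_add_single_eq hp (isLeast_pivot ha) (isLeast_pivot ha') hA hu ht.1
      ht'.1, by simp [ha, ha']⟩

lemma injOn_leadTerm (hp : p.Injective) (hq : q.Injective)
    (hpq : ∀ s r t, s < r → r < t → p s ≠ q t) (i : ℕ) :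
    (nonLeading p q (i + 1)).InjOn (leadTerm p q i) := by
  intro t ht t' ht' h
  obtain ⟨hpivot, h0⟩ := pivot_eq_and_eq_zero_iff_of_leadTerm_eq hp hq hpq ht ht' h
  have hA : t.1.1.1.erase (pivot t.1) = t'.1.1.1.erase (pivot t'.1) :=
    congrArg (fun r => r.1.1.1) h
  have ha : (t.1.2 : ℕ) - 1 = t'.1.2 - 1 := congrArg (fun r => (r.1.2 : ℕ)) h
  have hu : t.2 + Finsupp.single (if (t.1.2 : ℕ) = 0 then q (pivot t.1) else p (pivot t.1)) 1 =
      t'.2 + Finsupp.single (if (t'.1.2 : ℕ) = 0 then q (pivot t'.1) else p (pivot t'.1)) 1 :=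
    congrArg Sigma.snd h
  simp only [hpivot, h0] at hA hu
  exact sigma_index_ext (eq_of_erase_eq_erase (hpivot ▸ pivot_mem t.1) (pivot_mem t'.1) hA)
    (by omega) (add_right_cancel hu)

variable {w : σ → ℕ} {K : Type*} [CommRing K]

/-- The leading term of the minor on the columns `t`. -/
def leadTermZero (p q : ι → σ) (t : Σ _ : Index ι 1, σ →₀ ℕ) : Σ _ : Index ι 0, σ →₀ ℕ :=
  ⟨.unit, t.2 + Finsupp.single (p (t.1.1.1.min' (Index.nonempty t.1))) 1 +
    Finsupp.single (q (t.1.1.1.max' (Index.nonempty t.1))) 1⟩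

lemma exists_lt_and_eq_pair_and_leadTermZero_eq (p q : ι → σ) (t : Σ _ : Index ι 1, σ →₀ ℕ) :
    ∃ r s, r < s ∧ t.1.1.1 = {r, s} ∧
      leadTermZero p q t = ⟨.unit, t.2 + Finsupp.single (p r) 1 + Finsupp.single (q s) 1⟩ := by
  have hlt : t.1.1.1.min' (Index.nonempty t.1) < t.1.1.1.max' (Index.nonempty t.1) :=
    Finset.min'_lt_max'_of_card _ (t.1.1.2.symm ▸ one_lt_two)
  refine ⟨_, _, hlt, (Finset.eq_of_subset_of_card_le ?_ ?_).symm, rfl⟩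
  · simp [Finset.insert_subset_iff, Finset.min'_mem, Finset.max'_mem]
  · rw [Finset.card_pair hlt.ne, t.1.1.2]

lemma le_of_add_single_add_single_eq (hp : p.Injective)
    (hpq : ∀ s r t, s < r → r < t → p s ≠ q t) {u v : σ →₀ ℕ} {s t s' t' : ι} (hst' : s' < t')
    (h : u + Finsupp.single (p s) 1 + Finsupp.single (q t) 1 =
      v + Finsupp.single (p s') 1 + Finsupp.single (q t') 1)
    (hv : ∀ r < s', v (p r) = 0) : s' ≤ s := by
  by_contra! hlt
  have hs := DFunLike.congr_fun h (p s)
  simp [hv s hlt, Finsupp.single_eq_of_ne (hp.ne hlt.ne),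
    Finsupp.single_eq_of_ne (hpq s s' t' hlt hst')] at hs

lemma injOn_leadTermZero (hp : p.Injective) (hq : q.Injective)
    (hpq : ∀ s r t, s < r → r < t → p s ≠ q t) :
    (nonLeading p q 0).InjOn (leadTermZero p q) := by
  intro b hb b' hb' h
  have hb0 : (b.1.2 : ℕ) = 0 := Nat.lt_one_iff.1 b.1.2.2
  have hb0' : (b'.1.2 : ℕ) = 0 := Nat.lt_one_iff.1 b'.1.2.2
  obtain ⟨s, t, hst, hA, hlead⟩ := exists_lt_and_eq_pair_and_leadTermZero_eq p q b
  obtain ⟨s', t', hst', hA', hlead'⟩ := exists_lt_and_eq_pair_and_leadTermZero_eq p q b'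
  have huv : b.2 + Finsupp.single (p s) 1 + Finsupp.single (q t) 1 =
      b'.2 + Finsupp.single (p s') 1 + Finsupp.single (q t') 1 := by
    simpa only [hlead, hlead'] using congrArg Sigma.snd h
  have hu : ∀ r < s, b.2 (p r) = 0 := fun r hr => hb.1 r (by simp [hA, hr, hr.trans hst])
  have hv : ∀ r < s', b'.2 (p r) = 0 := fun r hr => hb'.1 r (by simp [hA', hr, hr.trans hst'])
  obtain rfl : s = s' := le_antisymm (le_of_add_single_add_single_eq hp hpq hst huv.symm hu)
    (le_of_add_single_add_single_eq hp hpq hst' huv hv)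
  rw [add_right_comm, add_right_comm b'.2, add_left_inj] at huv
  have hgreatest {t : ι} (hst : s < t) : IsGreatest (({s, t} : Finset ι) : Set ι) t := by
    simp [IsGreatest, upperBounds, hst.le]
  have herase {t : ι} (hst : s < t) : ({s, t} : Finset ι).erase t = {s} := by grind
  obtain rfl : t = t' := eq_of_isGreatest_of_add_single_eq hq (hgreatest hst) (hgreatest hst')
    ((herase hst).trans (herase hst').symm) huv (hA ▸ hb.2 hb0) (hA' ▸ hb'.2 hb0')
  exact sigma_index_ext (hA.trans hA'.symm) (hb0.trans hb0'.symm) (add_right_cancel huv)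

variable [Fintype ι]

lemma DiagonalLeads.hasLeadingTerm_diff_leadTerm (hw : DiagonalLeads p q w) (ε : K) (i : ℕ)
    (t : Σ _ : Index ι (i + 2), σ →₀ ℕ) :
    HasLeadingTerm (monomialBasis σ K ι (i + 1)) (basisKey p q w i)
      (diff (fun j => X (p j)) (fun j => X (q j)) (C ε) (i + 1) (monomialBasis σ K ι (i + 2) t))
      (leadTerm p q i t) := by
  by_cases h0 : (t.1.2 : ℕ) = 0
  · rw [leadTerm, if_pos h0]
    exact hw.hasLeadingTerm_diff_isGreatest ε t.1 (leadIndex t.1) (isGreatest_pivot h0) rfl h0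
      (by simp [leadIndex, h0]) t.2
  · rw [leadTerm, if_neg h0]
    exact hw.hasLeadingTerm_diff_isLeast ε t.1 (leadIndex t.1) (isLeast_pivot h0) rfl
      (Nat.succ_pred_eq_of_ne_zero h0).symm t.2

lemma DiagonalLeads.hasLeadingTerm_diff_leadTermZero (hw : DiagonalLeads p q w) (ε : K)
    (t : Σ _ : Index ι 1, σ →₀ ℕ) :
    HasLeadingTerm (monomialBasis σ K ι 0) (fun r => Finsupp.weight w r.2)
      (diff (fun j => X (p j)) (fun j => X (q j)) (C ε) 0 (monomialBasis σ K ι 1 t))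
      (leadTermZero p q t) := by
  obtain ⟨r, s, hrs, hA, hlead⟩ := exists_lt_and_eq_pair_and_leadTermZero_eq p q t
  rw [hlead]
  exact hw.hasLeadingTerm_diff_zero ε t.1 hrs hA t.2

lemma DiagonalLeads.exists_hasLeadingTerm_diff (hw : DiagonalLeads p q w) (ε : K) (i : ℕ)
    {t : Σ _ : Index ι (i + 1), σ →₀ ℕ} (ht : t ∉ nonLeading p q i) :
    ∃ y, HasLeadingTerm (monomialBasis σ K ι (i + 1)) (basisKey p q w i)
      (diff (fun j => X (p j)) (fun j => X (q j)) (C ε) (i + 1) y) t := by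
  obtain ⟨β, u⟩ := t
  have hsub : ∀ x, u x ≠ 0 → u - Finsupp.single x 1 + Finsupp.single x 1 = u := fun x hx =>
    tsub_add_cancel_of_le (Finsupp.single_le_iff.2 (Nat.one_le_iff_ne_zero.2 hx))
  have hcard : ∀ s ∉ β.1.1, (insert s β.1.1).card = i + 3 := fun s hs => by
    rw [Finset.card_insert_of_notMem hs, β.1.2]
  rw [nonLeading, Set.mem_ofPred_eq, not_and_or] at ht
  push Not at ht
  rcases ht with ⟨s, hs, hus⟩ | ⟨h0, r, hr, hur⟩
  · have hsA : s ∉ β.1.1 := fun h => (hs s h).false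
    have hlead := hw.hasLeadingTerm_diff_isLeast ε
      (⟨insert s β.1.1, hcard s hsA⟩, β.2.succ) β (s := s)
      ⟨by simp, fun l hl => by grind⟩
      (Finset.erase_insert hsA).symm (Fin.val_succ _) (u - Finsupp.single (p s) 1)
    rw [hsub _ hus] at hlead
    exact ⟨_, hlead⟩
  · have hrA : r ∉ β.1.1 := fun h => (hr r h).false
    have hlead := hw.hasLeadingTerm_diff_isGreatest ε
      (⟨insert r β.1.1, hcard r hrA⟩, 0) β (t := r)
      ⟨by simp, fun l hl => by grind⟩
      (Finset.erase_insert hrA).symm rfl h0 (u - Finsupp.single (q r) 1)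
    rw [hsub _ hur] at hlead
    exact ⟨_, hlead⟩

theorem DiagonalLeads.exact_diff (hw : DiagonalLeads p q w) (hp : p.Injective) (hq : q.Injective)
    (hpq : ∀ s r t, s < r → r < t → p s ≠ q t) {ε : K} (hε : IsIdempotentElem ε) (i : ℕ) :
    Function.Exact
      (diff (fun j => X (p j) : ι → MvPolynomial σ K) (fun j => X (q j)) (C ε) (i + 1))
      (diff (fun j => X (p j)) (fun j => X (q j)) (C ε) i) := by
  have hcomp := congrArg (LinearMap.restrictScalars K) (diff_comp_diff_succ
    (fun j => X (p j) : ι → MvPolynomial σ K) (fun j => X (q j)) (hε.map C) i)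
  cases i with
  | zero =>
    exact exact_of_hasLeadingTerm (b := monomialBasis σ K ι 1) (c := monomialBasis σ K ι 0)
      (key := basisKey p q w 0) (f := (diff _ _ _ 1).restrictScalars K)
      (g := (diff _ _ _ 0).restrictScalars K)
      (fun t => hw.exists_hasLeadingTerm_diff ε 0 (t := t))
      (fun t _ => hw.hasLeadingTerm_diff_leadTermZero ε t) (injOn_leadTermZero hp hq hpq) hcomp
  | succ i =>
    exact exact_of_hasLeadingTerm (b := monomialBasis σ K ι (i + 2))
      (c := monomialBasis σ K ι (i + 1)) (key := basisKey p q w (i + 1))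
      (f := (diff _ _ _ (i + 2)).restrictScalars K) (g := (diff _ _ _ (i + 1)).restrictScalars K)
      (fun t => hw.exists_hasLeadingTerm_diff ε (i + 1) (t := t))
      (fun t _ => hw.hasLeadingTerm_diff_leadTerm ε i t) (injOn_leadTerm hp hq hpq i) hcomp

end Exactness

end EagonNorthcott

section FreeResolution

open CategoryTheory TensorProduct

universe u

variable {R : Type u} [CommRing R]

lemma lTensor_quotient_eq_zero {M J : Type*} [AddCommGroup M] [Module R M] [Finite J] {I : Ideal R}
    {f : M →ₗ[R] (J → R)} (hf : ∀ x j, f x j ∈ I) : f.lTensor (R ⧸ I) = 0 := by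
  classical
  have := Fintype.ofFinite J
  refine TensorProduct.ext' fun r x => ?_
  have hx : f x = ∑ j, f x j • Pi.single j (1 : R) := by
    simpa using ((Pi.basisFun R J).sum_repr (f x)).symm
  rw [LinearMap.lTensor_tmul, hx, tmul_sum, LinearMap.zero_apply]
  refine Finset.sum_eq_zero fun j _ => ?_
  have hr : f x j • r = 0 := by
    obtain ⟨s, rfl⟩ := Ideal.Quotient.mk_surjective r
    exact Ideal.Quotient.eq_zero_iff_mem.2 (I.mul_mem_right s (hf x j))
  rw [tmul_smul, smul_tmul', hr, zero_tmul]

variable {J : ℕ → Type} {d : ∀ i, (J (i + 1) → R) →ₗ[R] (J i → R)}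

/-- The complex of the free modules `J i → R` with differentials `d`. -/
def freeComplex (hd : ∀ i, d i ∘ₗ d (i + 1) = 0) : ChainComplex (ModuleCat.{u} R) ℕ :=
  ChainComplex.of (fun i => ModuleCat.of R (J i → R)) (fun i => ModuleCat.ofHom (d i)) fun i => by
    rw [← ModuleCat.ofHom_comp, hd, ModuleCat.ofHom_zero]

lemma freeComplex_d (hd : ∀ i, d i ∘ₗ d (i + 1) = 0) (i : ℕ) :
    (freeComplex hd).d (i + 1) i = ModuleCat.ofHom (d i) :=
  ChainComplex.of_d (fun i => ModuleCat.of R (J i → R)) (fun i => ModuleCat.ofHom (d i)) i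

lemma exactAt_freeComplex_succ (hex : ∀ i, Function.Exact (d (i + 1)) (d i)) (i : ℕ) :
    (freeComplex fun i => (hex i).linearMap_comp_eq_zero).ExactAt (i + 1) := by
  have hd := fun i => (hex i).linearMap_comp_eq_zero
  rw [HomologicalComplex.exactAt_iff' _ (i + 2) (i + 1) i (by simp) (by simp),
    ShortComplex.ShortExact.moduleCat_exact_iff_function_exact]
  change Function.Exact ((freeComplex hd).d (i + 2) (i + 1)) ((freeComplex hd).d (i + 1) i)
  rw [freeComplex_d, freeComplex_d]
  exact hex i

variable [∀ i, Finite (J i)] {N : Type u} [AddCommGroup N] [Module R N]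
  {π : (J 0 → R) →ₗ[R] N}

/-- The projective resolution of the cokernel of `d 0` given by an exact sequence of free
modules. -/
def freeResolution (hex : ∀ i, Function.Exact (d (i + 1)) (d i)) (hexπ : Function.Exact (d 0) π)
    (hπ : Function.Surjective π) : ProjectiveResolution (ModuleCat.of R N) where
  complex := freeComplex fun i => (hex i).linearMap_comp_eq_zero
  projective i := (IsProjective.iff_projective (R := R) (J i → R)).1 inferInstance
  π := (ChainComplex.toSingle₀Equiv _ _).symm ⟨ModuleCat.ofHom π, by
    rw [freeComplex_d]
    exact ModuleCat.hom_ext hexπ.linearMap_comp_eq_zero⟩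
  quasiIso := ⟨fun i => by
    cases i with
    | zero =>
      rw [ChainComplex.quasiIsoAt₀_iff, ShortComplex.quasiIso_iff_of_zeros' _ rfl rfl rfl]
      constructor
      · rw [ShortComplex.moduleCat_exact_iff]
        intro x hx
        obtain ⟨y, rfl⟩ := (hexπ x).1 (by simpa using! hx)
        have hd := freeComplex_d (fun i => (hex i).linearMap_comp_eq_zero) 0
        exact ⟨y, congrArg (fun f => f.hom y) hd⟩
      · rw [ModuleCat.epi_iff_surjective]
        simpa using! hπ
    | succ i =>
      rw [quasiIsoAt_iff_exactAt' (hL := ChainComplex.exactAt_succ_single_obj ..)]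
      exact exactAt_freeComplex_succ hex i⟩

/-- The differentials of a minimal resolution vanish after tensoring with `R ⧸ I`. -/
theorem nonempty_tor_equiv_of_mem {I : Ideal R} (hex : ∀ i, Function.Exact (d (i + 1)) (d i))
    (hexπ : Function.Exact (d 0) π) (hπ : Function.Surjective π) (hI : ∀ i x j, d i x j ∈ I)
    (i : ℕ) :
    Nonempty (((Tor (ModuleCat R) i).obj (ModuleCat.of R (R ⧸ I))).obj (ModuleCat.of R N) ≃ₗ[R]
      (J i → R ⧸ I)) := by
  classical
  have (i : ℕ) := Fintype.ofFinite (J i)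
  let P := freeResolution hex hexπ hπ
  let F := (MonoidalCategory.tensoringLeft (ModuleCat R)).obj (ModuleCat.of R (R ⧸ I))
  let C := (F.mapHomologicalComplex (ComplexShape.down ℕ)).obj P.complex
  have hC (a b : ℕ) : C.d a b = 0 := by
    by_cases h : b + 1 = a
    · subst h
      have hd : P.complex.d (b + 1) b = ModuleCat.ofHom (d b) :=
        freeComplex_d (fun i => (hex i).linearMap_comp_eq_zero) b
      change F.map (P.complex.d (b + 1) b) = 0
      rw [hd]
      exact ModuleCat.hom_ext (lTensor_quotient_eq_zero (hI b))
    · exact C.shape _ _ h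
  let e := P.isoLeftDerivedObj F i ≪≫
    (ShortComplex.HomologyData.ofZeros (C.sc i) (hC _ _) (hC _ _)).left.homologyIso
  exact ⟨e.toLinearEquiv.trans (TensorProduct.piScalarRight R R (R ⧸ I) (J i))⟩

end FreeResolution

namespace EagonNorthcott

variable {n : ℕ} {K : Type*} [Field K] {ι : Type} [LinearOrder ι] [Fintype ι] {p q : ι → Fin n}
  {w : Fin n → ℕ}

theorem DiagonalLeads.nonempty_torKN_minorIdeal_equiv (hw : DiagonalLeads p q w)
    (hp : p.Injective) (hq : q.Injective) (hpq : ∀ s r t, s < r → r < t → p s ≠ q t) {ε : K}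
    (hε : IsIdempotentElem ε) (i : ℕ) :
    Nonempty (TorKN n K i (minorIdeal (fun j => X (p j)) (fun j => X (q j)) (C ε)) ≃ₗ[
      MvPolynomial (Fin n) K]
      (Fin (if i = 0 then 1 else i * (Fintype.card ι).choose (i + 1)) →
        MvPolynomial (Fin n) K ⧸ (Ideal.span (Set.range X) : Ideal (MvPolynomial (Fin n) K)))) := by
  have hX (v : Fin n) : X v ∈ (Ideal.span (Set.range X) : Ideal (MvPolynomial (Fin n) K)) :=
    Ideal.subset_span ⟨v, rfl⟩
  obtain ⟨e⟩ := nonempty_tor_equiv_of_mem (hw.exact_diff hp hq hpq hε)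
    (exact_diff_zero_augmentation _ _ _) (augmentation_surjective _ _ _)
    (diff_mem _ _ _ (fun j => hX (p j)) (fun j => hX (q j))) i
  exact ⟨e.trans (LinearEquiv.funCongrLeft _ _
    (Fintype.equivFinOfCardEq (card_index i)).symm)⟩

end EagonNorthcott

lemma subset_of_connected_induce {V : Type*} {G : SimpleGraph V} {S T : Set V}
    (hS : (G.induce S).Connected) (hST : (S ∩ T).Nonempty)
    (hT : ∀ x ∈ S ∩ T, ∀ y ∈ S, G.Adj x y → y ∈ T) : S ⊆ T := by
  obtain ⟨x, hxS, hxT⟩ := hST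
  intro y hy
  have hreach := (SimpleGraph.reachable_iff_reflTransGen _ _).1 (hS.preconnected ⟨x, hxS⟩ ⟨y, hy⟩)
  suffices h : ∀ z : S, Relation.ReflTransGen (G.induce S).Adj ⟨x, hxS⟩ z → (z : V) ∈ T from
    h _ hreach
  intro z hz
  induction hz with
  | refl => exact hxT
  | @tail a b _ hab ih => exact hT a ⟨a.2, ih⟩ b b.2 hab

section Cycle

variable {n : ℕ} [NeZero n]

lemma val_add_one_eq_ite (x : Fin n) :
    ((x + 1 : Fin n) : ℕ) = if (x : ℕ) = n - 1 then 0 else (x : ℕ) + 1 := by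
  obtain ⟨m, rfl⟩ := Nat.exists_eq_succ_of_ne_zero (NeZero.ne n)
  exact (Fin.val_add_one x).trans (by simp [Fin.ext_iff])

lemma val_sub_one_eq_ite (x : Fin n) :
    ((x - 1 : Fin n) : ℕ) = if (x : ℕ) = 0 then n - 1 else (x : ℕ) - 1 := by
  have h := val_add_one_eq_ite (x - 1)
  rw [sub_add_cancel] at h
  grind

lemma val_sub_one_of_lt {x y : Fin n} (h : x < y) : ((y - 1 : Fin n) : ℕ) = (y : ℕ) - 1 := by
  rw [val_sub_one_eq_ite, if_neg (Nat.ne_zero_of_lt h)]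

lemma val_neg_one : ((-1 : Fin n) : ℕ) = n - 1 := by
  simpa using val_sub_one_eq_ite (0 : Fin n)

lemma exists_isLeast_sub_one_notMem {S : Set (Fin n)} (hS : S.Nonempty) (hlast : -1 ∉ S) :
    ∃ x, IsLeast S x ∧ x - 1 ∉ S := by
  obtain ⟨x, hx⟩ := S.toFinite.exists_minimal hS
  have hleast : IsLeast S x := ⟨hx.1, fun y hy => (le_total x y).elim id (hx.2 hy)⟩
  refine ⟨x, hleast, fun hx1 => ?_⟩
  have hle : (x : ℕ) ≤ (x - 1 : Fin n) := hleast.2 hx1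
  have h0 : x = 0 := by
    rw [val_sub_one_eq_ite] at hle
    grind
  exact hlast (by simpa [h0] using hx1)

lemma exists_isGreatest_add_one_notMem {S : Set (Fin n)} (hS : S.Nonempty) (hlast : -1 ∉ S) :
    ∃ x, IsGreatest S x ∧ x < x + 1 ∧ x + 1 ∉ S := by
  obtain ⟨x, hx⟩ := S.toFinite.exists_maximal hS
  have hgreatest : IsGreatest S x := ⟨hx.1, fun y hy => (le_total y x).elim id (hx.2 hy)⟩
  have hne : (x : ℕ) ≠ n - 1 := fun h => hlast <| by
    rw [← Fin.ext (h.trans val_neg_one.symm)]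
    exact hx.1
  have hlt : x < x + 1 := by
    rw [Fin.lt_def, val_add_one_eq_ite, if_neg hne]
    exact Nat.lt_succ_self _
  exact ⟨x, hgreatest, hlt, fun h => hlt.not_ge (hgreatest.2 h)⟩

lemma connected_induce_Ico {w w' : Fin n} (h : w < w') :
    ((cycleG n).induce (Set.Ico w w')).Connected := by
  have hw : w ∈ Set.Ico w w' := ⟨le_rfl, h⟩
  suffices hreach : ∀ (v : ℕ) (x : Fin n) (hx : x ∈ Set.Ico w w'), (x : ℕ) = v →
      ((cycleG n).induce (Set.Ico w w')).Reachable ⟨w, hw⟩ ⟨x, hx⟩ from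
    (SimpleGraph.connected_iff_exists_forall_reachable _).2
      ⟨⟨w, hw⟩, fun x => hreach _ x.1 x.2 rfl⟩
  intro v
  induction v with
  | zero =>
    intro x hx hv
    obtain rfl : x = w := le_antisymm (Fin.le_def.2 (hv ▸ Nat.zero_le _)) hx.1
    rfl
  | succ v ih =>
    intro x hx hv
    obtain rfl | hwx := hx.1.eq_or_lt
    · rfl
    have hval := val_sub_one_of_lt hwx
    have hx1 : x - 1 ∈ Set.Ico w w' := by
      simp only [Set.mem_Ico, Fin.le_def, Fin.lt_def] at hx hwx ⊢
      omega
    refine (ih (x - 1) hx1 (by omega)).trans (SimpleGraph.Adj.reachable ?_)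
    have hne : x - 1 ≠ x := fun he => by
      rw [he] at hval
      omega
    exact SimpleGraph.induce_adj.2
      ((SimpleGraph.fromRel_adj _ _ _).2 ⟨hne, Or.inl (sub_add_cancel x 1).symm⟩)

/-- A strictly concave function of the vertices, for which the diagonal terms of the minors on the
columns `(x_w, x_{w-1})` are their leading terms. -/
def concaveWeight (n : ℕ) (x : Fin n) : ℕ := (x + 1) * (n - 1 - x)

lemma concaveWeight_sub_concaveWeight_sub_one (w : Fin n) :
    (concaveWeight n w : ℤ) - concaveWeight n (w - 1) = n - 1 - 2 * w := by
  obtain ⟨r, hr⟩ := Nat.exists_eq_add_of_lt w.2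
  have hn : (n : ℤ) = w + r + 1 := by exact_mod_cast hr
  have hw : n - 1 - w = r := by omega
  rw [concaveWeight, concaveWeight, val_sub_one_eq_ite, hw, hn]
  split_ifs with h0
  · simp [h0]
  · obtain ⟨v, hv⟩ := Nat.exists_eq_succ_of_ne_zero h0
    have hw1 : n - 1 - (w - 1 : ℕ) = r + 1 := by omega
    rw [hw1, hv]
    push_cast
    ring

lemma concaveWeight_add_lt {w w' : Fin n} (h : w < w') :
    concaveWeight n w' + concaveWeight n (w - 1) <
      concaveWeight n w + concaveWeight n (w' - 1) := by
  have h1 := concaveWeight_sub_concaveWeight_sub_one w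
  have h2 := concaveWeight_sub_concaveWeight_sub_one w'
  omega

variable {κ : Type*}

/-- The vertices at which a new part begins, for the partition of the cycle into the fibres
of `c`. -/
def cuts (c : Fin n → κ) : Finset (Fin n) :=
  open Classical in {w | c (w - 1) ≠ c w}

variable {c : Fin n → κ} {w w' : Fin n}

lemma mem_cuts : w ∈ cuts c ↔ c (w - 1) ≠ c w := by
  simp [cuts]

lemma preimage_image_Ico (hc : ∀ j, ((cycleG n).induce (c ⁻¹' {j})).Connected) (hw : w ∈ cuts c)
    (hw' : w' ∈ cuts c) : c ⁻¹' (c '' Set.Ico w w') = Set.Ico w w' := by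
  refine (Set.subset_preimage_image c _).antisymm' ?_
  rintro y ⟨x, hx, hxy⟩
  refine subset_of_connected_induce (hc (c x)) ⟨x, rfl, hx⟩ ?_ hxy.symm
  rintro z ⟨hzx, hz⟩ z' hzx' hadj
  have hcz : c z = c z' := hzx.trans hzx'.symm
  have hzw' : z + 1 = z' → z' ≠ w' := by
    rintro rfl rfl
    exact mem_cuts.1 hw' (by rwa [add_sub_cancel_right])
  have hzw : z - 1 = z' → z ≠ w := by
    rintro rfl rfl
    exact mem_cuts.1 hw hcz.symm
  have hadd := val_add_one_eq_ite z
  have hsub := val_sub_one_eq_ite z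
  simp only [Set.mem_Ico, Fin.le_def, Fin.lt_def, ne_eq, Fin.ext_iff] at hz hzw hzw' ⊢
  rcases ((SimpleGraph.fromRel_adj _ _ _).1 hadj).2 with h | h
  · grind
  · rw [← sub_eq_iff_eq_add] at h
    grind

lemma injOn_cuts (hc : ∀ j, ((cycleG n).induce (c ⁻¹' {j})).Connected) :
    Set.InjOn c (cuts c) := by
  have hle : ∀ w ∈ cuts c, ∀ w' ∈ cuts c, c w = c w' → w' ≤ w := by
    intro w hw w' hw' h
    by_contra! hlt
    have hmem : w' ∈ c ⁻¹' (c '' Set.Ico w w') := ⟨w, ⟨le_rfl, hlt⟩, h⟩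
    rw [preimage_image_Ico hc hw hw'] at hmem
    exact hmem.2.false
  exact fun w hw w' hw' h => (hle w' hw' w hw h.symm).antisymm (hle w hw w' hw' h)

lemma surjOn_cuts [Nontrivial κ] (hc : Function.Surjective c) :
    Set.SurjOn c (cuts c) Set.univ := by
  intro j _
  by_cases hlast : c (-1) = j
  · obtain ⟨j', hj'⟩ := exists_ne j
    obtain ⟨x, hx, -, hx1⟩ := exists_isGreatest_add_one_notMem (S := (c ⁻¹' {j})ᶜ)
      ((hc j').imp fun _ hy => by simpa [hy] using hj') (by simpa using hlast)
    obtain rfl : c (x + 1) = j := by simpa using hx1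
    exact ⟨x + 1, mem_cuts.2 (by simpa using hx.1), rfl⟩
  · obtain ⟨w, hw, hw1⟩ := exists_isLeast_sub_one_notMem (S := c ⁻¹' {j}) (hc j) hlast
    obtain rfl : c w = j := hw.1
    exact ⟨w, mem_cuts.2 hw1, rfl⟩

lemma card_cuts [Fintype κ] [Nontrivial κ]
    (hc : ∀ j, ((cycleG n).induce (c ⁻¹' {j})).Connected) :
    (cuts c).card = Fintype.card κ := by
  have hsurj : Function.Surjective c := fun j =>
    let ⟨x⟩ := (hc j).nonempty
    ⟨x, x.2⟩
  exact Finset.card_bij (fun w _ => c w) (by simp) (fun _ h _ h' => injOn_cuts hc h h')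
    fun j _ => (surjOn_cuts hsurj trivial).imp fun w hw => ⟨hw.1, hw.2⟩

lemma cuts_eq_empty [Subsingleton κ] : cuts c = ∅ :=
  Finset.eq_empty_of_forall_notMem fun _ hw => mem_cuts.1 hw (Subsingleton.elim _ _)

end Cycle

section ExponentVectors

variable {σ : Type*} [Fintype σ]

/-- The monomial with exponent vector `u`, as it is written in the generators of the toppling and
parking function ideals. -/
def expMonomial (R : Type*) [CommSemiring R] (u : σ → ℕ) : MvPolynomial σ R := ∏ i, X i ^ u i

variable {R : Type*} [CommSemiring R]

lemma expMonomial_add (u v : σ → ℕ) :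
    expMonomial R (u + v) = expMonomial R u * expMonomial R v := by
  simp only [expMonomial, Pi.add_apply, pow_add, Finset.prod_mul_distrib]

variable [DecidableEq σ]

/-- The exponent vector of the monomial `X w * X v`. -/
def pairVec (w v : σ) : σ → ℕ := Pi.single w 1 + Pi.single v 1

lemma expMonomial_pairVec (w v : σ) : expMonomial R (pairVec w v) = X w * X v := by
  have hsingle (x : σ) : expMonomial R (Pi.single x 1) = X x := by
    simp [expMonomial, Pi.single_apply, pow_ite]
  rw [pairVec, expMonomial_add, hsingle, hsingle]

lemma pairVec_dotProduct (w v : σ) (f : σ → ℕ) : pairVec w v ⬝ᵥ f = f w + f v := by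
  rw [pairVec, add_dotProduct, single_one_dotProduct, single_one_dotProduct]

end ExponentVectors

section CutMinorIdeal

variable {n : ℕ} [NeZero n] {κ : Type*}

/-- The ideal of the `2 × 2` minors, weighted by `ε`, of the matrix with columns `(x_w, x_{w-1})`,
for `w` running through the cuts of the partition. -/
def cutMinorIdeal (K : Type*) [Field K] (c : Fin n → κ) (ε : K) :
    Ideal (MvPolynomial (Fin n) K) :=
  EagonNorthcott.minorIdeal (fun w : cuts c => X w.1) (fun w => X (w.1 - 1)) (C ε)

variable {K : Type*} [Field K] {c : Fin n → κ} {ε : K}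

lemma cutMinorIdeal_le_iff {I : Ideal (MvPolynomial (Fin n) K)} :
    cutMinorIdeal K c ε ≤ I ↔ ∀ w ∈ cuts c, ∀ w' ∈ cuts c, w < w' →
      expMonomial K (pairVec w (w' - 1)) - C ε * expMonomial K (pairVec w' (w - 1)) ∈ I := by
  simp only [expMonomial_pairVec]
  refine Ideal.span_le.trans ⟨fun h w hw w' hw' hlt => ?_, ?_⟩
  · exact h ⟨⟨w, hw⟩, ⟨w', hw'⟩, hlt, by rw [EagonNorthcott.minor]⟩
  · rintro h _ ⟨s, t, hst, rfl⟩
    exact h s s.2 t t.2 hst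

lemma choose_card_cuts [Fintype κ] (hc : ∀ j, ((cycleG n).induce (c ⁻¹' {j})).Connected) {i : ℕ}
    (hi : i ≠ 0) : (cuts c).card.choose (i + 1) = (Fintype.card κ).choose (i + 1) := by
  cases subsingleton_or_nontrivial κ with
  | inl h =>
    have hκ := Fintype.card_le_one_iff_subsingleton.2 h
    rw [cuts_eq_empty, Nat.choose_eq_zero_of_lt (by simp),
      Nat.choose_eq_zero_of_lt (by omega)]
  | inr h => rw [card_cuts hc]

theorem nonempty_torKN_cutMinorIdeal_equiv [Fintype κ]
    (hc : ∀ j, ((cycleG n).induce (c ⁻¹' {j})).Connected) (hε : IsIdempotentElem ε) (i : ℕ) :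
    Nonempty (TorKN n K i (cutMinorIdeal K c ε) ≃ₗ[MvPolynomial (Fin n) K]
      (Fin (if i = 0 then 1 else i * (Fintype.card κ).choose (i + 1)) →
        MvPolynomial (Fin n) K ⧸
          (Ideal.span (Set.range X) : Ideal (MvPolynomial (Fin n) K)))) := by
  have hleads : EagonNorthcott.DiagonalLeads (fun w : cuts c => w.1) (fun w => w.1 - 1)
      (concaveWeight n) := fun _ _ => concaveWeight_add_lt
  have hne : ∀ w v w' : cuts c, w < v → v < w' → w.1 ≠ w'.1 - 1 := by
    intro w v w' hwv hvw' h
    have hval := val_sub_one_of_lt (Subtype.coe_lt_coe.2 hvw')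
    rw [← h] at hval
    simp only [← Subtype.coe_lt_coe, Fin.lt_def] at hwv hvw'
    omega
  have hbetti : (if i = 0 then 1 else i * (Fintype.card κ).choose (i + 1)) =
      if i = 0 then 1 else i * (Fintype.card (cuts c)).choose (i + 1) := by
    split_ifs with hi
    · rfl
    · rw [Fintype.card_coe, choose_card_cuts hc hi]
  rw [hbetti]
  exact hleads.nonempty_torKN_minorIdeal_equiv Subtype.val_injective
    ((sub_left_injective (b := (1 : Fin n))).comp Subtype.val_injective) hne hε i

end CutMinorIdeal

section ParkingIdeal

variable {n : ℕ} [NeZero n] {κ : Type*} {c : Fin n → κ}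

lemma outVec_Ico {w w' : Fin n} (h : w < w') : outVec n (Set.Ico w w') = pairVec w (w' - 1) := by
  funext x
  have hw' := val_sub_one_of_lt h
  have hadd := val_add_one_eq_ite x
  have hsub := val_sub_one_eq_ite x
  simp only [outVec, pairVec, Pi.add_apply, Pi.single_apply, Set.mem_Ico, Fin.le_def, Fin.lt_def,
    Fin.ext_iff] at h ⊢
  grind

lemma exists_pairVec_le_outVec {T : Set κ} (hT : (c ⁻¹' T).Nonempty) (hlast : c (-1) ∉ T) :
    ∃ w ∈ cuts c, ∃ w' ∈ cuts c, w < w' ∧ pairVec w (w' - 1) ≤ outVec n (c ⁻¹' T) := by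
  obtain ⟨w, hw, hw1⟩ := exists_isLeast_sub_one_notMem hT hlast
  obtain ⟨x, hx, hlt, hx1⟩ := exists_isGreatest_add_one_notMem hT hlast
  have hwc : w ∈ cuts c := mem_cuts.2 fun h => hw1 (h.symm ▸ hw.1 : c (w - 1) ∈ T)
  have hxc : x + 1 ∈ cuts c := mem_cuts.2 fun h =>
    hx1 (h ▸ (add_sub_cancel_right x 1).symm ▸ hx.1 : c (x + 1) ∈ T)
  refine ⟨w, hwc, x + 1, hxc, (hw.2 hx.1).trans_lt hlt, fun y => ?_⟩
  have hwT := hw.1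
  have hxT := hx.1
  simp only [add_sub_cancel_right, pairVec, Pi.add_apply, Pi.single_apply, outVec]
  grind

theorem gparkIdeal_eq_cutMinorIdeal {k : ℕ} {K : Type*} [Field K] {c : Fin n → Fin k}
    (hc : ∀ j, ((cycleG n).induce (c ⁻¹' {j})).Connected) :
    gparkIdeal n k K (fun j => c ⁻¹' {j}) (c (-1)) = cutMinorIdeal K c 0 := by
  refine le_antisymm (Ideal.span_le.2 ?_) (cutMinorIdeal_le_iff.2 fun w hw w' hw' hlt => ?_)
  · rintro _ ⟨_, ⟨⟨T, rfl⟩, hconn⟩, hsink, rfl⟩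
    rw [Set.biUnion_preimage_singleton] at hconn hsink ⊢
    obtain ⟨⟨x, hx⟩⟩ := hconn.nonempty
    obtain ⟨w, hw, w', hw', hlt, hle⟩ := exists_pairVec_le_outVec ⟨x, hx⟩
      fun hlast => hsink (Set.preimage_mono (Set.singleton_subset_iff.2 hlast))
    have hgen := cutMinorIdeal_le_iff.1 (le_refl (cutMinorIdeal K c 0)) w hw w' hw' hlt
    rw [map_zero, zero_mul, sub_zero] at hgen
    change expMonomial K (outVec n (c ⁻¹' T)) ∈ cutMinorIdeal K c 0
    rw [← tsub_add_cancel_of_le hle, expMonomial_add]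
    exact Ideal.mul_mem_left _ _ hgen
  · rw [map_zero, zero_mul, sub_zero]
    refine Ideal.subset_span ⟨Set.Ico w w', ⟨⟨c '' Set.Ico w w', ?_⟩, connected_induce_Ico hlt⟩,
      fun hsub => ?_, ?_⟩
    · rw [Set.biUnion_preimage_singleton, preimage_image_Ico hc hw hw']
    · have hlast : (-1 : Fin n) < w' := (hsub (Set.mem_preimage.2 rfl)).2
      rw [Fin.lt_def, val_neg_one] at hlast
      omega
    · rw [outMono, outVec_Ico hlt, expMonomial]

end ParkingIdeal

section Toppling

variable {n : ℕ} [NeZero n] {κ : Type*}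

/-- The Laplacian operator of the cycle, in a form that makes sense for every `n`; the matrix
`cycLap n` represents it for `3 ≤ n`. -/
def cycLaplacian (n : ℕ) [NeZero n] : (Fin n → ℤ) →ₗ[ℤ] Fin n → ℤ where
  toFun g x := 2 * g x - g (x - 1) - g (x + 1)
  map_add' g g' := by
    ext x
    simp only [Pi.add_apply]
    ring
  map_smul' a g := by
    ext x
    simp only [Pi.smul_apply, smul_eq_mul, RingHom.id_apply]
    ring

lemma cycLaplacian_apply (g : Fin n → ℤ) (x : Fin n) :
    cycLaplacian n g x = 2 * g x - g (x - 1) - g (x + 1) := rfl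

lemma sum_smul_cycLap (hn : 3 ≤ n) (g : Fin n → ℤ) : ∑ x, g x • cycLap n x = cycLaplacian n g := by
  funext y
  have hterm (x : Fin n) : g x * cycLap n x y =
      (if x = y then 2 * g x else 0) - (if x = y - 1 then g x else 0) -
        if x = y + 1 then g x else 0 := by
    have hadd := val_add_one_eq_ite y
    have hsub := val_sub_one_eq_ite y
    have hy : y = x + 1 ↔ x = y - 1 := by rw [eq_sub_iff_add_eq, eq_comm]
    simp only [cycLap, hy, Fin.ext_iff]
    grind
  simp only [Finset.sum_apply, Pi.smul_apply, smul_eq_mul, hterm, Finset.sum_sub_distrib,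
    Finset.sum_ite_eq', Finset.mem_univ, if_true, cycLaplacian_apply]

/-- The lattice generated by the firings of whole parts. -/
def firingLattice (c : Fin n → κ) : Submodule ℤ (Fin n → ℤ) :=
  LinearMap.range (cycLaplacian n ∘ₗ LinearMap.funLeft ℤ ℤ c)

lemma span_bPart_eq_firingLattice (hn : 3 ≤ n) {k : ℕ} (c : Fin n → Fin k) :
    Submodule.span ℤ (Set.range fun j => bPart n (c ⁻¹' {j})) = firingLattice c := by
  have hsum (h : Fin k → ℤ) : ∑ j, h j • bPart n (c ⁻¹' {j}) = cycLaplacian n (h ∘ c) := by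
    simp only [bPart, Finset.smul_sum, smul_ite, smul_zero, Set.mem_preimage,
      Set.mem_singleton_iff]
    rw [Finset.sum_comm, ← sum_smul_cycLap hn]
    simp only [Finset.sum_ite_eq, Finset.mem_univ, if_true, Function.comp_apply]
  ext v
  simp only [Submodule.mem_span_range_iff_exists_fun, hsum]
  rfl

/-- Two chip configurations are equivalent when firing whole parts turns one into the other. -/
def ChipEquiv (c : Fin n → κ) (u v : Fin n → ℕ) : Prop :=
  ((fun x => (u x : ℤ)) - fun x => (v x : ℤ)) ∈ firingLattice c

variable {c : Fin n → κ} {u v r : Fin n → ℕ}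

lemma chipEquiv_iff :
    ChipEquiv c u v ↔ ∃ h : κ → ℤ, ∀ x, (u x : ℤ) - v x = cycLaplacian n (h ∘ c) x :=
  exists_congr fun _ => funext_iff.trans (forall_congr' fun _ => eq_comm)

lemma ChipEquiv.refl (c : Fin n → κ) (u : Fin n → ℕ) : ChipEquiv c u u := by
  simp [ChipEquiv]

lemma ChipEquiv.symm (h : ChipEquiv c u v) : ChipEquiv c v u := by
  simpa only [ChipEquiv, neg_sub] using neg_mem h

lemma ChipEquiv.trans (h : ChipEquiv c u v) (h' : ChipEquiv c v r) : ChipEquiv c u r := by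
  simpa only [ChipEquiv, sub_add_sub_cancel] using add_mem h h'

lemma ChipEquiv.add_left (r : Fin n → ℕ) (h : ChipEquiv c u v) :
    ChipEquiv c (r + u) (r + v) := by
  rw [chipEquiv_iff] at h ⊢
  simpa only [Pi.add_apply, Nat.cast_add, add_sub_add_left_eq_sub] using h

lemma chipEquiv_pairVec (hc : ∀ j, ((cycleG n).induce (c ⁻¹' {j})).Connected) {w w' : Fin n}
    (hw : w ∈ cuts c) (hw' : w' ∈ cuts c) (hlt : w < w') :
    ChipEquiv c (pairVec w (w' - 1)) (pairVec w' (w - 1)) := by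
  classical
  refine chipEquiv_iff.2 ⟨fun j => if j ∈ c '' Set.Ico w w' then 1 else 0, fun x => ?_⟩
  have hmem (y : Fin n) : c y ∈ c '' Set.Ico w w' ↔ y ∈ Set.Ico w w' := by
    rw [← Set.mem_preimage, preimage_image_Ico hc hw hw']
  have hstep (y : Fin n) : ((if y ∈ Set.Ico w w' then 1 else 0) -
      if y - 1 ∈ Set.Ico w w' then 1 else 0 : ℤ) =
        (if y = w then 1 else 0) - if y = w' then 1 else 0 := by
    have hsub := val_sub_one_eq_ite y
    simp only [Set.mem_Ico, Fin.le_def, Fin.lt_def, Fin.ext_iff] at hlt ⊢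
    grind
  have hx := hstep x
  have hx1 := hstep (x + 1)
  simp only [add_sub_cancel_right, ← eq_sub_iff_add_eq] at hx1
  simp only [cycLaplacian_apply, Function.comp_apply, hmem, pairVec, Pi.add_apply, Pi.single_apply]
  push_cast
  linarith

/-- A configuration is reduced when its monomial is divisible by no leading monomial of the
minors generating `cutMinorIdeal`. -/
def IsCutReduced (c : Fin n → κ) (u : Fin n → ℕ) : Prop :=
  ∀ w ∈ cuts c, ∀ w' ∈ cuts c, w < w' → ¬ pairVec w (w' - 1) ≤ u

lemma exists_isCutReduced (K : Type*) [Field K]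
    (hc : ∀ j, ((cycleG n).induce (c ⁻¹' {j})).Connected) (u : Fin n → ℕ) :
    ∃ v, IsCutReduced c v ∧ ChipEquiv c u v ∧
      expMonomial K u - expMonomial K v ∈ cutMinorIdeal K c 1 := by
  induction hN : u ⬝ᵥ concaveWeight n using Nat.strong_induction_on generalizing u with
  | _ N ih =>
    subst hN
    by_cases hu : IsCutReduced c u
    · exact ⟨u, hu, .refl c u, by simp⟩
    simp only [IsCutReduced, not_forall, not_not] at hu
    obtain ⟨w, hw, w', hw', hlt, hle⟩ := hu
    obtain ⟨r, rfl⟩ := exists_add_of_le hle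
    rw [add_comm (pairVec _ _)] at ih ⊢
    obtain ⟨v, hv, hequiv, hmem⟩ := ih _ (by
      simp only [add_dotProduct, pairVec_dotProduct]
      exact Nat.add_lt_add_left (concaveWeight_add_lt hlt) _) (r + pairVec w' (w - 1)) rfl
    refine ⟨v, hv, ((chipEquiv_pairVec hc hw hw' hlt).add_left r).trans hequiv, ?_⟩
    have hgen := cutMinorIdeal_le_iff.1 (le_refl (cutMinorIdeal K c 1)) w hw w' hw' hlt
    have hsum := add_mem (Ideal.mul_mem_left _ (expMonomial K r) hgen) hmem
    simpa only [expMonomial_add, map_one, one_mul, mul_sub, sub_add_sub_cancel] using hsum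

lemma outVec_argmax_le {g : Fin n → ℤ} (h : ∀ x, (u x : ℤ) - v x = cycLaplacian n g x) :
    outVec n {x | ∀ y, g y ≤ g x} ≤ u := by
  intro x
  have hx := h x
  rw [cycLaplacian_apply] at hx
  by_cases hmax : ∀ y, g y ≤ g x
  · have hnot (z : Fin n) (hz : ¬ ∀ y, g y ≤ g z) : g z < g x :=
      lt_of_not_ge fun hle => hz fun y => (hmax y).trans hle
    have hadd := hmax (x + 1)
    have hsub := hmax (x - 1)
    have hadd' := hnot (x + 1)
    have hsub' := hnot (x - 1)
    simp only [outVec, Set.mem_ofPred_eq, if_pos hmax]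
    split_ifs <;> grind
  · simp only [outVec, Set.mem_ofPred_eq, if_neg hmax, Nat.zero_le]

lemma IsCutReduced.le_apply_neg_one (hu : IsCutReduced c u) {h : κ → ℤ}
    (huv : ∀ x, (u x : ℤ) - v x = cycLaplacian n (h ∘ c) x) (x : Fin n) : h (c x) ≤ h (c (-1)) := by
  by_contra! hx
  obtain ⟨m, hm⟩ := Finite.exists_max (h ∘ c)
  obtain ⟨w, hw, w', hw', hlt, hle⟩ := exists_pairVec_le_outVec
    (T := {j | ∀ y, h (c y) ≤ h j}) ⟨m, hm⟩ fun hlast => hx.not_ge (hlast x)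
  exact hu w hw w' hw' hlt (hle.trans (outVec_argmax_le huv))

lemma IsCutReduced.eq_of_chipEquiv (hu : IsCutReduced c u) (hv : IsCutReduced c v)
    (huv : ChipEquiv c u v) : u = v := by
  obtain ⟨h, hh⟩ := chipEquiv_iff.1 huv
  have hneg (x : Fin n) : (v x : ℤ) - u x = cycLaplacian n (-h ∘ c) x := by
    have := hh x
    simp only [cycLaplacian_apply, Function.comp_apply, Pi.neg_apply] at this ⊢
    linarith
  have hconst (x : Fin n) : h (c x) = h (c (-1)) :=
    (hu.le_apply_neg_one hh x).antisymm (neg_le_neg_iff.1 (hv.le_apply_neg_one (h := -h) hneg x))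
  funext x
  have hx := hh x
  simp only [cycLaplacian_apply, Function.comp_apply, hconst] at hx
  omega

theorem topplingPar_eq_cutMinorIdeal (hn : 3 ≤ n) {k : ℕ} {K : Type*} [Field K]
    {c : Fin n → Fin k} (hc : ∀ j, ((cycleG n).induce (c ⁻¹' {j})).Connected) :
    topplingPar n k K (fun j => c ⁻¹' {j}) = cutMinorIdeal K c 1 := by
  rw [topplingPar, span_bPart_eq_firingLattice hn]
  refine le_antisymm (Ideal.span_le.2 ?_) (cutMinorIdeal_le_iff.2 fun w hw w' hw' hlt => ?_)
  · rintro _ ⟨u, v, huv, rfl⟩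
    obtain ⟨u', hu', huu', hu⟩ := exists_isCutReduced K hc u
    obtain ⟨v', hv', hvv', hv⟩ := exists_isCutReduced K hc v
    obtain rfl := hu'.eq_of_chipEquiv hv' (huu'.symm.trans (ChipEquiv.trans huv hvv'))
    have hsub := sub_mem hu hv
    rwa [sub_sub_sub_cancel_right] at hsub
  · rw [map_one, one_mul]
    exact Ideal.subset_span ⟨_, _, chipEquiv_pairVec hc hw hw' hlt, rfl⟩

end Toppling

/-- For a parcycle `(C_n, Π)` with `k` parts and sink `V_k`, the Betti
numbers of `R_n/I_Π` and `R_n/M_Π` agree; `β_0 = 1` and `β_i = i·C(k, i+1)` for `i ≥ 1`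
(a Betti number `β` is expressed by `Tor_i ≅ (R_n/𝔪)^β` as `R_n`-modules, `𝔪` the
irrelevant maximal ideal). -/
theorem statement_10 (K : Type*) [Field K] (n k : ℕ) [NeZero n] (hn : 3 ≤ n) (hk : 1 ≤ k)
    (V : Fin k → Set (Fin n))
    (hcover : ∀ x : Fin n, ∃ j, x ∈ V j)
    (hdisj : ∀ j₁ j₂ : Fin k, j₁ ≠ j₂ → Disjoint (V j₁) (V j₂))
    (hconn : ∀ j, ((cycleG n).induce (V j)).Connected)
    (hsink : (⟨n - 1, by omega⟩ : Fin n) ∈ V ⟨k - 1, by omega⟩) :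
    (∀ i : ℕ,
      Nonempty ((TorKN n K i (topplingPar n k K V)) ≃ₗ[MvPolynomial (Fin n) K]
        (TorKN n K i (gparkIdeal n k K V ⟨k - 1, by omega⟩)))) ∧
    (∀ i : ℕ,
      Nonempty ((TorKN n K i (topplingPar n k K V)) ≃ₗ[MvPolynomial (Fin n) K]
        (Fin (if i = 0 then 1 else i * Nat.choose k (i + 1)) →
          MvPolynomial (Fin n) K ⧸ (Ideal.span (Set.range X) :
            Ideal (MvPolynomial (Fin n) K))))) ∧
    (∀ i : ℕ,
      Nonempty ((TorKN n K i (gparkIdeal n k K V ⟨k - 1, by omega⟩))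
        ≃ₗ[MvPolynomial (Fin n) K]
        (Fin (if i = 0 then 1 else i * Nat.choose k (i + 1)) →
          MvPolynomial (Fin n) K ⧸ (Ideal.span (Set.range X) :
            Ideal (MvPolynomial (Fin n) K))))) := by
  choose c hVc using hcover
  obtain rfl : V = fun j => c ⁻¹' {j} := funext fun j => Set.ext fun x =>
    ⟨fun hx => by_contra fun hne => Set.disjoint_left.1 (hdisj (c x) j hne) (hVc x) hx,
      fun hx => hx ▸ hVc x⟩
  have hlast : c (-1) = ⟨k - 1, by omega⟩ := by
    have hval : (-1 : Fin n) = ⟨n - 1, by omega⟩ := Fin.ext val_neg_one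
    rwa [hval]
  have hbetti {ε : K} (hε : IsIdempotentElem ε) (i : ℕ) :
      Nonempty (TorKN n K i (cutMinorIdeal K c ε) ≃ₗ[MvPolynomial (Fin n) K]
        (Fin (if i = 0 then 1 else i * k.choose (i + 1)) → MvPolynomial (Fin n) K ⧸
          (Ideal.span (Set.range X) : Ideal (MvPolynomial (Fin n) K)))) := by
    have h := nonempty_torKN_cutMinorIdeal_equiv hconn hε i
    rwa [Fintype.card_fin] at h
  rw [← hlast, topplingPar_eq_cutMinorIdeal hn hconn, gparkIdeal_eq_cutMinorIdeal hconn]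
  exact ⟨fun i => Nonempty.map2 (fun a b => a.trans b.symm) (hbetti .one i) (hbetti .zero i),
    hbetti .one, hbetti .zero⟩
end
end

section
/- Let A be a 2×m matrix each of whose entries is of the form c·x_i for some nonzero scalar c ∈ K and some variable x_i of R_p, such that within each row of A the entries involve pairwise distinct variables. Suppose the variable x_a occurs in exactly one entry of A, namely k_1 x_a in position (1,α), and the variable x_b occurs in exactly one entry of A, namely k_2 x_b in position (2,β), with α < β. Assume further that for all column indices γ and δ with γ < α and β < δ, the variable occurring in position (2,γ) is different from the variable occurring in position (1,δ). Let M ⊆ R_p be the ideal generated by all anti-diagonal products A_{2,i}·A_{1,j} with i < j. Then k_1 x_a − k_2 x_b is a nonzerodivisor on R_p/M; that is, for every f ∈ R_p, if (k_1 x_a − k_2 x_b)·f ∈ M then f ∈ M. -/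
/-!
For a monomial ideal `I`, distinct variables `a`, `b` and nonzerodivisors `k₁`, `k₂`, the binomial
`k₁ a - k₂ b` is a nonzerodivisor modulo `I` as soon as `(I : a) ∩ (I : b) = I`. Indeed this
condition propagates to `(I : a ^ ∞) ∩ (I : b ^ ∞) = I`, and `(k₁ a - k₂ b) f ∈ I` forces `f` into
both saturations: if `x ^ u * a ^ n ∉ I` for all `n`, then comparing coefficients at `x ^ u * a`
expresses the coefficient of `f` at `x ^ u` through the one at `x ^ u * a / b`, and one descends on
the exponent of `b`.

For the antidiagonal ideal, let `x ^ u ∉ I`. If `x ^ u * a ∈ I`, then `x ^ u` involves a variable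
of the second row to the left of column `α`; if `x ^ u * b ∈ I`, then it involves a variable of the
first row to the right of column `β`. These two variables are distinct, so their product is a
generator dividing `x ^ u`, a contradiction.
-/

noncomputable section

open MvPolynomial

theorem mem_upperSet_of_add_nsmul_mem {M : Type*} [AddCommMonoid M] [Preorder M]
    [CanonicallyOrderedAdd M] {D : UpperSet M} {a b : M}
    (h : ∀ u, u + a ∈ D → u + b ∈ D → u ∈ D) (m n : ℕ) {u : M}
    (ha : u + m • a ∈ D) (hb : u + n • b ∈ D) : u ∈ D := by
  induction m generalizing n u with
  | zero => simpa only [zero_nsmul, add_zero] using ha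
  | succ m ihm =>
    induction n generalizing u with
    | zero => simpa only [zero_nsmul, add_zero] using hb
    | succ n ihn =>
      refine h u (ihm (n + 1) ?_ ?_) (ihn ?_ ?_)
      · rwa [add_assoc, ← succ_nsmul']
      · rw [add_right_comm]
        exact D.upper le_self_add hb
      · rw [add_right_comm]
        exact D.upper le_self_add ha
      · rwa [add_assoc, ← succ_nsmul']

section Finsupp

variable {σ M : Type*} [AddCommMonoid M] [PartialOrder M] [CanonicallyOrderedAdd M]

theorem single_add_single_le {y x : σ} (hyx : y ≠ x) {k l : M} {u : σ →₀ M} (hy : k ≤ u y)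
    (hx : l ≤ u x) : Finsupp.single y k + Finsupp.single x l ≤ u := by
  classical
  intro c
  obtain rfl | hcy := eq_or_ne c y
  · simpa [hyx] using hy
  obtain rfl | hcx := eq_or_ne c x
  · simpa [hcy] using hx
  · simp [hcy, hcx]

theorem le_of_le_add_single {s u : σ →₀ M} {a : σ} {k : M} (hs : s a = 0)
    (h : s ≤ u + Finsupp.single a k) : s ≤ u := by
  classical
  intro c
  obtain rfl | hc := eq_or_ne c a
  · simp only [hs, zero_le]
  · simpa [hc] using h c

end Finsupp

theorem span_le_span_of_forall_exists_dvd {A : Type*} [CommSemiring A] {s t : Set A}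
    (h : ∀ x ∈ s, ∃ y ∈ t, y ∣ x) : Ideal.span s ≤ Ideal.span t :=
  Ideal.span_le.2 fun x hx =>
    let ⟨_, hy, hyx⟩ := h x hx
    Ideal.mem_of_dvd _ hyx (Ideal.subset_span hy)

section MonomialIdeal

variable {R σ : Type*} [CommRing R]

theorem mem_span_monomial_iff_forall_coeff_eq_zero {S : Set (σ →₀ ℕ)}
    {f : MvPolynomial σ R} :
    f ∈ Ideal.span ((fun s => monomial s (1 : R)) '' S) ↔
      ∀ u ∉ upperClosure S, coeff u f = 0 := by
  simp only [mem_ideal_span_monomial_image, mem_support_iff, mem_upperClosure]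
  exact forall_congr' fun u => not_imp_comm

theorem coeff_add_single_binomial_mul_of_eq_zero {a b : σ} (hab : a ≠ b) (k₁ k₂ : R)
    (f : MvPolynomial σ R) {u : σ →₀ ℕ} (hu : u b = 0) :
    coeff (u + Finsupp.single a 1) ((C k₁ * X a - C k₂ * X b) * f) = k₁ * coeff u f := by
  classical
  have hb : b ∉ (u + Finsupp.single a 1).support := by simp [hu, hab.symm]
  rw [sub_mul, coeff_sub, mul_assoc, mul_assoc, coeff_C_mul, coeff_C_mul, coeff_X_mul' _ b,
    if_neg hb, mul_zero, sub_zero, add_comm u, coeff_X_mul]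

theorem coeff_add_single_add_single_binomial_mul (a b : σ) (k₁ k₂ : R) (f : MvPolynomial σ R)
    (u : σ →₀ ℕ) :
    coeff (u + Finsupp.single a 1 + Finsupp.single b 1) ((C k₁ * X a - C k₂ * X b) * f) =
      k₁ * coeff (u + Finsupp.single b 1) f - k₂ * coeff (u + Finsupp.single a 1) f := by
  have coeff_X_a : coeff (u + Finsupp.single a 1 + Finsupp.single b 1) (X a * f) =
      coeff (u + Finsupp.single b 1) f := by
    rw [add_right_comm, add_comm, coeff_X_mul]
  have coeff_X_b : coeff (u + Finsupp.single a 1 + Finsupp.single b 1) (X b * f) =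
      coeff (u + Finsupp.single a 1) f := by
    rw [add_comm, coeff_X_mul]
  rw [sub_mul, coeff_sub, mul_assoc, mul_assoc, coeff_C_mul, coeff_C_mul, coeff_X_a, coeff_X_b]

theorem coeff_eq_zero_of_add_nsmul_single_notMem {a b : σ} (hab : a ≠ b) {k₁ k₂ : R}
    (hk₁ : k₁ ∈ nonZeroDivisors R) {D : UpperSet (σ →₀ ℕ)} {f : MvPolynomial σ R}
    (hf : ∀ u ∉ D, coeff u ((C k₁ * X a - C k₂ * X b) * f) = 0) {u : σ →₀ ℕ}
    (hu : ∀ n : ℕ, u + n • Finsupp.single a 1 ∉ D) : coeff u f = 0 := by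
  induction hn : u b generalizing u with
  | zero =>
    have h := hf _ (hu 1)
    rw [one_nsmul, coeff_add_single_binomial_mul_of_eq_zero hab k₁ k₂ f hn] at h
    exact (mul_left_mem_nonZeroDivisors_eq_zero_iff hk₁).1 h
  | succ n ih =>
    obtain ⟨w, rfl⟩ : ∃ w, u = w + Finsupp.single b 1 :=
      ⟨u - Finsupp.single b 1, (tsub_add_cancel_of_le (Finsupp.single_le_iff.2 (by lia))).symm⟩
    have hwa (m : ℕ) : w + Finsupp.single a 1 + m • Finsupp.single a 1 ∉ D := by
      intro hm
      refine hu (m + 1) (D.upper ?_ hm)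
      rw [add_assoc, ← succ_nsmul']
      gcongr
      exact le_self_add
    have hwb : (w + Finsupp.single a 1 : σ →₀ ℕ) b = n := by
      simpa [hab] using hn
    have coeff_wa : coeff (w + Finsupp.single a 1) f = 0 := ih hwa hwb
    have h := hf _ (hu 1)
    rw [one_nsmul, add_right_comm, coeff_add_single_add_single_binomial_mul, coeff_wa, mul_zero,
      sub_zero] at h
    exact (mul_left_mem_nonZeroDivisors_eq_zero_iff hk₁).1 h

theorem mem_span_monomial_of_binomial_mul_mem {a b : σ} (hab : a ≠ b) {k₁ k₂ : R}
    (hk₁ : k₁ ∈ nonZeroDivisors R) (hk₂ : k₂ ∈ nonZeroDivisors R) {S : Set (σ →₀ ℕ)}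
    (hS : ∀ u, u + Finsupp.single a 1 ∈ upperClosure S →
      u + Finsupp.single b 1 ∈ upperClosure S → u ∈ upperClosure S)
    {f : MvPolynomial σ R}
    (hf : (C k₁ * X a - C k₂ * X b) * f ∈ Ideal.span ((fun s => monomial s (1 : R)) '' S)) :
    f ∈ Ideal.span ((fun s => monomial s (1 : R)) '' S) := by
  rw [mem_span_monomial_iff_forall_coeff_eq_zero] at hf ⊢
  have hf' : ∀ u ∉ upperClosure S, coeff u ((C k₂ * X b - C k₁ * X a) * f) = 0 := by
    intro u hu
    rw [← neg_sub, neg_mul, coeff_neg, hf u hu, neg_zero]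
  intro u hu
  by_cases ha : ∀ m : ℕ, u + m • Finsupp.single a 1 ∉ upperClosure S
  · exact coeff_eq_zero_of_add_nsmul_single_notMem hab hk₁ hf ha
  · push Not at ha
    obtain ⟨m, hm⟩ := ha
    exact coeff_eq_zero_of_add_nsmul_single_notMem hab.symm hk₂ hf' fun n hn =>
      hu (mem_upperSet_of_add_nsmul_mem hS m n hm hn)

end MonomialIdeal

section Antidiagonal

variable {R σ ι : Type*}

/-- The ideal generated by the antidiagonal products `A 1 i * A 0 j`, `i < j`, of the two-rowed
matrix with entries `A r c = cf r c * X (v r c)`. The columns are indexed by any type with `<`. -/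
def antidiagonalIdeal [CommSemiring R] [LT ι] (cf : Fin 2 → ι → R) (v : Fin 2 → ι → σ) :
    Ideal (MvPolynomial σ R) :=
  Ideal.span {g | ∃ i j : ι, i < j ∧ g = (C (cf 1 i) * X (v 1 i)) * (C (cf 0 j) * X (v 0 j))}

/-- The exponents of the antidiagonal products of a two-rowed matrix with variable `v r c` in
position `(r, c)`, so that the monomial ideal they generate can be studied without coefficients. -/
def antidiagonalExponents [LT ι] (v : Fin 2 → ι → σ) : Set (σ →₀ ℕ) :=
  {s | ∃ i j : ι, i < j ∧ s = Finsupp.single (v 1 i) 1 + Finsupp.single (v 0 j) 1}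

theorem antidiagonalIdeal_eq_span_monomial [CommSemiring R] [LT ι] {cf : Fin 2 → ι → R}
    (hcf : ∀ r c, IsUnit (cf r c)) (v : Fin 2 → ι → σ) :
    antidiagonalIdeal cf v =
      Ideal.span ((fun s => monomial s (1 : R)) '' antidiagonalExponents v) := by
  have product_eq (i j : ι) : (C (cf 1 i) * X (v 1 i)) * (C (cf 0 j) * X (v 0 j)) =
      monomial (Finsupp.single (v 1 i) 1 + Finsupp.single (v 0 j) 1) (cf 1 i * cf 0 j) := by
    simp only [C_mul_X_eq_monomial, monomial_mul]
  apply le_antisymm <;> apply span_le_span_of_forall_exists_dvd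
  · rintro _ ⟨i, j, hij, rfl⟩
    refine ⟨_, ⟨_, ⟨i, j, hij, rfl⟩, rfl⟩, ?_⟩
    rw [product_eq]
    exact monomial_dvd_monomial.2 ⟨.inr le_rfl, one_dvd _⟩
  · rintro _ ⟨_, ⟨i, j, hij, rfl⟩, rfl⟩
    refine ⟨_, ⟨i, j, hij, rfl⟩, ?_⟩
    rw [product_eq]
    exact monomial_dvd_monomial.2 ⟨.inr le_rfl, ((hcf 1 i).mul (hcf 0 j)).dvd⟩

variable {v : Fin 2 → ι → σ} {α β : ι}

theorem exists_lt_of_add_single_mem_upperClosure_antidiagonalExponents [LT ι]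
    (hα : ∀ r c, v r c = v 0 α → r = 0 ∧ c = α) {u : σ →₀ ℕ}
    (hu : u ∉ upperClosure (antidiagonalExponents v))
    (h : u + Finsupp.single (v 0 α) 1 ∈ upperClosure (antidiagonalExponents v)) :
    ∃ i < α, 1 ≤ u (v 1 i) := by
  obtain ⟨_, ⟨i, j, hij, rfl⟩, hle⟩ := h
  have hi : v 1 i ≠ v 0 α := fun h => one_ne_zero (hα 1 i h).1
  have hj : v 0 j = v 0 α := by
    by_contra hj
    exact hu ⟨_, ⟨i, j, hij, rfl⟩, le_of_le_add_single (by simp [hi, hj]) hle⟩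
  obtain rfl : j = α := (hα 0 j hj).2
  exact ⟨i, hij, Finsupp.single_le_iff.1 (le_of_add_le_add_right hle)⟩

theorem exists_gt_of_add_single_mem_upperClosure_antidiagonalExponents [LT ι]
    (hβ : ∀ r c, v r c = v 1 β → r = 1 ∧ c = β) {u : σ →₀ ℕ}
    (hu : u ∉ upperClosure (antidiagonalExponents v))
    (h : u + Finsupp.single (v 1 β) 1 ∈ upperClosure (antidiagonalExponents v)) :
    ∃ j > β, 1 ≤ u (v 0 j) := by
  obtain ⟨_, ⟨i, j, hij, rfl⟩, hle⟩ := h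
  have hj : v 0 j ≠ v 1 β := fun h => zero_ne_one (hβ 0 j h).1
  have hi : v 1 i = v 1 β := by
    by_contra hi
    exact hu ⟨_, ⟨i, j, hij, rfl⟩, le_of_le_add_single (by simp [hi, hj]) hle⟩
  obtain rfl : i = β := (hβ 1 i hi).2
  rw [add_comm] at hle
  exact ⟨j, hij, Finsupp.single_le_iff.1 (le_of_add_le_add_right hle)⟩

theorem mem_upperClosure_antidiagonalExponents_of_add_single_mem [Preorder ι]
    (hα : ∀ r c, v r c = v 0 α → r = 0 ∧ c = α) (hβ : ∀ r c, v r c = v 1 β → r = 1 ∧ c = β)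
    (hαβ : α < β) (hsep : ∀ γ δ, γ < α → β < δ → v 1 γ ≠ v 0 δ) (u : σ →₀ ℕ)
    (ha : u + Finsupp.single (v 0 α) 1 ∈ upperClosure (antidiagonalExponents v))
    (hb : u + Finsupp.single (v 1 β) 1 ∈ upperClosure (antidiagonalExponents v)) :
    u ∈ upperClosure (antidiagonalExponents v) := by
  by_contra hu
  obtain ⟨i, hiα, hi⟩ := exists_lt_of_add_single_mem_upperClosure_antidiagonalExponents hα hu ha
  obtain ⟨j, hβj, hj⟩ := exists_gt_of_add_single_mem_upperClosure_antidiagonalExponents hβ hu hb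
  exact hu ⟨_, ⟨i, j, hiα.trans (hαβ.trans hβj), rfl⟩,
    single_add_single_le (hsep i j hiα hβj) hi hj⟩

theorem statement_12_general [CommRing R] [Preorder ι] {cf : Fin 2 → ι → R}
    (hcf : ∀ r c, IsUnit (cf r c)) (hα : ∀ r c, v r c = v 0 α → r = 0 ∧ c = α)
    (hβ : ∀ r c, v r c = v 1 β → r = 1 ∧ c = β) (hαβ : α < β)
    (hsep : ∀ γ δ, γ < α → β < δ → v 1 γ ≠ v 0 δ) (f : MvPolynomial σ R)
    (hf : (C (cf 0 α) * X (v 0 α) - C (cf 1 β) * X (v 1 β)) * f ∈ antidiagonalIdeal cf v) :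
    f ∈ antidiagonalIdeal cf v := by
  have hab : v 0 α ≠ v 1 β := fun h => zero_ne_one (hβ 0 α h).1
  rw [antidiagonalIdeal_eq_span_monomial hcf] at hf ⊢
  exact mem_span_monomial_of_binomial_mul_mem hab (hcf 0 α).mem_nonZeroDivisors
    (hcf 1 β).mem_nonZeroDivisors
    (mem_upperClosure_antidiagonalExponents_of_add_single_mem hα hβ hαβ hsep) hf

end Antidiagonal

/-- Let `A` be a `2 × m` matrix whose `(r,c)` entry is `cf r c • x_{v r c}`
with all `cf r c ≠ 0`, the variables in each row pairwise distinct, `x_a` occurring only in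
position `(0, α)`, `x_b` occurring only in position `(1, β)`, `α < β`, and such that for
`γ < α < β < δ` the variables in positions `(1, γ)` and `(0, δ)` differ.  If `M` is the
ideal generated by the anti-diagonal products `A_{1,i}·A_{0,j}` (`i < j`), then
`cf 0 α • x_a - cf 1 β • x_b` is a nonzerodivisor on `R_p/M`. -/
theorem statement_12 (K : Type*) [Field K] (p m : ℕ) (hp : 1 ≤ p) (hm : 2 ≤ m)
    (cf : Fin 2 → Fin m → K) (v : Fin 2 → Fin m → Fin p)
    (hcf : ∀ r c, cf r c ≠ 0)
    (hrow : ∀ r : Fin 2, Function.Injective (v r))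
    (a b : Fin p) (α β : Fin m)
    (ha : v 0 α = a) (haonce : ∀ r c, v r c = a → r = 0 ∧ c = α)
    (hb : v 1 β = b) (hbonce : ∀ r c, v r c = b → r = 1 ∧ c = β)
    (hαβ : α < β)
    (hsep : ∀ γ δ : Fin m, γ < α → β < δ → v 1 γ ≠ v 0 δ) :
    ∀ f : MvPolynomial (Fin p) K,
      (C (cf 0 α) * X a - C (cf 1 β) * X b) * f ∈
        Ideal.span { g : MvPolynomial (Fin p) K | ∃ i j : Fin m, i < j ∧
          g = (C (cf 1 i) * X (v 1 i)) * (C (cf 0 j) * X (v 0 j)) } →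
      f ∈ Ideal.span { g : MvPolynomial (Fin p) K | ∃ i j : Fin m, i < j ∧
          g = (C (cf 1 i) * X (v 1 i)) * (C (cf 0 j) * X (v 0 j)) } := by
  subst ha hb
  exact statement_12_general (fun r c => (hcf r c).isUnit) haonce hbonce hαβ hsep
end
end
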